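/- arXiv:1408.2137 — 3 statements merged into one kernel-verified Lean document; each statement's English description precedes it below -/
import Mathlib

section
/- Let X be a zero-dimensional separable metrizable space with at least two points. Then the following are equivalent: (1) X^ω is homeomorphic to Y^ω for some separable metrizable space Y having at least one isolated point; (2) X^ω can be h-homogeneously embedded in the Cantor set 2^ω; (3) X^ω is h-homogeneous. -/
/-- A space is zero-dimensional if it has a base consisting of clopen sets. -/
def ZeroDimensional (X : Type*) [TopologicalSpace X] : Prop :=
  ∀ (x : X) (U : Set X), IsOpen U → x ∈ U → ∃ C : Set X, IsClopen C ∧ x ∈ C ∧ C ⊆ U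
/-- `X` is h-homogeneously embedded in `Z` if there is a π-base `ℬ` for `Z`
consisting of (non-empty) clopen sets, together with homeomorphisms
`φ_U : Z → U` for `U ∈ ℬ` such that `φ_U[X] = X ∩ U`. -/
def HHomEmbedded {Z : Type*} [TopologicalSpace Z] (X : Set Z) : Prop :=
  ∃ ℬ : Set (Set Z),
    (∀ U ∈ ℬ, IsClopen U ∧ U.Nonempty) ∧
    (∀ V : Set Z, IsOpen V → V.Nonempty → ∃ U ∈ ℬ, U ⊆ V) ∧
    (∀ U ∈ ℬ, ∃ φ : Z ≃ₜ U, Subtype.val '' (⇑φ '' X) = X ∩ U)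

/-- A space `X` is h-homogeneous if every non-empty clopen subspace of `X` is
homeomorphic to `X`. -/
def HHomogeneous (X : Type*) [TopologicalSpace X] : Prop :=
  ∀ C : Set X, IsClopen C → C.Nonempty → Nonempty (C ≃ₜ X)


set_option linter.unusedSectionVars false
set_option linter.unusedVariables false

open Set Filter Topology

section Machinery

variable {Z : Type*}

/-- prepend a point -/
def consSeq (z : Z) (f : ℕ → Z) : ℕ → Z
  | 0 => z
  | n + 1 => f n

/-- drop the first coordinate -/
def tailSeq (f : ℕ → Z) : ℕ → Z := fun n => f (n + 1)

theorem consSeq_zero (z : Z) (f : ℕ → Z) : consSeq z f 0 = z := rfl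
theorem consSeq_succ (z : Z) (f : ℕ → Z) (n : ℕ) : consSeq z f (n + 1) = f n := rfl

theorem cons_tail (f : ℕ → Z) : consSeq (f 0) (tailSeq f) = f := by
  funext n; cases n <;> rfl

theorem tail_cons (z : Z) (f : ℕ → Z) : tailSeq (consSeq z f) = f := rfl

/-- the first coordinate different from `z0` occurs at a place `≤ j` and lies in `B` -/
def HitLe (z0 : Z) (B : Set Z) (f : ℕ → Z) (j : ℕ) : Prop :=
  ∃ i ∈ Finset.range (j + 1), f i ∈ B ∧ ∀ l ∈ Finset.range i, f l = z0

open Classical in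
/-- shift forward -/
noncomputable def shiftS (z0 : Z) (B : Set Z) (f : ℕ → Z) : ℕ → Z :=
  fun j => if HitLe z0 B f j then consSeq z0 f j else f j

open Classical in
/-- shift backward -/
noncomputable def shiftT (z0 : Z) (B : Set Z) (f : ℕ → Z) : ℕ → Z :=
  fun j => if HitLe z0 B f (j + 1) then f (j + 1) else f j

theorem shiftS_zero (z0 : Z) (B : Set Z) (h0 : z0 ∉ B) (f : ℕ → Z) : shiftS z0 B f 0 ∉ B := by
  unfold shiftS HitLe
  split_ifs with h
  · exact h0
  · intro hb
    exact h ⟨0, by simp, hb, by simp⟩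

theorem shiftS_hit {z0 : Z} {B : Set Z} {f : ℕ → Z} {i : ℕ} (hi : f i ∈ B)
    (hl : ∀ l < i, f l = z0) : shiftS z0 B f = consSeq z0 f := by
  funext j
  unfold shiftS
  split_ifs with h
  · rfl
  · have hj : j < i := by
      by_contra hji
      exact h ⟨i, by simp; omega, hi, by simpa using hl⟩
    rw [hl j hj]
    cases j with
    | zero => rfl
    | succ j => exact (hl j (by omega)).symm

theorem shiftT_hit {z0 : Z} {B : Set Z} {f : ℕ → Z} {i : ℕ} (hi : f i ∈ B)
    (hi0 : i ≠ 0)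
    (hl : ∀ l < i, f l = z0) : shiftT z0 B f = tailSeq f := by
  funext j
  unfold shiftT
  split_ifs with h
  · rfl
  · have hj : j + 1 < i := by
      by_contra hji
      exact h ⟨i, by simp; omega, hi, by simpa using hl⟩
    rw [hl j (by omega)]
    exact (hl (j+1) (by omega)).symm

theorem shiftS_nohit {z0 : Z} {B : Set Z} {f : ℕ → Z}
    (h : ¬ ∃ i, f i ∈ B ∧ ∀ l < i, f l = z0) : shiftS z0 B f = f := by
  funext j
  unfold shiftS
  rw [if_neg]
  rintro ⟨i, -, hi, hl⟩
  exact h ⟨i, hi, by simpa using hl⟩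

theorem shiftT_nohit {z0 : Z} {B : Set Z} {f : ℕ → Z}
    (h : ¬ ∃ i, f i ∈ B ∧ ∀ l < i, f l = z0) : shiftT z0 B f = f := by
  funext j
  unfold shiftT
  rw [if_neg]
  rintro ⟨i, -, hi, hl⟩
  exact h ⟨i, hi, by simpa using hl⟩

theorem shiftT_shiftS {z0 : Z} {B : Set Z} (f : ℕ → Z) :
    shiftT z0 B (shiftS z0 B f) = f := by
  by_cases h : ∃ i, f i ∈ B ∧ ∀ l < i, f l = z0
  · obtain ⟨i, hi, hl⟩ := h
    rw [shiftS_hit hi hl, shiftT_hit (i := i + 1) hi (by omega), tail_cons]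
    intro l hl'
    cases l with
    | zero => rfl
    | succ l => exact hl l (by omega)
  · rw [shiftS_nohit h, shiftT_nohit h]

theorem shiftS_shiftT {z0 : Z} {B : Set Z} (f : ℕ → Z) (hf : f 0 ∉ B) :
    shiftS z0 B (shiftT z0 B f) = f := by
  by_cases h : ∃ i, f i ∈ B ∧ ∀ l < i, f l = z0
  · obtain ⟨i, hi, hl⟩ := h
    obtain _ | i := i
    · exact absurd hi hf
    rw [shiftT_hit hi (by omega) hl, shiftS_hit (f := tailSeq f) (i := i) hi (fun l hl' => hl (l+1) (by omega))]
    rw [← hl 0 (by omega), cons_tail]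
  · rw [shiftT_nohit h, shiftS_nohit h]

variable [TopologicalSpace Z]

theorem continuous_consSeq : Continuous (fun p : Z × (ℕ → Z) => consSeq p.1 p.2) := by
  refine continuous_pi fun n => ?_
  cases n with
  | zero => exact continuous_fst
  | succ n => exact (continuous_apply n).comp continuous_snd

theorem continuous_tailSeq : Continuous (tailSeq : (ℕ → Z) → (ℕ → Z)) :=
  continuous_pi fun n => continuous_apply (n + 1)

theorem isClopen_hitLe {z0 : Z} (hz : IsClopen {z0}) {B : Set Z} (hB : IsClopen B) (j : ℕ) :
    IsClopen {f : ℕ → Z | HitLe z0 B f j} := by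
  have : {f : ℕ → Z | HitLe z0 B f j} = ⋃ i ∈ Finset.range (j + 1),
      ((fun f : ℕ → Z => f i) ⁻¹' B ∩ ⋂ l ∈ Finset.range i, (fun f : ℕ → Z => f l) ⁻¹' {z0}) := by
    ext f
    simp only [HitLe, mem_ofPred_eq, mem_iUnion, mem_inter_iff, mem_preimage, mem_iInter,
      mem_singleton_iff, exists_prop]
  rw [this]
  refine isClopen_biUnion_finset fun i _ => IsClopen.inter (hB.preimage (continuous_apply i)) ?_
  exact isClopen_biInter_finset fun l _ => hz.preimage (continuous_apply l)

theorem Continuous.if_clopen {X Y : Type*} [TopologicalSpace X] [TopologicalSpace Y]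
    {p : X → Prop} {_ : DecidablePred p} {f g : X → Y} (hp : IsClopen {x | p x}) (hf : Continuous f)
    (hg : Continuous g) : Continuous (fun x => if p x then f x else g x) := by
  refine Continuous.if ?_ hf hg
  intro a ha
  rw [hp.frontier_eq] at ha
  exact absurd ha (notMem_empty _)

theorem continuous_shiftS {z0 : Z} (hz : IsClopen {z0}) {B : Set Z} (hB : IsClopen B) :
    Continuous (shiftS z0 B) :=
  continuous_pi fun j => Continuous.if_clopen (isClopen_hitLe hz hB j)
    ((continuous_apply j).comp (continuous_consSeq.comp (Continuous.prodMk_right z0)))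
    (continuous_apply j)

theorem continuous_shiftT {z0 : Z} (hz : IsClopen {z0}) {B : Set Z} (hB : IsClopen B) :
    Continuous (shiftT z0 B) :=
  continuous_pi fun j => Continuous.if_clopen (isClopen_hitLe hz hB (j + 1))
    (continuous_apply (j + 1)) (continuous_apply j)

theorem shiftS_mem {z0 : Z} {B A : Set Z} (h0 : z0 ∈ A) {f : ℕ → Z} (hf : ∀ i, f i ∈ A) (i : ℕ) :
    shiftS z0 B f i ∈ A := by
  unfold shiftS
  split_ifs
  · cases i with
    | zero => exact h0
    | succ i => exact hf i
  · exact hf i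

theorem shiftT_mem {z0 : Z} {B A : Set Z} {f : ℕ → Z} (hf : ∀ i, f i ∈ A) (i : ℕ) :
    shiftT z0 B f i ∈ A := by
  unfold shiftT
  split_ifs
  · exact hf _
  · exact hf i


open Classical in
/-- the map `V × L^ω → L^ω` -/
noncomputable def PsiMap (z0 : Z) (B : ℕ → Set Z) (p : Z × (ℕ → ℕ → Z)) : ℕ → ℕ → Z :=
  fun j => if p.1 ∈ B (j + 1) then shiftS z0 (B j \ B (j + 1)) (p.2 j)
    else if p.1 ∈ B j then consSeq p.1 (p.2 j) else p.2 j

open Classical in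
/-- the first coordinate of the inverse -/
noncomputable def Efst (b : Z) (B : ℕ → Set Z) (g : ℕ → ℕ → Z) : Z :=
  if h : ∃ k, g k 0 ∈ B k \ B (k + 1) then g (Nat.find h) 0 else b

open Classical in
/-- the second coordinate of the inverse -/
noncomputable def Esnd (z0 : Z) (B : ℕ → Set Z) (g : ℕ → ℕ → Z) : ℕ → ℕ → Z :=
  fun j => if ∃ i ∈ Finset.range j, g i 0 ∈ B i \ B (i + 1) then g j
    else if g j 0 ∈ B j \ B (j + 1) then tailSeq (g j) else shiftT z0 (B j \ B (j + 1)) (g j)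

theorem continuous_PsiMap {z0 : Z} (hz : IsClopen {z0}) {B : ℕ → Set Z}
    (hB : ∀ k, IsClopen (B k)) : Continuous (PsiMap z0 B) := by
  refine continuous_pi fun j => ?_
  refine Continuous.if_clopen ((hB (j+1)).preimage continuous_fst) ?_ ?_
  · exact (continuous_shiftS hz ((hB j).diff (hB (j+1)))).comp
      ((continuous_apply j).comp continuous_snd)
  refine Continuous.if_clopen ((hB j).preimage continuous_fst) ?_ ?_
  · exact continuous_consSeq.comp
      (continuous_fst.prodMk ((continuous_apply j).comp continuous_snd))
  · exact (continuous_apply j).comp continuous_snd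

theorem isClopen_coord {B : ℕ → Set Z} (hB : ∀ k, IsClopen (B k)) (i : ℕ) :
    IsClopen {g : ℕ → ℕ → Z | g i 0 ∈ B i \ B (i + 1)} :=
  ((hB i).diff (hB (i+1))).preimage (f := fun g : ℕ → ℕ → Z => g i 0)
    ((continuous_apply 0).comp (continuous_apply i))

theorem continuous_Esnd {z0 : Z} (hz : IsClopen {z0}) {B : ℕ → Set Z}
    (hB : ∀ k, IsClopen (B k)) : Continuous (Esnd z0 B) := by
  unfold Esnd
  refine continuous_pi fun j => ?_
  refine Continuous.if_clopen (f := fun g : ℕ → ℕ → Z => g j) ?_ (continuous_apply j) ?_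
  · have : {g : ℕ → ℕ → Z | ∃ i ∈ Finset.range j, g i 0 ∈ B i \ B (i + 1)} =
      ⋃ i ∈ Finset.range j, {g : ℕ → ℕ → Z | g i 0 ∈ B i \ B (i + 1)} := by
      ext; simp only [mem_iUnion, mem_ofPred_eq, exists_prop]
    rw [this]
    exact isClopen_biUnion_finset fun i _ => isClopen_coord hB i
  refine Continuous.if_clopen (isClopen_coord hB j) ?_ ?_
  · exact continuous_tailSeq.comp (continuous_apply j)
  · exact (continuous_shiftT hz ((hB j).diff (hB (j+1)))).comp (continuous_apply j)

theorem Efst_eq {b : Z} {B : ℕ → Set Z} {g : ℕ → ℕ → Z} {k : ℕ}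
    (hk : g k 0 ∈ B k \ B (k + 1)) (hl : ∀ l < k, g l 0 ∉ B l \ B (l + 1)) :
    Efst b B g = g k 0 := by
  classical
  have h : ∃ k, g k 0 ∈ B k \ B (k + 1) := ⟨k, hk⟩
  have : Nat.find h = k := by
    rw [Nat.find_eq_iff]
    exact ⟨hk, hl⟩
  unfold Efst
  rw [dif_pos h, this]

theorem Efst_eq_b {b : Z} {B : ℕ → Set Z} {g : ℕ → ℕ → Z}
    (hl : ∀ l, g l 0 ∉ B l \ B (l + 1)) :
    Efst b B g = b := by
  unfold Efst
  rw [dif_neg]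
  simpa using hl

theorem hit_cases (B : ℕ → Set Z) (g : ℕ → ℕ → Z) :
    (∀ l, g l 0 ∉ B l \ B (l + 1)) ∨
    ∃ k, g k 0 ∈ B k \ B (k + 1) ∧ ∀ l < k, g l 0 ∉ B l \ B (l + 1) := by
  classical
  by_cases h : ∃ k, g k 0 ∈ B k \ B (k + 1)
  · exact Or.inr ⟨Nat.find h, Nat.find_spec h, fun l hl => Nat.find_min h hl⟩
  · left; simpa using h

theorem Efst_mem {b : Z} {B : ℕ → Set Z} (hanti : Antitone B) (hb : ∀ k, b ∈ B k)
    {g : ℕ → ℕ → Z} {j : ℕ} (h : ∀ i < j, g i 0 ∉ B i \ B (i + 1)) : Efst b B g ∈ B j := by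
  rcases hit_cases B g with h1 | ⟨k, hk, hl⟩
  · rw [Efst_eq_b h1]; exact hb j
  · rw [Efst_eq hk hl]
    have : j ≤ k := by
      by_contra hjk
      exact h k (by omega) hk
    exact hanti this hk.1

theorem continuous_Efst {b : Z} {B : ℕ → Set Z} (hanti : Antitone B)
    (hB : ∀ k, IsClopen (B k)) (hbas : (𝓝 b).HasBasis (fun _ : ℕ => True) B) :
    Continuous (Efst b B) := by
  have hb : ∀ k, b ∈ B k := fun k => mem_of_mem_nhds (hbas.mem_of_mem trivial)
  rw [continuous_iff_continuousAt]
  intro g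
  have hop : ∀ j, (∀ l < j, g l 0 ∉ B l \ B (l + 1)) →
      ∀ᶠ g' in 𝓝 g, ∀ l < j, g' l 0 ∉ B l \ B (l + 1) := by
    intro j hj
    have : ∀ᶠ g' in 𝓝 g, ∀ l ∈ Finset.range j, g' l 0 ∉ B l \ B (l + 1) := by
      rw [Filter.eventually_all_finset]
      intro l hl
      exact ((isClopen_coord hB l).compl.isOpen).mem_nhds (hj l (by simpa using hl))
    simpa using this
  rcases hit_cases B g with h1 | ⟨k, hk, hl⟩
  · unfold ContinuousAt
    rw [Efst_eq_b h1, hbas.tendsto_right_iff]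
    intro j _
    filter_upwards [hop j (fun l _ => h1 l)] with g' hg'
    exact Efst_mem hanti hb hg'
  · have hc : ContinuousAt (fun g : ℕ → ℕ → Z => g k 0) g :=
      ((continuous_apply 0).comp (continuous_apply k)).continuousAt
    refine hc.congr ?_
    filter_upwards [hop k hl, (isClopen_coord hB k).isOpen.mem_nhds hk] with g' h1 h2
    exact (Efst_eq h2 h1).symm

theorem Psi_E {z0 b : Z} {B : ℕ → Set Z} (hanti : Antitone B) (hb : ∀ k, b ∈ B k)
    (g : ℕ → ℕ → Z) : PsiMap z0 B (Efst b B g, Esnd z0 B g) = g := by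
  funext j
  unfold PsiMap Esnd
  simp only []
  rcases hit_cases B g with h1 | ⟨k, hk, hl⟩
  · rw [Efst_eq_b h1, if_pos (hb _), if_neg, if_neg (h1 j), shiftS_shiftT _ (h1 j)]
    rintro ⟨i, -, hi⟩
    exact h1 i hi
  · rw [Efst_eq hk hl]
    rcases lt_trichotomy j k with hjk | rfl | hjk
    · rw [if_pos (hanti hjk hk.1), if_neg, if_neg (hl j hjk), shiftS_shiftT _ (hl j hjk)]
      rintro ⟨i, hi, hi'⟩
      exact hl i (by simp at hi; omega) hi'
    · rw [if_neg hk.2, if_pos hk.1, if_neg, if_pos hk, cons_tail]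
      rintro ⟨i, hi, hi'⟩
      exact hl i (by simp at hi; omega) hi'
    · have hj : g k 0 ∉ B j := fun h => hk.2 (hanti (by omega : k + 1 ≤ j) h)
      rw [if_neg (fun h => hj (hanti (by omega : j ≤ j + 1) h)), if_neg hj, if_pos]
      exact ⟨k, by simpa using hjk, hk⟩

theorem E_Psi {z0 b : Z} {B : ℕ → Set Z} (hanti : Antitone B) (hb : ∀ k, b ∈ B k)
    (h0 : z0 ∉ B 0) (hsep : ∀ x, (∀ k, x ∈ B k) → x = b) (x : Z) (hx : x ∈ B 0)
    (q : ℕ → ℕ → Z) :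
    Efst b B (PsiMap z0 B (x, q)) = x ∧ Esnd z0 B (PsiMap z0 B (x, q)) = q := by
  classical
  have hz : ∀ j, z0 ∉ B j \ B (j + 1) := fun j h => h0 (hanti (Nat.zero_le j) h.1)
  have P1 : ∀ j, x ∈ B (j + 1) → PsiMap z0 B (x, q) j = shiftS z0 (B j \ B (j + 1)) (q j) :=
    fun j hj => by unfold PsiMap; simp only []; rw [if_pos hj]
  by_cases h : ∀ k, x ∈ B k
  · have hxb := hsep x h
    have hno : ∀ l, PsiMap z0 B (x, q) l 0 ∉ B l \ B (l + 1) := by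
      intro l
      rw [P1 l (h _)]
      exact shiftS_zero _ _ (hz l) _
    refine ⟨by rw [Efst_eq_b hno, hxb], ?_⟩
    funext j
    unfold Esnd
    rw [if_neg, if_neg (hno j), P1 j (h _), shiftT_shiftS]
    rintro ⟨i, -, hi⟩
    exact hno i hi
  · push Not at h
    obtain ⟨k, hk, hmin⟩ : ∃ k, x ∉ B (k + 1) ∧ x ∈ B k := by
      have hs := Nat.find_spec h
      have hm : ∀ m < Nat.find h, x ∈ B m := fun m hm => by simpa using Nat.find_min h hm
      rcases hn : Nat.find h with _ | k
      · rw [hn] at hs; exact absurd hx hs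
      · rw [hn] at hs
        exact ⟨k, hs, hm k (by omega)⟩
    have hlt : ∀ j < k, x ∈ B (j + 1) := fun j hj => hanti hj hmin
    have Pk : PsiMap z0 B (x, q) k = consSeq x (q k) := by
      unfold PsiMap; simp only []; rw [if_neg hk, if_pos hmin]
    have hno : ∀ l < k, PsiMap z0 B (x, q) l 0 ∉ B l \ B (l + 1) := by
      intro l hl
      rw [P1 l (hlt l hl)]
      exact shiftS_zero _ _ (hz l) _
    have hyes : PsiMap z0 B (x, q) k 0 ∈ B k \ B (k + 1) := by
      rw [Pk]; exact ⟨hmin, hk⟩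
    refine ⟨by rw [Efst_eq hyes hno, Pk]; rfl, ?_⟩
    funext j
    unfold Esnd
    rcases lt_trichotomy j k with hjk | rfl | hjk
    · rw [if_neg, if_neg (hno j hjk), P1 j (hlt j hjk), shiftT_shiftS]
      rintro ⟨i, hi, hi'⟩
      exact hno i (by simp at hi; omega) hi'
    · rw [if_neg, if_pos hyes, Pk, tail_cons]
      rintro ⟨i, hi, hi'⟩
      exact hno i (by simp at hi; omega) hi'
    · have hj : x ∉ B j := fun h => hk (hanti (by omega : k + 1 ≤ j) h)
      rw [if_pos ⟨k, by simpa using hjk, hyes⟩]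
      unfold PsiMap
      simp only []
      rw [if_neg (fun h => hj (hanti (by omega : j ≤ j + 1) h)), if_neg hj]

theorem PsiMap_mem {z0 : Z} {B : ℕ → Set Z} {A : Set Z} (h0 : z0 ∈ A) {x : Z} (hx : x ∈ A)
    {q : ℕ → ℕ → Z} (hq : ∀ i j, q i j ∈ A) (i j : ℕ) : PsiMap z0 B (x, q) i j ∈ A := by
  unfold PsiMap
  simp only []
  split_ifs
  · exact shiftS_mem h0 (hq i) j
  · cases j with
    | zero => exact hx
    | succ j => exact hq i j
  · exact hq i j

theorem Esnd_mem {z0 : Z} {B : ℕ → Set Z} {A : Set Z}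
    {g : ℕ → ℕ → Z} (hg : ∀ i j, g i j ∈ A) (i j : ℕ) : Esnd z0 B g i j ∈ A := by
  unfold Esnd
  split_ifs
  · exact hg i j
  · exact hg i (j + 1)
  · exact shiftT_mem (hg i) j

theorem Efst_memA {b : Z} {B : ℕ → Set Z} {A : Set Z} (hb : b ∈ A)
    {g : ℕ → ℕ → Z} (hg : ∀ i j, g i j ∈ A) : Efst b B g ∈ A := by
  unfold Efst
  split_ifs
  · exact hg _ _
  · exact hb

/-- flattening -/
def flatH (Z : Type*) [TopologicalSpace Z] : (ℕ → ℕ → Z) ≃ₜ (ℕ → Z) where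
  toFun q n := q (Nat.unpair n).1 (Nat.unpair n).2
  invFun f i j := f (Nat.pair i j)
  left_inv q := by funext i j; simp
  right_inv f := by funext n; simp
  continuous_toFun := continuous_pi fun n => (continuous_apply _).comp (continuous_apply _)
  continuous_invFun := continuous_pi fun i => continuous_pi fun j => continuous_apply _

/-- cons as a homeomorphism -/
def consH (Z : Type*) [TopologicalSpace Z] : Z × (ℕ → Z) ≃ₜ (ℕ → Z) where
  toFun p := consSeq p.1 p.2
  invFun f := (f 0, tailSeq f)
  left_inv p := rfl
  right_inv f := cons_tail f
  continuous_toFun := continuous_consSeq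
  continuous_invFun := (continuous_apply 0).prodMk continuous_tailSeq

/-- a clopen embedding of the pair `(N, S)` into itself -/
structure PairEmb {N : Type*} [TopologicalSpace N] (S : Set N) (e : N → N) : Prop where
  emb : IsEmbedding e
  clopen : IsClopen (range e)
  mem : ∀ x, e x ∈ S ↔ x ∈ S

/-- main absorption statement, in the ring case -/
theorem exists_pairEmb_of_basis {z0 b : Z} (hz : IsClopen {z0}) {B : ℕ → Set Z}
    (hanti : Antitone B) (hB : ∀ k, IsClopen (B k))
    (hbas : (𝓝 b).HasBasis (fun _ : ℕ => True) B) (hsep : ∀ x, (∀ k, x ∈ B k) → x = b)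
    (h0 : z0 ∉ B 0) {A : Set Z} (hz0 : z0 ∈ A) (hbA : b ∈ A) :
    ∃ e : (ℕ → Z) → (ℕ → Z), PairEmb {f | ∀ i, f i ∈ A} e ∧ range e = {f | f 0 ∈ B 0} := by
  have hb : ∀ k, b ∈ B k := fun k => mem_of_mem_nhds (hbas.mem_of_mem trivial)
  let e : (ℕ → Z) → (ℕ → Z) := fun f =>
    consSeq (Efst b B ((flatH Z).symm f)) (flatH Z (Esnd z0 B ((flatH Z).symm f)))
  let d : (ℕ → Z) → (ℕ → Z) := fun f =>
    flatH Z (PsiMap z0 B (f 0, (flatH Z).symm (tailSeq f)))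
  have he : Continuous e := continuous_consSeq.comp
    (((continuous_Efst hanti hB hbas).comp (flatH Z).symm.continuous).prodMk
      ((flatH Z).continuous.comp ((continuous_Esnd hz hB).comp (flatH Z).symm.continuous)))
  have hd : Continuous d := (flatH Z).continuous.comp ((continuous_PsiMap hz hB).comp
    ((continuous_apply 0).prodMk ((flatH Z).symm.continuous.comp continuous_tailSeq)))
  have hde : Function.LeftInverse d e := by
    intro f
    change flatH Z (PsiMap z0 B (Efst b B ((flatH Z).symm f), (flatH Z).symm
      (flatH Z (Esnd z0 B ((flatH Z).symm f))))) = f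
    rw [Homeomorph.symm_apply_apply, Psi_E hanti hb, Homeomorph.apply_symm_apply]
  have hr : range e = {f | f 0 ∈ B 0} := by
    ext f
    constructor
    · rintro ⟨g, rfl⟩
      exact Efst_mem hanti hb (by simp)
    · intro hf
      refine ⟨d f, ?_⟩
      obtain ⟨h1, h2⟩ := E_Psi hanti hb h0 hsep (f 0) hf ((flatH Z).symm (tailSeq f))
      change consSeq (Efst b B ((flatH Z).symm (flatH Z _))) (flatH Z (Esnd z0 B
        ((flatH Z).symm (flatH Z _)))) = f
      rw [Homeomorph.symm_apply_apply, h1, h2, Homeomorph.apply_symm_apply, cons_tail]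
  refine ⟨e, ⟨hde.isEmbedding hd he, ?_, ?_⟩, hr⟩
  · rw [hr]
    exact (hB 0).preimage (continuous_apply 0)
  · have m1 : ∀ q : ℕ → ℕ → Z, (∀ i j, q i j ∈ A) → ∀ n, flatH Z q n ∈ A := fun q hq n => hq _ _
    have m2 : ∀ f : ℕ → Z, (∀ i, f i ∈ A) → ∀ i j, (flatH Z).symm f i j ∈ A :=
      fun f hf i j => hf _
    intro f
    constructor
    · intro h
      have : d (e f) ∈ {f : ℕ → Z | ∀ i, f i ∈ A} :=
        m1 _ (PsiMap_mem hz0 (h 0) (m2 _ (fun i => h (i + 1))))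
      rwa [hde f] at this
    · intro h i
      cases i with
      | zero => exact Efst_memA hbA (m2 f h)
      | succ i => exact m1 _ (Esnd_mem (m2 f h)) i

end Machinery

section Pairs

variable {Z : Type*} [TopologicalSpace Z]

theorem exists_clopen_antitone_basis [FirstCountableTopology Z] (hzd : ZeroDimensional Z)
    (b : Z) {V : Set Z} (hV : IsClopen V) (hb : b ∈ V) :
    ∃ B : ℕ → Set Z, Antitone B ∧ (∀ k, IsClopen (B k)) ∧
      (𝓝 b).HasBasis (fun _ : ℕ => True) B ∧ B 0 = V := by
  obtain ⟨U, hU⟩ := (𝓝 b).exists_antitone_basis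
  have h1 : ∀ n, ∃ C : Set Z, IsClopen C ∧ b ∈ C ∧ C ⊆ U n := by
    intro n
    obtain ⟨C, hC, hbC, hCU⟩ := hzd b (interior (U n)) isOpen_interior
      (mem_interior_iff_mem_nhds.2 (hU.1.mem_of_mem trivial))
    exact ⟨C, hC, hbC, hCU.trans interior_subset⟩
  choose D hD hbD hDU using h1
  let B : ℕ → Set Z := fun n => V ∩ ⋂ i ∈ Finset.range n, D i
  have hBc : ∀ k, IsClopen (B k) := fun k => hV.inter (isClopen_biInter_finset fun i _ => hD i)
  have hbB : ∀ k, b ∈ B k := fun k => ⟨hb, by simp [hbD]⟩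
  refine ⟨B, ?_, hBc, ?_, by simp [B]⟩
  · intro m n hmn x hx
    refine ⟨hx.1, ?_⟩
    have := hx.2
    simp only [Finset.mem_range, mem_iInter] at this ⊢
    exact fun i hi => this i (by omega)
  · refine ⟨fun t => ?_⟩
    constructor
    · intro ht
      obtain ⟨n, -, hn⟩ := hU.1.mem_iff.1 ht
      refine ⟨n + 1, trivial, fun x hx => hn (hDU n ?_)⟩
      have := hx.2
      simp only [Finset.mem_range, mem_iInter] at this
      exact this n (by omega)
    · rintro ⟨n, -, hn⟩
      exact mem_of_superset ((hBc n).isOpen.mem_nhds (hbB n)) hn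

theorem sep_of_basis [T1Space Z] {b : Z} {B : ℕ → Set Z}
    (hbas : (𝓝 b).HasBasis (fun _ : ℕ => True) B) (x : Z) (hx : ∀ k, x ∈ B k) : x = b := by
  by_contra hne
  obtain ⟨n, -, hn⟩ := hbas.mem_iff.1 (isOpen_compl_singleton.mem_nhds
    (show b ∈ ({x} : Set Z)ᶜ from fun h => hne h.symm))
  exact hn (hx n) rfl

/-- good clopen sets: either `{z0}` or a nonempty clopen set missing `z0` -/
theorem exists_pairEmb_clopen [FirstCountableTopology Z] [T1Space Z] (hzd : ZeroDimensional Z)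
    {z0 : Z} (hz : IsOpen {z0}) {A : Set Z} (hz0 : z0 ∈ A) {V : Set Z} (hV : IsClopen V)
    (hg : V = {z0} ∨ (z0 ∉ V ∧ (V ∩ A).Nonempty)) :
    ∃ e : (ℕ → Z) → (ℕ → Z), PairEmb {f | ∀ i, f i ∈ A} e ∧ range e = {f | f 0 ∈ V} := by
  have hzc : IsClopen {z0} := ⟨isClosed_singleton, hz⟩
  rcases hg with rfl | ⟨h0, b, hbV, hbA⟩
  · have hr : range (consSeq z0) = {f : ℕ → Z | f 0 ∈ ({z0} : Set Z)} := by
      ext f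
      constructor
      · rintro ⟨g, rfl⟩; rfl
      · intro hf
        refine ⟨tailSeq f, ?_⟩
        have : f 0 = z0 := hf
        rw [← this, cons_tail]
    refine ⟨consSeq z0, ⟨?_, ?_, ?_⟩, hr⟩
    · exact Function.LeftInverse.isEmbedding (f := tailSeq) (fun f => tail_cons z0 f)
        continuous_tailSeq (continuous_consSeq.comp (Continuous.prodMk_right z0))
    · rw [hr]; exact hzc.preimage (continuous_apply 0)
    · intro f
      constructor
      · exact fun h i => h (i + 1)
      · intro h i
        cases i with
        | zero => exact hz0
        | succ i => exact h i
  · obtain ⟨B, hanti, hB, hbas, rfl⟩ := exists_clopen_antitone_basis hzd b hV hbV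
    exact exists_pairEmb_of_basis hzc hanti hB hbas (sep_of_basis hbas) h0 hz0 hbA

theorem exists_pairEmb_cylinder [FirstCountableTopology Z] [T1Space Z] (hzd : ZeroDimensional Z)
    {z0 : Z} (hz : IsOpen {z0}) {A : Set Z} (hz0 : z0 ∈ A) (n : ℕ) :
    ∀ (V : ℕ → Set Z) (hV : ∀ i, IsClopen (V i))
    (hg : ∀ i, V i = {z0} ∨ (z0 ∉ V i ∧ (V i ∩ A).Nonempty)),
    ∃ e : (ℕ → Z) → (ℕ → Z), PairEmb {f | ∀ i, f i ∈ A} e ∧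
      range e = {f | ∀ i < n, f i ∈ V i} := by
  induction n with
  | zero =>
    intro V hV hg
    exact ⟨id, ⟨.id, by simpa using isClopen_univ, fun _ => Iff.rfl⟩, by simp⟩
  | succ n ih =>
    intro V hV hg
    obtain ⟨e1, he1, hr1⟩ := exists_pairEmb_clopen hzd hz hz0 (hV 0) (hg 0)
    obtain ⟨e2, he2, hr2⟩ := ih (fun i => V (i + 1)) (fun i => hV _) (fun i => hg _)
    let m : (ℕ → Z) → (ℕ → Z) := (consH Z) ∘ (Prod.map id e2) ∘ (consH Z).symm
    have hm : IsEmbedding m := (consH Z).isEmbedding.comp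
      ((IsEmbedding.id.prodMap he2.emb).comp (consH Z).symm.isEmbedding)
    have hmv : ∀ f, m f = consSeq (f 0) (e2 (tailSeq f)) := fun f => rfl
    have hr : range (m ∘ e1) = {f | ∀ i < n + 1, f i ∈ V i} := by
      ext f
      constructor
      · rintro ⟨g, rfl⟩ i hi
        change m (e1 g) i ∈ V i
        rw [hmv]
        cases i with
        | zero =>
          have : e1 g ∈ range e1 := ⟨g, rfl⟩
          rw [hr1] at this
          exact this
        | succ i =>
          have : e2 (tailSeq (e1 g)) ∈ range e2 := ⟨_, rfl⟩
          rw [hr2] at this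
          exact this i (by omega)
      · intro hf
        have h2 : tailSeq f ∈ range e2 := by
          rw [hr2]; exact fun i hi => hf (i + 1) (by omega)
        obtain ⟨g, hg'⟩ := h2
        have h1 : consSeq (f 0) g ∈ range e1 := by
          rw [hr1]; exact hf 0 (by omega)
        obtain ⟨k, hk⟩ := h1
        refine ⟨k, ?_⟩
        change m (e1 k) = f
        rw [hmv, hk, tail_cons, hg', consSeq_zero, cons_tail]
    refine ⟨m ∘ e1, ⟨hm.comp he1.emb, ?_, ?_⟩, hr⟩
    · rw [hr]
      have : {f : ℕ → Z | ∀ i < n + 1, f i ∈ V i} =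
          ⋂ i ∈ Finset.range (n + 1), (fun f : ℕ → Z => f i) ⁻¹' V i := by
        ext; simp
      rw [this]
      exact isClopen_biInter_finset fun i _ => (hV i).preimage (continuous_apply i)
    · intro f
      rw [← he1.mem f]
      change m (e1 f) ∈ _ ↔ _
      rw [hmv]
      have h2 := he2.mem (tailSeq (e1 f))
      constructor
      · intro h i
        cases i with
        | zero => exact h 0
        | succ i => exact h2.1 (fun j => h (j + 1)) i
      · intro h i
        cases i with
        | zero => exact h 0
        | succ i => exact h2.2 (fun j => h (j + 1)) i

theorem exists_cylinder_subset {O : Set (ℕ → Z)} (hO : IsOpen O) {f : ℕ → Z} (hf : f ∈ O) :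
    ∃ (n : ℕ) (W : ℕ → Set Z), (∀ i, IsOpen (W i) ∧ f i ∈ W i) ∧
      {g | ∀ i < n, g i ∈ W i} ⊆ O := by
  classical
  obtain ⟨I, u, hu, hsub⟩ := isOpen_pi_iff.1 hO f hf
  obtain ⟨n, hn⟩ : ∃ n, ∀ i ∈ I, i < n := ⟨I.sup id + 1, fun i hi =>
    Nat.lt_succ_of_le (Finset.le_sup (f := id) hi)⟩
  refine ⟨n, fun i => if i ∈ I then u i else univ, fun i => ?_, ?_⟩
  · by_cases h : i ∈ I
    · simpa [h] using hu i h
    · simp [h]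
  · intro g hg
    apply hsub
    intro i hi
    have hi' : i ∈ I := hi
    have := hg i (hn i hi)
    simpa [hi'] using this

theorem exists_pairEmb_open [FirstCountableTopology Z] [T1Space Z] (hzd : ZeroDimensional Z)
    {z0 : Z} (hz : IsOpen {z0}) {A : Set Z} (hz0 : z0 ∈ A) (hA : Dense A)
    {O : Set (ℕ → Z)} (hO : IsOpen O) (hne : O.Nonempty) :
    ∃ e : (ℕ → Z) → (ℕ → Z), PairEmb {f | ∀ i, f i ∈ A} e ∧ range e ⊆ O := by
  obtain ⟨f, hf⟩ := hne
  obtain ⟨n, W, hW, hsub⟩ := exists_cylinder_subset hO hf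
  have h : ∀ i, ∃ V : Set Z, IsClopen V ∧ V ⊆ W i ∧
      (V = {z0} ∨ (z0 ∉ V ∧ (V ∩ A).Nonempty)) := by
    intro i
    obtain ⟨C, hC, hfC, hCW⟩ := hzd (f i) (W i) (hW i).1 (hW i).2
    by_cases h0 : z0 ∈ C
    · exact ⟨{z0}, ⟨isClosed_singleton, hz⟩, by simpa using hCW h0, Or.inl rfl⟩
    · exact ⟨C, hC, hCW, Or.inr ⟨h0, hA.inter_open_nonempty C hC.isOpen ⟨_, hfC⟩⟩⟩
  choose V hV hVW hVg using h
  obtain ⟨e, he, hr⟩ := exists_pairEmb_cylinder hzd hz hz0 n V hV hVg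
  refine ⟨e, he, ?_⟩
  rw [hr]
  exact fun g hg => hsub fun i hi => hVW i (hg i hi)

theorem hhomEmbedded_pow [FirstCountableTopology Z] [T1Space Z] (hzd : ZeroDimensional Z)
    {z0 : Z} (hz : IsOpen {z0}) {A : Set Z} (hz0 : z0 ∈ A) (hA : Dense A) :
    HHomEmbedded {f : ℕ → Z | ∀ i, f i ∈ A} := by
  refine ⟨{U | ∃ e, PairEmb {f : ℕ → Z | ∀ i, f i ∈ A} e ∧ range e = U}, ?_, ?_, ?_⟩
  · rintro U ⟨e, he, rfl⟩
    exact ⟨he.clopen, ⟨e (fun _ => z0), mem_range_self _⟩⟩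
  · intro O hO hne
    obtain ⟨e, he, hs⟩ := exists_pairEmb_open hzd hz hz0 hA hO hne
    exact ⟨_, ⟨e, he, rfl⟩, hs⟩
  · rintro U ⟨e, he, rfl⟩
    refine ⟨he.emb.toHomeomorph, ?_⟩
    ext g
    constructor
    · rintro ⟨_, ⟨f, hf, rfl⟩, rfl⟩
      exact ⟨(he.mem f).2 hf, mem_range_self _⟩
    · rintro ⟨hg, ⟨f, rfl⟩⟩
      exact ⟨_, ⟨f, (he.mem f).1 hg, rfl⟩, rfl⟩

theorem HHomEmbedded.image {W : Type*} [TopologicalSpace W] {S : Set Z} (h : HHomEmbedded S)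
    (θ : Z ≃ₜ W) : HHomEmbedded (θ '' S) := by
  obtain ⟨ℬ, h1, h2, h3⟩ := h
  refine ⟨(fun U => θ '' U) '' ℬ, ?_, ?_, ?_⟩
  · rintro _ ⟨U, hU, rfl⟩
    exact ⟨⟨θ.isClosedMap _ (h1 U hU).1.1, θ.isOpenMap _ (h1 U hU).1.2⟩, (h1 U hU).2.image _⟩
  · intro V hV hne
    obtain ⟨U, hU, hUV⟩ := h2 (θ ⁻¹' V) (hV.preimage θ.continuous) (by
      obtain ⟨w, hw⟩ := hne
      exact ⟨θ.symm w, by simpa using hw⟩)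
    exact ⟨_, ⟨U, hU, rfl⟩, by simpa using hUV⟩
  · rintro _ ⟨U, hU, rfl⟩
    obtain ⟨φ, hφ⟩ := h3 U hU
    refine ⟨(θ.symm.trans φ).trans (θ.image U), ?_⟩
    have key : Subtype.val '' (⇑((θ.symm.trans φ).trans (θ.image U)) '' (θ '' S)) =
        θ '' (Subtype.val '' (φ '' S)) := by
      simp only [image_image]
      simp
    rw [key, hφ, image_inter θ.injective]

end Pairs

section Terada

theorem continuous_extend_of_conv {N D M : Type*} [TopologicalSpace N] [TopologicalSpace D]
    [TopologicalSpace M] [T1Space N] {p : N} {O : ℕ → Set N} (hanti : Antitone O)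
    (hO : ∀ k, IsClopen (O k))
    (hbas : (𝓝 p).HasBasis (fun _ : ℕ => True) O)
    {w : ℕ × D → N} (hinj : Function.Injective w)
    (hw : ∀ k, IsOpenEmbedding (fun d => w (k, d)))
    (hwc : ∀ k, IsClosed (range (fun d => w (k, d))))
    (hwO : ∀ k d, w (k, d) ∈ O k \ O (k + 1))
    {a : ℕ × D → M} {c : N → M} (hc : Continuous c) (ha : ∀ k, Continuous (fun d => a (k, d)))
    (hac : ∀ T ∈ 𝓝 (c p), ∃ K, ∀ k ≥ K, ∀ d, a (k, d) ∈ T) :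
    Continuous (Function.extend w a c) := by
  have hp : ∀ k, p ∈ O k := fun k => mem_of_mem_nhds (hbas.mem_of_mem trivial)
  have hle : ∀ {k j d}, w (k, d) ∈ O j → j ≤ k := by
    intro k j d h
    by_contra hjk
    exact (hwO k d).2 (hanti (by omega) h)
  have hnp : ¬ ∃ x, w x = p := by
    rintro ⟨⟨k, d⟩, rfl⟩
    exact (hwO k d).2 (hp _)
  rw [continuous_iff_continuousAt]
  intro x
  by_cases hx : ∃ y, w y = x
  · obtain ⟨⟨k, d⟩, rfl⟩ := hx
    rw [← (hw k).continuousAt_iff (x := d)]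
    have : (Function.extend w a c) ∘ (fun d => w (k, d)) = fun d => a (k, d) := by
      funext d
      exact hinj.extend_apply _ _ _
    rw [this]
    exact (ha k).continuousAt
  · by_cases hxp : x = p
    · subst hxp
      unfold ContinuousAt
      rw [Function.extend_apply' _ _ _ hx]
      intro T hT
      obtain ⟨K, hK⟩ := hac T hT
      have h1 : c ⁻¹' T ∈ 𝓝 x := hc.continuousAt hT
      change Function.extend w a c ⁻¹' T ∈ 𝓝 x
      filter_upwards [h1, (hO K).isOpen.mem_nhds (hp K)] with y hy1 hy2
      by_cases hy : ∃ z, w z = y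
      · obtain ⟨⟨k, d⟩, rfl⟩ := hy
        change Function.extend w a c _ ∈ T
        rw [hinj.extend_apply]
        exact hK k (hle hy2) d
      · change Function.extend w a c _ ∈ T
        rw [Function.extend_apply' _ _ _ hy]
        exact hy1
    · have : ∃ k, x ∉ O k := by
        by_contra h
        push Not at h
        exact hxp (sep_of_basis hbas x h)
      obtain ⟨K, hK⟩ := this
      have hcl : IsClosed (⋃ k ∈ Finset.range K, range (fun d => w (k, d))) :=
        isClosed_biUnion_finset fun k _ => hwc k
      have hxn : x ∉ ⋃ k ∈ Finset.range K, range (fun d => w (k, d)) := by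
        simp only [mem_iUnion, not_exists]
        rintro k hk ⟨d, hd⟩
        exact hx ⟨_, hd⟩
      refine (hc.continuousAt (x := x)).congr ?_
      filter_upwards [hcl.isOpen_compl.mem_nhds hxn, (hO K).compl.isOpen.mem_nhds hK] with y h1 h2
      rw [Function.extend_apply']
      rintro ⟨⟨k, d⟩, rfl⟩
      by_cases hk : k < K
      · apply h1
        simp only [mem_iUnion]
        exact ⟨k, by simpa using hk, d, rfl⟩
      · exact h2 (hanti (by omega : K ≤ k) (hwO k d).1)

theorem exists_ring_basis {N : Type*} [TopologicalSpace N] [T1Space N]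
    [FirstCountableTopology N] (hzd : ZeroDimensional N) {p : N} (hp : ¬ IsOpen {p}) :
    ∃ O : ℕ → Set N, Antitone O ∧ (∀ k, IsClopen (O k)) ∧
      (𝓝 p).HasBasis (fun _ : ℕ => True) O ∧ ∀ k, (O k \ O (k + 1)).Nonempty := by
  obtain ⟨B, hanti, hB, hbas, -⟩ := exists_clopen_antitone_basis hzd p isClopen_univ (mem_univ p)
  have hpB : ∀ k, p ∈ B k := fun k => mem_of_mem_nhds (hbas.mem_of_mem trivial)
  have h1 : ∀ k, ∃ m, k < m ∧ (B k \ B m).Nonempty := by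
    intro k
    obtain ⟨x, hx, hxp⟩ : ∃ x ∈ B k, x ≠ p := by
      by_contra h
      push Not at h
      apply hp
      have : B k = {p} := by
        ext x
        exact ⟨fun hx => h x hx, fun hx => by rw [mem_singleton_iff.1 hx]; exact hpB k⟩
      rw [← this]
      exact (hB k).isOpen
    have : ∃ m, x ∉ B m := by
      by_contra h
      push Not at h
      exact hxp (sep_of_basis hbas x h)
    obtain ⟨m, hm⟩ := this
    refine ⟨m + k + 1, by omega, x, hx, fun h => hm (hanti (by omega) h)⟩
  choose m hm hne using h1
  let n : ℕ → ℕ := fun k => Nat.rec 0 (fun _ r => m r) k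
  have hn : ∀ k, n (k + 1) = m (n k) := fun k => rfl
  have hmono : StrictMono n := strictMono_nat_of_lt_succ fun k => by rw [hn]; exact hm _
  refine ⟨fun k => B (n k), fun i j hij => hanti (hmono.monotone hij), fun k => hB _, ?_, ?_⟩
  · refine ⟨fun t => ?_⟩
    rw [hbas.mem_iff]
    constructor
    · rintro ⟨i, -, hi⟩
      exact ⟨i, trivial, (hanti (hmono.id_le i)).trans hi⟩
    · rintro ⟨i, -, hi⟩
      exact ⟨n i, trivial, hi⟩
  · intro k
    exact hne (n k)

theorem absorb_clopen {N : Type*} [TopologicalSpace N] [T1Space N]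
    [FirstCountableTopology N] (hzd : ZeroDimensional N) {p : N} (hp : ¬ IsOpen {p})
    (hpi : ∀ O : Set N, IsOpen O → O.Nonempty →
      ∃ e : N → N, IsEmbedding e ∧ IsClopen (range e) ∧ range e ⊆ O)
    (D : Set N) (hD : IsClopen D) : Nonempty (N ⊕ D ≃ₜ N) := by
  obtain ⟨O, hanti, hO, hbas, hne⟩ := exists_ring_basis hzd hp
  have h1 : ∀ k, ∃ e : N → N, IsEmbedding e ∧ IsClopen (range e) ∧ range e ⊆ O k \ O (k + 1) :=
    fun k => hpi _ ((hO k).diff (hO (k+1))).isOpen (hne k)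
  choose u hu hur huO using h1
  let w : ℕ × D → N := fun x => u x.1 x.2
  have hwO : ∀ k d, w (k, d) ∈ O k \ O (k + 1) := fun k d => huO k (mem_range_self _)
  have hinj : Function.Injective w := by
    rintro ⟨k, d⟩ ⟨k', d'⟩ h
    have hkk : k = k' := by
      rcases lt_trichotomy k k' with hlt | h' | hlt
      · have h3 := (hwO k' d').1
        rw [← h] at h3
        exact absurd (hanti hlt h3) (hwO k d).2
      · exact h'
      · have h3 := (hwO k d).1
        rw [h] at h3
        exact absurd (hanti hlt h3) (hwO k' d').2
    subst hkk
    have := (hu k).injective h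
    have h4 : d = d' := Subtype.ext this
    rw [h4]
  have huo : ∀ k, IsOpenEmbedding (u k) := fun k => ⟨hu k, (hur k).isOpen⟩
  have huc : ∀ k, IsClosedEmbedding (u k) := fun k => ⟨hu k, (hur k).isClosed⟩
  have hw : ∀ k, IsOpenEmbedding (fun d => w (k, d)) :=
    fun k => (huo k).comp hD.isOpen.isOpenEmbedding_subtypeVal
  have hwc : ∀ k, IsClosed (range (fun d => w (k, d))) :=
    fun k => ((huc k).comp hD.isClosed.isClosedEmbedding_subtypeVal).isClosed_range
  let σ : N → N := Function.extend w (fun x => w (x.1 + 1, x.2)) id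
  let a : ℕ × D → N ⊕ D := fun x => Nat.casesOn x.1 (Sum.inr x.2) (fun k => Sum.inl (w (k, x.2)))
  let τ : N → N ⊕ D := Function.extend w a Sum.inl
  have hσ : Continuous σ := by
    refine continuous_extend_of_conv hanti hO hbas hinj hw hwc hwO continuous_id
      (fun k => (hw (k + 1)).continuous) ?_
    intro T hT
    obtain ⟨K, -, hK⟩ := hbas.mem_iff.1 hT
    exact ⟨K, fun k hk d => hK (hanti (by omega : K ≤ k + 1) (hwO (k + 1) d).1)⟩
  have hτ : Continuous τ := by
    refine continuous_extend_of_conv hanti hO hbas hinj hw hwc hwO continuous_inl ?_ ?_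
    · intro k
      cases k with
      | zero => exact continuous_inr
      | succ k => exact continuous_inl.comp (hw k).continuous
    · intro T hT
      have : Sum.inl ⁻¹' T ∈ 𝓝 p := continuous_inl.continuousAt hT
      obtain ⟨K, -, hK⟩ := hbas.mem_iff.1 this
      refine ⟨K + 1, fun k hk d => ?_⟩
      obtain ⟨k, rfl⟩ : ∃ k', k = k' + 1 := ⟨k - 1, by omega⟩
      exact hK (hanti (by omega : K ≤ k) (hwO k d).1)
  have σw : ∀ k d, σ (w (k, d)) = w (k + 1, d) := fun k d => hinj.extend_apply _ _ _
  have τw0 : ∀ d, τ (w (0, d)) = Sum.inr d := fun d => hinj.extend_apply _ _ _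
  have τw : ∀ k d, τ (w (k + 1, d)) = Sum.inl (w (k, d)) := fun k d => hinj.extend_apply _ _ _
  have σn : ∀ x, (¬ ∃ y, w y = x) → σ x = x := fun x hx => Function.extend_apply' _ _ _ hx
  have τn : ∀ x, (¬ ∃ y, w y = x) → τ x = Sum.inl x := fun x hx => Function.extend_apply' _ _ _ hx
  refine ⟨{ toFun := Sum.elim σ (fun d => w (0, d)), invFun := τ, left_inv := ?_,
            right_inv := ?_, continuous_toFun := hσ.sumElim (hw 0).continuous,
            continuous_invFun := hτ }⟩
  · rintro (x | d)
    · by_cases hx : ∃ y, w y = x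
      · obtain ⟨⟨k, d⟩, rfl⟩ := hx
        simp only [Sum.elim_inl]
        rw [σw, τw]
      · simp only [Sum.elim_inl]
        rw [σn x hx, τn x hx]
    · simp only [Sum.elim_inr]
      exact τw0 d
  · intro x
    by_cases hx : ∃ y, w y = x
    · obtain ⟨⟨k, d⟩, rfl⟩ := hx
      cases k with
      | zero => rw [τw0, Sum.elim_inr]
      | succ k => rw [τw, Sum.elim_inl, σw]
    · rw [τn x hx, Sum.elim_inl, σn x hx]

theorem hhomogeneous_of_pibase {N : Type*} [TopologicalSpace N] [T1Space N]
    [FirstCountableTopology N] (hzd : ZeroDimensional N) {p : N} (hp : ¬ IsOpen {p})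
    (hpi : ∀ O : Set N, IsOpen O → O.Nonempty →
      ∃ e : N → N, IsEmbedding e ∧ IsClopen (range e) ∧ range e ⊆ O) : HHomogeneous N := by
  intro C hC hne
  obtain ⟨e, he, hec, hes⟩ := hpi C hC.isOpen hne
  have hD : IsClopen (C \ range e) := hC.diff hec
  obtain ⟨h⟩ := absorb_clopen hzd hp hpi (C \ range e) hD
  have hg : IsOpenEmbedding (Sum.elim e (Subtype.val : ↥(C \ range e) → N)) := by
    refine IsOpenEmbedding.sumElim ⟨he, hec.isOpen⟩ hD.isOpen.isOpenEmbedding_subtypeVal ?_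
    refine he.injective.sumElim Subtype.val_injective ?_
    intro a b hab
    exact b.2.2 ⟨a, hab⟩
  have hr : range (Sum.elim e (Subtype.val : ↥(C \ range e) → N)) = C := by
    rw [Sum.elim_range, Subtype.range_coe, union_sdiff_cancel hes]
  exact ⟨((Homeomorph.setCongr hr.symm).trans hg.isEmbedding.toHomeomorph.symm).trans h⟩

theorem HHomogeneous.of_homeomorph {N M : Type*} [TopologicalSpace N] [TopologicalSpace M]
    (h : HHomogeneous N) (θ : N ≃ₜ M) : HHomogeneous M := by
  intro C hC hne
  obtain ⟨φ⟩ := h (θ ⁻¹' C) (hC.preimage θ.continuous) (by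
      obtain ⟨w, hw⟩ := hne
      exact ⟨θ.symm w, by simpa using hw⟩)
  have hh : θ '' (θ ⁻¹' C) = C := image_preimage_eq C θ.surjective
  exact ⟨((Homeomorph.setCongr hh.symm).trans (θ.image (θ ⁻¹' C)).symm).trans (φ.trans θ)⟩

end Terada

section Final

theorem ZeroDimensional.of_inducing {X Y : Type*} [TopologicalSpace X] [TopologicalSpace Y]
    {f : X → Y} (hf : IsInducing f) (h : ZeroDimensional Y) : ZeroDimensional X := by
  intro x U hU hx
  obtain ⟨V, hV, rfl⟩ := hf.isOpen_iff.1 hU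
  obtain ⟨C, hC, hxC, hCV⟩ := h (f x) V hV hx
  exact ⟨f ⁻¹' C, hC.preimage hf.continuous, hxC, preimage_mono hCV⟩

theorem ZeroDimensional.pow {X : Type*} [TopologicalSpace X] (h : ZeroDimensional X) :
    ZeroDimensional (ℕ → X) := by
  intro f O hO hf
  obtain ⟨n, W, hW, hsub⟩ := exists_cylinder_subset hO hf
  choose C hC hfC hCW using fun i => h (f i) (W i) (hW i).1 (hW i).2
  refine ⟨⋂ i ∈ Finset.range n, (fun g : ℕ → X => g i) ⁻¹' C i,
    isClopen_biInter_finset fun i _ => (hC i).preimage (continuous_apply i), by simp [hfC],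
    fun g hg => hsub fun i hi => hCW i ?_⟩
  simp only [mem_iInter] at hg
  exact hg i (Finset.mem_range.2 hi)

theorem ZeroDimensional.punit_sum {X : Type*} [TopologicalSpace X] (h : ZeroDimensional X) :
    ZeroDimensional (PUnit.{v+1} ⊕ X) := by
  rintro (a | x) U hU hx
  · refine ⟨range Sum.inl, ⟨isClosed_range_inl, isOpen_range_inl⟩, mem_range_self _, ?_⟩
    rintro _ ⟨b, rfl⟩
    exact hx
  · obtain ⟨C, hC, hxC, hCU⟩ := h x (Sum.inr ⁻¹' U) (hU.preimage continuous_inr) hx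
    exact ⟨Sum.inr '' C, ⟨IsClosedEmbedding.inr.isClosedMap _ hC.1, isOpenMap_inr _ hC.2⟩,
      mem_image_of_mem _ hxC, by simpa using hCU⟩

theorem ZeroDimensional.bool : ZeroDimensional Bool :=
  fun _ U _ hx => ⟨U, isClopen_discrete U, hx, Subset.rfl⟩

theorem not_isOpen_singleton_pow {X : Type*} [TopologicalSpace X] [Nontrivial X] (f : ℕ → X) :
    ¬ IsOpen {f} := by
  classical
  intro h
  obtain ⟨n, W, hW, hsub⟩ := exists_cylinder_subset h (mem_singleton f)
  obtain ⟨y, hy⟩ := exists_ne (f n)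
  have h1 : Function.update f n y ∈ ({f} : Set (ℕ → X)) := hsub (fun i hi => by
    rw [Function.update_of_ne (by omega)]
    exact (hW i).2)
  have h2 := congrFun (mem_singleton_iff.1 h1) n
  rw [Function.update_self] at h2
  exact hy h2

theorem hhomogeneous_pow_of_isolated {Y : Type*} [TopologicalSpace Y] [FirstCountableTopology Y]
    [T1Space Y] [Nontrivial Y] (hzd : ZeroDimensional Y) {y0 : Y} (hy : IsOpen {y0}) :
    HHomogeneous (ℕ → Y) :=
  hhomogeneous_of_pibase hzd.pow (not_isOpen_singleton_pow (fun _ => y0)) fun O hO hne => by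
    obtain ⟨e, he, hs⟩ := exists_pairEmb_open hzd hy (A := univ) (mem_univ _) dense_univ hO hne
    exact ⟨e, he.emb, he.clopen, hs⟩

theorem hhomogeneous_of_embedded {Z : Type*} [TopologicalSpace Z] [T1Space Z]
    [FirstCountableTopology Z] (hzd : ZeroDimensional Z) {S : Set Z} (h : HHomEmbedded S)
    {p : S} (hp : ¬ IsOpen {p}) : HHomogeneous S := by
  obtain ⟨ℬ, h1, h2, h3⟩ := h
  refine hhomogeneous_of_pibase (hzd.of_inducing IsInducing.subtypeVal) hp ?_
  intro O hO hne
  obtain ⟨V, hV, rfl⟩ := isOpen_induced_iff.1 hO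
  obtain ⟨s, hs⟩ := hne
  obtain ⟨U, hU, hUV⟩ := h2 V hV ⟨s, hs⟩
  obtain ⟨φ, hφ⟩ := h3 U hU
  have hmem : ∀ s : S, (φ s : Z) ∈ S := fun s => (hφ.subset ⟨_, ⟨s, s.2, rfl⟩, rfl⟩).1
  let e : S → S := fun s => ⟨φ s, hmem s⟩
  have he : IsEmbedding e := by
    have h4 : IsEmbedding ((Subtype.val : U → Z) ∘ (φ ∘ (Subtype.val : S → Z))) :=
      IsEmbedding.subtypeVal.comp (φ.isEmbedding.comp IsEmbedding.subtypeVal)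
    change IsEmbedding ((Subtype.val : S → Z) ∘ e) at h4
    exact (IsEmbedding.subtypeVal.of_comp_iff).1 h4
  have hr : range e = Subtype.val ⁻¹' U := by
    ext x
    constructor
    · rintro ⟨y, rfl⟩
      exact (φ y).2
    · intro hx
      obtain ⟨_, ⟨y, hy, rfl⟩, h5⟩ := hφ.superset ⟨x.2, hx⟩
      exact ⟨⟨y, hy⟩, Subtype.ext h5⟩
  refine ⟨e, he, ?_, ?_⟩
  · rw [hr]
    exact (h1 U hU).1.preimage continuous_subtype_val
  · rw [hr]
    exact preimage_mono hUV

theorem sum_self_homeo {N : Type*} [TopologicalSpace N] (h : HHomogeneous N) {C : Set N}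
    (hC : IsClopen C) (hne : C.Nonempty) (hne' : Cᶜ.Nonempty) : Nonempty (N ⊕ N ≃ₜ N) := by
  obtain ⟨a⟩ := h C hC hne
  obtain ⟨b⟩ := h Cᶜ hC.compl hne'
  have hg : IsOpenEmbedding (Sum.elim (Subtype.val : C → N) (Subtype.val : ↥Cᶜ → N)) := by
    refine IsOpenEmbedding.sumElim hC.isOpen.isOpenEmbedding_subtypeVal
      hC.compl.isOpen.isOpenEmbedding_subtypeVal ?_
    refine Subtype.val_injective.sumElim Subtype.val_injective ?_
    intro a b hab
    exact b.2 (hab ▸ a.2)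
  have hs : Function.Surjective (Sum.elim (Subtype.val : C → N) (Subtype.val : ↥Cᶜ → N)) := by
    intro x
    by_cases hx : x ∈ C
    · exact ⟨Sum.inl ⟨x, hx⟩, rfl⟩
    · exact ⟨Sum.inr ⟨x, hx⟩, rfl⟩
  exact ⟨(a.sumCongr b).symm.trans (hg.isEmbedding.toHomeomorphOfSurjective hs)⟩

/-- a product of powers is a power of the product -/
def prodPowH (N M : Type*) [TopologicalSpace N] [TopologicalSpace M] :
    (ℕ → N) × (ℕ → M) ≃ₜ (ℕ → N × M) where
  toFun p := fun i => (p.1 i, p.2 i)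
  invFun f := (fun i => (f i).1, fun i => (f i).2)
  left_inv _ := rfl
  right_inv _ := rfl
  continuous_toFun := by fun_prop
  continuous_invFun := by fun_prop

theorem pow_punit_sum {X : Type*} [TopologicalSpace X] [T2Space X] [SecondCountableTopology X]
    [Nontrivial X] (hzd : ZeroDimensional X) (h : HHomogeneous (ℕ → X)) :
    Nonempty ((ℕ → PUnit.{v+1} ⊕ (ℕ → X)) ≃ₜ (ℕ → X)) := by
  have hz : IsOpen {(Sum.inl PUnit.unit : PUnit.{v+1} ⊕ (ℕ → X))} := by
    have h1 := isOpenMap_inl (Y := ℕ → X) ({PUnit.unit} : Set PUnit.{v+1}) (isOpen_discrete _)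
    rwa [image_singleton] at h1
  obtain ⟨e, he, hr⟩ := exists_pairEmb_clopen (Z := PUnit.{v+1} ⊕ (ℕ → X)) hzd.pow.punit_sum hz
    (A := univ) (mem_univ _) (V := range Sum.inr) ⟨isClosed_range_inr, isOpen_range_inr⟩
    (Or.inr ⟨by simp, by
      obtain ⟨x⟩ : Nonempty (ℕ → X) := inferInstance
      exact ⟨Sum.inr x, mem_range_self _, trivial⟩⟩)
  let g : (ℕ → X) × (ℕ → PUnit.{v+1} ⊕ (ℕ → X)) → (ℕ → PUnit.{v+1} ⊕ (ℕ → X)) :=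
    (consH _) ∘ Prod.map Sum.inr id
  have hg : IsEmbedding g := (consH _).isEmbedding.comp (IsEmbedding.inr.prodMap IsEmbedding.id)
  have hgr : range g = {f | f 0 ∈ range Sum.inr} := by
    ext f
    constructor
    · rintro ⟨p, rfl⟩
      exact ⟨p.1, rfl⟩
    · rintro ⟨x, hx⟩
      refine ⟨(x, tailSeq f), ?_⟩
      change consSeq (Sum.inr x) (tailSeq f) = f
      rw [hx, cons_tail]
  have h1 : (ℕ → PUnit.{v+1} ⊕ (ℕ → X)) ≃ₜ (ℕ → X) × (ℕ → PUnit.{v+1} ⊕ (ℕ → X)) :=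
    (he.emb.toHomeomorph.trans (Homeomorph.setCongr (hr.trans hgr.symm))).trans
      hg.toHomeomorph.symm
  have h2 : (ℕ → X) × (ℕ → X) ≃ₜ (ℕ → X) :=
    ((Homeomorph.refl (ℕ → X)).prodCongr (flatH X).symm).trans ((consH (ℕ → X)).trans (flatH X))
  obtain ⟨h3⟩ : Nonempty ((ℕ → X) ⊕ (ℕ → X) ≃ₜ (ℕ → X)) := by
    obtain ⟨f, g, hfg⟩ := exists_pair_ne (ℕ → X)
    obtain ⟨C, hC, hfC, hCg⟩ := hzd.pow f {g}ᶜ isOpen_compl_singleton hfg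
    exact sum_self_homeo h hC ⟨f, hfC⟩ ⟨g, fun hg => hCg hg rfl⟩
  have h4 : (ℕ → X) × (PUnit.{v+1} ⊕ (ℕ → X)) ≃ₜ (ℕ → X) :=
    Homeomorph.prodSumDistrib.trans
      (((Homeomorph.prodUnique (ℕ → X) PUnit.{v+1}).sumCongr h2).trans h3)
  have h5 : (ℕ → X) × (ℕ → PUnit.{v+1} ⊕ (ℕ → X)) ≃ₜ (ℕ → X) :=
    ((flatH X).symm.prodCongr (Homeomorph.refl _)).trans
      ((prodPowH _ _).trans ((Homeomorph.piCongrRight fun _ => h4).trans (flatH X)))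
  exact ⟨h1.trans h5⟩

theorem exists_split {N : Type*} [TopologicalSpace N] [T1Space N] (hzd : ZeroDimensional N)
    (hni : ∀ x : N, ¬ IsOpen {x}) {A D : Set N} (hA : IsClopen A) (hne : A.Nonempty)
    (hD : IsClopen D) : ∃ G : Set N, IsClopen G ∧ (∃ x ∈ A, x ∈ G) ∧ (∃ x ∈ A, x ∉ G) ∧
      ∀ x ∈ A, x ∈ D → ∀ y ∈ A, (y ∈ G ↔ x ∈ G) → y ∈ D := by
  by_cases h : (∃ x ∈ A, x ∈ D) ∧ (∃ x ∈ A, x ∉ D)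
  · exact ⟨D, hD, h.1, h.2, fun x _ hx y _ hy => hy.2 hx⟩
  · obtain ⟨x, hx⟩ := hne
    obtain ⟨y, hy, hyx⟩ : ∃ y ∈ A, y ≠ x := by
      by_contra h'
      push Not at h'
      apply hni x
      have : A = {x} := by
        ext y
        exact ⟨fun hy => h' y hy, fun hy => by rw [mem_singleton_iff.1 hy]; exact hx⟩
      rw [← this]
      exact hA.isOpen
    obtain ⟨C, hC, hxC, hCy⟩ := hzd x {y}ᶜ isOpen_compl_singleton hyx.symm
    refine ⟨C, hC, ⟨x, hx, hxC⟩, ⟨y, hy, fun hh => hCy hh rfl⟩, ?_⟩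
    intro a ha haD b hb _
    by_contra hbD
    exact h ⟨⟨a, ha, haD⟩, ⟨b, hb, hbD⟩⟩

theorem exists_clopen_seq_basis {N : Type*} [TopologicalSpace N] [SecondCountableTopology N]
    [Nonempty N] (hzd : ZeroDimensional N) : ∃ D : ℕ → Set N, (∀ k, IsClopen (D k)) ∧
      ∀ (x : N) (U : Set N), IsOpen U → x ∈ U → ∃ k, x ∈ D k ∧ D k ⊆ U := by
  have hb : TopologicalSpace.IsTopologicalBasis {C : Set N | IsClopen C} :=
    TopologicalSpace.isTopologicalBasis_of_isOpen_of_nhds (fun C hC => hC.isOpen)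
      (fun x U hx hU => by
        obtain ⟨C, hC, hxC, hCU⟩ := hzd x U hU hx
        exact ⟨C, hC, hxC, hCU⟩)
  obtain ⟨s, hs, hsc, hsb⟩ := hb.exists_countable
  have hne : s.Nonempty := by
    obtain ⟨x⟩ : Nonempty N := inferInstance
    obtain ⟨C, hC, -⟩ := hsb.exists_subset_of_mem_open (mem_univ x) isOpen_univ
    exact ⟨C, hC⟩
  obtain ⟨D, rfl⟩ := hsc.exists_eq_range hne
  refine ⟨D, fun k => hs (mem_range_self k), fun x U hU hx => ?_⟩
  obtain ⟨_, ⟨k, rfl⟩, h1, h2⟩ := hsb.exists_subset_of_mem_open hx hU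
  exact ⟨k, h1, h2⟩

/-- cells of the scheme determined by `G` along a branch `z` -/
def cellA {N : Type*} (G : Set N → ℕ → Set N) (z : ℕ → Bool) : ℕ → Set N
  | 0 => univ
  | n + 1 => {x | x ∈ cellA G z n ∧ (x ∈ G (cellA G z n) n ↔ z n = true)}

/-- cells of the scheme determined by `G` around a point `x` -/
def cellS {N : Type*} (G : Set N → ℕ → Set N) (x : N) : ℕ → Set N
  | 0 => univ
  | n + 1 => {y | y ∈ cellS G x n ∧ (y ∈ G (cellS G x n) n ↔ x ∈ G (cellS G x n) n)}

open Classical in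
/-- itinerary of a point -/
noncomputable def itin {N : Type*} (G : Set N → ℕ → Set N) (x : N) : ℕ → Bool :=
  fun n => decide (x ∈ G (cellS G x n) n)

theorem cellS_eq {N : Type*} (G : Set N → ℕ → Set N) (x : N) (n : ℕ) :
    cellS G x n = cellA G (itin G x) n := by
  induction n with
  | zero => rfl
  | succ n ih =>
    simp only [cellS, cellA, ← ih]
    simp [itin]

theorem mem_cellS {N : Type*} (G : Set N → ℕ → Set N) (x : N) (n : ℕ) : x ∈ cellS G x n := by
  induction n with
  | zero => trivial
  | succ n ih => exact ⟨ih, Iff.rfl⟩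

theorem cellA_congr {N : Type*} (G : Set N → ℕ → Set N) {z z' : ℕ → Bool} {n : ℕ}
    (h : ∀ i < n, z i = z' i) : cellA G z n = cellA G z' n := by
  induction n with
  | zero => rfl
  | succ n ih =>
    simp only [cellA, ih fun i hi => h i (by omega), h n (by omega)]

theorem mem_cellA {N : Type*} (G : Set N → ℕ → Set N) (z : ℕ → Bool) (n : ℕ) (y : N) :
    y ∈ cellA G z n ↔ ∀ i < n, itin G y i = z i := by
  constructor
  · induction n with
    | zero => intro _ i hi; omega
    | succ n ih =>
      rintro ⟨h1, h2⟩
      have h3 := ih h1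
      intro i hi
      rcases Nat.lt_succ_iff_lt_or_eq.1 hi with h4 | rfl
      · exact h3 i h4
      · rw [← cellA_congr G h3, ← cellS_eq] at h2
        rw [Bool.eq_iff_iff, ← h2]
        simp [itin]
  · intro h
    rw [← cellA_congr G h, ← cellS_eq]
    exact mem_cellS G y n

theorem exists_dense_embedding {N : Type*} [TopologicalSpace N] [SecondCountableTopology N]
    [T1Space N] [Nonempty N] (hzd : ZeroDimensional N) (hni : ∀ x : N, ¬ IsOpen {x}) :
    ∃ ι : N → (ℕ → Bool), IsEmbedding ι ∧ DenseRange ι := by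
  obtain ⟨D, hD, hDb⟩ := exists_clopen_seq_basis hzd
  have h1 : ∀ (A : Set N) (k : ℕ), ∃ G : Set N, IsClopen A → A.Nonempty →
      (IsClopen G ∧ (∃ x ∈ A, x ∈ G) ∧ (∃ x ∈ A, x ∉ G) ∧
      ∀ x ∈ A, x ∈ D k → ∀ y ∈ A, (y ∈ G ↔ x ∈ G) → y ∈ D k) := by
    intro A k
    by_cases h : IsClopen A ∧ A.Nonempty
    · obtain ⟨G, hG⟩ := exists_split hzd hni h.1 h.2 (hD k)
      exact ⟨G, fun _ _ => hG⟩
    · exact ⟨∅, fun h2 h3 => absurd ⟨h2, h3⟩ h⟩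
  choose G hG using h1
  have hA : ∀ z n, IsClopen (cellA G z n) ∧ (cellA G z n).Nonempty := by
    intro z n
    induction n with
    | zero => exact ⟨isClopen_univ, univ_nonempty⟩
    | succ n ih =>
      obtain ⟨g1, ⟨a, ha, haG⟩, ⟨b, hb, hbG⟩, -⟩ := hG _ n ih.1 ih.2
      cases hz : z n with
      | true =>
        have : cellA G z (n + 1) = cellA G z n ∩ G (cellA G z n) n := by
          ext x; simp [cellA, hz]
        rw [this]
        exact ⟨ih.1.inter g1, a, ha, haG⟩
      | false =>
        have : cellA G z (n + 1) = cellA G z n \ G (cellA G z n) n := by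
          ext x; simp [cellA, hz]
        rw [this]
        exact ⟨ih.1.diff g1, b, hb, hbG⟩
  have hself : ∀ x n, x ∈ cellA G (itin G x) n := fun x n => (mem_cellA G _ _ _).2 fun _ _ => rfl
  have hcont : Continuous (itin G) := by
    refine continuous_pi fun n => continuous_iff_continuousAt.2 fun x => ?_
    have hev : ∀ᶠ y in 𝓝 x, itin G x n = itin G y n := by
      filter_upwards [(hA (itin G x) (n + 1)).1.isOpen.mem_nhds (hself x _)] with y hy
      exact ((mem_cellA G _ _ _).1 hy n (by omega)).symm
    exact (continuousAt_const (y := itin G x n)).congr hev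
  have hind : IsInducing (itin G) := by
    rw [isInducing_iff_nhds]
    intro x
    refine le_antisymm (hcont.tendsto x).le_comap ?_
    intro U hU
    obtain ⟨k, hxk, hkU⟩ := hDb x (interior U) isOpen_interior (mem_interior_iff_mem_nhds.2 hU)
    refine ⟨{z | ∀ i ∈ Finset.range (k + 1), z i ∈ ({itin G x i} : Set Bool)}, ?_, ?_⟩
    · refine IsOpen.mem_nhds ?_ (fun i _ => rfl)
      have : {z : ℕ → Bool | ∀ i ∈ Finset.range (k + 1), z i ∈ ({itin G x i} : Set Bool)} =
          ⋂ i ∈ Finset.range (k + 1), (fun z : ℕ → Bool => z i) ⁻¹' {itin G x i} := by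
        ext z
        simp only [mem_iInter, mem_ofPred_eq, mem_preimage]
      rw [this]
      exact isOpen_biInter_finset fun i _ => (isOpen_discrete _).preimage (continuous_apply i)
    · intro y hy
      have hyA : y ∈ cellA G (itin G x) (k + 1) :=
        (mem_cellA G _ _ _).2 fun i hi => hy i (Finset.mem_range.2 hi)
      have hxA := hself x (k + 1)
      obtain ⟨-, -, -, hdec⟩ := hG _ k (hA (itin G x) k).1 (hA (itin G x) k).2
      exact interior_subset (hkU (hdec x hxA.1 hxk y hyA.1 (hyA.2.trans hxA.2.symm)))
  refine ⟨itin G, hind.isEmbedding, ?_⟩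
  refine dense_iff_inter_open.2 fun O hO hne => ?_
  obtain ⟨z, hz⟩ := hne
  obtain ⟨n, W, hW, hsub⟩ := exists_cylinder_subset hO hz
  obtain ⟨y, hy⟩ := (hA z n).2
  refine ⟨itin G y, hsub fun i hi => ?_, mem_range_self _⟩
  rw [(mem_cellA G _ _ _).1 hy i hi]
  exact (hW i).2

theorem exists_hhomEmbedded {X : Type*} [TopologicalSpace X] [T2Space X]
    [SecondCountableTopology X] [Nontrivial X] (hzd : ZeroDimensional X)
    (h : HHomogeneous (ℕ → X)) :
    ∃ S : Set (ℕ → Bool), Nonempty ((ℕ → X) ≃ₜ S) ∧ HHomEmbedded S := by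
  obtain ⟨ι, hι, hd⟩ := exists_dense_embedding hzd.pow (not_isOpen_singleton_pow (X := X))
  let j : PUnit.{1} ⊕ (ℕ → X) → PUnit.{1} ⊕ (ℕ → Bool) :=
    Sum.elim Sum.inl (Sum.inr ∘ ι)
  have hsub : range (Sum.inr ∘ ι) ⊆ range (Sum.inr : (ℕ → Bool) → PUnit.{1} ⊕ (ℕ → Bool)) :=
    range_comp_subset_range _ _
  have hj : IsEmbedding j := by
    refine IsEmbedding.sumElim_of_separatedNhds IsEmbedding.inl (IsEmbedding.inr.comp hι) ?_
    exact ⟨range Sum.inl, range Sum.inr, isOpen_range_inl, isOpen_range_inr, Subset.rfl, hsub,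
      isCompl_range_inl_range_inr.disjoint⟩
  have hA : Dense (range j) := by
    refine dense_iff_inter_open.2 fun O hO hne => ?_
    obtain ⟨z | z, hz⟩ := hne
    · exact ⟨Sum.inl z, hz, Sum.inl z, rfl⟩
    · obtain ⟨_, hw, ⟨y, rfl⟩⟩ := dense_iff_inter_open.1 hd (Sum.inr ⁻¹' O)
        (hO.preimage continuous_inr) ⟨z, hz⟩
      exact ⟨Sum.inr (ι y), hw, Sum.inr y, rfl⟩
  have hz : IsOpen {(Sum.inl PUnit.unit : PUnit.{1} ⊕ (ℕ → Bool))} := by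
    have h1 := isOpenMap_inl (Y := ℕ → Bool) ({PUnit.unit} : Set PUnit.{1}) (isOpen_discrete _)
    rwa [image_singleton] at h1
  have hE := hhomEmbedded_pow ZeroDimensional.bool.pow.punit_sum hz (A := range j)
    ⟨Sum.inl PUnit.unit, rfl⟩ hA
  obtain ⟨θ⟩ : Nonempty ((ℕ → PUnit.{1} ⊕ (ℕ → Bool)) ≃ₜ (ℕ → Bool)) := pow_punit_sum ZeroDimensional.bool
    (hhomogeneous_pow_of_isolated ZeroDimensional.bool (isOpen_discrete {true}))
  obtain ⟨η⟩ : Nonempty ((ℕ → PUnit.{1} ⊕ (ℕ → X)) ≃ₜ (ℕ → X)) := pow_punit_sum hzd h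
  have hP : IsEmbedding (Pi.map (fun _ : ℕ => j)) := IsEmbedding.piMap fun _ => hj
  have hr : range (Pi.map (fun _ : ℕ => j)) = {f | ∀ i, f i ∈ range j} := by
    ext f
    constructor
    · rintro ⟨g, rfl⟩ i
      exact mem_range_self _
    · intro hf
      choose g hg using hf
      exact ⟨g, funext hg⟩
  exact ⟨θ '' {f | ∀ i, f i ∈ range j},
    ⟨η.symm.trans (hP.toHomeomorph.trans ((Homeomorph.setCongr hr).trans (θ.image _)))⟩,
    hE.image θ⟩

end Final

/-- Let `X` be a zero-dimensional separable metrizable space with at least two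
points. Then the following are equivalent: (1) `X^ω` is homeomorphic to `Y^ω`
for some separable metrizable space `Y` having at least one isolated point;
(2) `X^ω` can be h-homogeneously embedded in the Cantor set `2^ω`;
(3) `X^ω` is h-homogeneous. -/
theorem statement15 {X : Type u} [TopologicalSpace X] [TopologicalSpace.SeparableSpace X]
    [TopologicalSpace.MetrizableSpace X] (hzd : ZeroDimensional X) (h2 : Nontrivial X) :
    ((∃ (Y : Type u) (tY : TopologicalSpace Y),
        @TopologicalSpace.SeparableSpace Y tY ∧ @TopologicalSpace.MetrizableSpace Y tY ∧
        (∃ y : Y, @IsOpen Y tY {y}) ∧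
        Nonempty (@Homeomorph (ℕ → X) (ℕ → Y) inferInstance
          (@Pi.topologicalSpace ℕ (fun _ => Y) (fun _ => tY)))) ↔
      (∃ S : Set (ℕ → Bool), Nonempty ((ℕ → X) ≃ₜ S) ∧ HHomEmbedded S)) ∧
    ((∃ S : Set (ℕ → Bool), Nonempty ((ℕ → X) ≃ₜ S) ∧ HHomEmbedded S) ↔
      HHomogeneous (ℕ → X)) := by
  letI := TopologicalSpace.metrizableSpaceMetric X
  haveI : SecondCountableTopology X := UniformSpace.secondCountable_of_separable X
  have h13 : (∃ (Y : Type u) (tY : TopologicalSpace Y),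
        @TopologicalSpace.SeparableSpace Y tY ∧ @TopologicalSpace.MetrizableSpace Y tY ∧
        (∃ y : Y, @IsOpen Y tY {y}) ∧
        Nonempty (@Homeomorph (ℕ → X) (ℕ → Y) inferInstance
          (@Pi.topologicalSpace ℕ (fun _ => Y) (fun _ => tY)))) → HHomogeneous (ℕ → X) := by
    rintro ⟨Y, tY, -, hm, ⟨y, hy⟩, ⟨θ⟩⟩
    have hYz : ZeroDimensional Y := by
      have hc : IsEmbedding (fun (y : Y) (_ : ℕ) => y) :=
        Function.LeftInverse.isEmbedding (f := fun f : ℕ → Y => f 0) (fun _ => rfl)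
          (continuous_apply 0) (continuous_pi fun _ => continuous_id)
      exact hzd.pow.of_inducing (θ.symm.isEmbedding.comp hc).isInducing
    haveI : Nontrivial Y := by
      by_contra hn
      rw [not_nontrivial_iff_subsingleton] at hn
      obtain ⟨f, g, hfg⟩ := exists_pair_ne (ℕ → X)
      exact hfg (θ.injective (Subsingleton.elim _ _))
    exact (hhomogeneous_pow_of_isolated hYz hy).of_homeomorph θ.symm
  have h31 : HHomogeneous (ℕ → X) → (∃ (Y : Type u) (tY : TopologicalSpace Y),
        @TopologicalSpace.SeparableSpace Y tY ∧ @TopologicalSpace.MetrizableSpace Y tY ∧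
        (∃ y : Y, @IsOpen Y tY {y}) ∧
        Nonempty (@Homeomorph (ℕ → X) (ℕ → Y) inferInstance
          (@Pi.topologicalSpace ℕ (fun _ => Y) (fun _ => tY)))) := by
    intro h
    obtain ⟨η⟩ : Nonempty ((ℕ → PUnit.{u+1} ⊕ (ℕ → X)) ≃ₜ (ℕ → X)) := pow_punit_sum hzd h
    have hz : IsOpen {(Sum.inl PUnit.unit : PUnit.{u+1} ⊕ (ℕ → X))} := by
      have h1 := isOpenMap_inl (Y := ℕ → X) ({PUnit.unit} : Set PUnit.{u+1}) (isOpen_discrete _)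
      rwa [image_singleton] at h1
    exact ⟨PUnit.{u+1} ⊕ (ℕ → X), inferInstance, inferInstance, inferInstance, ⟨_, hz⟩, ⟨η.symm⟩⟩
  have h23 : (∃ S : Set (ℕ → Bool), Nonempty ((ℕ → X) ≃ₜ S) ∧ HHomEmbedded S) →
      HHomogeneous (ℕ → X) := by
    rintro ⟨S, ⟨θ⟩, hS⟩
    obtain ⟨f⟩ : Nonempty (ℕ → X) := inferInstance
    have hp : ¬ IsOpen {θ f} := by
      intro h
      apply not_isOpen_singleton_pow f
      have h1 := h.preimage θ.continuous
      have h2 : θ ⁻¹' {θ f} = {f} := by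
        ext g
        simp
      rwa [h2] at h1
    exact (hhomogeneous_of_embedded ZeroDimensional.bool.pow hS hp).of_homeomorph θ.symm
  have h32 := exists_hhomEmbedded hzd
  exact ⟨⟨fun h => h32 (h13 h), fun h => h31 (h23 h)⟩, ⟨h23, h32⟩⟩
end

section
/- Let X be a zero-dimensional separable metrizable space with at least two points. If X has a dense Polish subspace then X^ω can be h-homogeneously embedded in the Cantor set 2^ω. -/
open Set Topology Filter
set_option linter.unusedSectionVars false

lemma int_small {W : Type*} [TopologicalSpace W] {s t : Set W} (h : s ⊆ t) (h' : interior t = ∅) :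
    interior s = ∅ := subset_empty_iff.1 (h' ▸ interior_mono h)

section
variable {Z : Type*} [TopologicalSpace Z] [CompactSpace Z] [T2Space Z] [TotallyDisconnectedSpace Z]

lemma partition_ext (hperf : ∀ x : Z, ¬ IsOpen ({x} : Set Z)) {J : Type*} [Finite J]
    (p : Set Z) (hp : IsClopen p) (hne : p.Nonempty) (j₀ : J)
    (H : J → Set Z) (hH : ∀ j, IsClosed (H j)) (hd : ∀ i j, i ≠ j → Disjoint (H i) (H j))
    (hintr : interior (⋃ j, H j) = ∅) :
    ∃ d : Z → J, (∀ j, IsClopen (d ⁻¹' {j})) ∧ (∀ j, (p ∩ d ⁻¹' {j}).Nonempty) ∧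
      ∀ j, H j ⊆ d ⁻¹' {j} := by
  classical
  -- pick distinct points outside
  have hcl : IsClosed (⋃ j, H j) := isClosed_iUnion_of_finite hH
  have hinf : (p \ ⋃ j, H j).Infinite := by
    intro hfin
    have hopen : IsOpen (p \ ⋃ j, H j) := hp.isOpen.sdiff hcl
    have hne' : (p \ ⋃ j, H j).Nonempty := by
      by_contra h
      rw [not_nonempty_iff_eq_empty, sdiff_eq_empty] at h
      have := interior_maximal h hp.isOpen
      rw [hintr] at this
      exact hne.ne_empty (subset_empty_iff.1 this)
    obtain ⟨x, hx⟩ := hne'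
    apply hperf x
    have : ({x} : Set Z) = (p \ ⋃ j, H j) \ ((p \ ⋃ j, H j) \ {x}) := by
      ext y; constructor
      · rintro rfl; exact ⟨hx, fun h => h.2 rfl⟩
      · rintro ⟨h1, h2⟩; by_contra h; exact h2 ⟨h1, h⟩
    rw [this]
    exact hopen.sdiff (hfin.subset sdiff_subset).isClosed
  have : Infinite ↥(p \ ⋃ j, H j) := hinf.to_subtype
  obtain ⟨n, ⟨eJ⟩⟩ := Finite.exists_equiv_fin J
  let x : J → ↥(p \ ⋃ j, H j) := fun j => Infinite.natEmbedding _ (eJ j : ℕ)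
  have hxinj : Function.Injective x := by
    intro i j h
    have := (Infinite.natEmbedding _).injective h
    exact eJ.injective (Fin.ext this)
  let H' : J → Set Z := fun j => H j ∪ {(x j : Z)}
  have hH' : ∀ j, IsClosed (H' j) := fun j => (hH j).union isClosed_singleton
  have hd' : ∀ i j, i ≠ j → Disjoint (H' i) (H' j) := by
    intro i j hij
    rw [Set.disjoint_left]
    rintro y (h1 | h1) (h2 | h2)
    · exact Set.disjoint_left.1 (hd i j hij) h1 h2
    · rw [mem_singleton_iff] at h2; subst h2
      exact (x j).2.2 (mem_iUnion.2 ⟨i, h1⟩)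
    · rw [mem_singleton_iff] at h1; subst h1
      exact (x i).2.2 (mem_iUnion.2 ⟨j, h2⟩)
    · rw [mem_singleton_iff] at h1 h2
      exact hij (hxinj (Subtype.ext (h1.symm.trans h2)))
  have hC : ∀ j, ∃ C : Set Z, IsClopen C ∧ H' j ⊆ C ∧ ∀ i, i ≠ j → Disjoint (H' i) C := by
    intro j
    obtain ⟨C, hC1, hC2, hC3⟩ := exists_clopen_of_closed_subset_open (hH' j)
      (U := (⋃ i : {i // i ≠ j}, H' i)ᶜ)
      (isClosed_iUnion_of_finite (fun i : {i // i ≠ j} => hH' i)).isOpen_compl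
      (by
        intro y hy hy'
        obtain ⟨i, hi⟩ := mem_iUnion.1 hy'
        exact Set.disjoint_left.1 (hd' i j i.2) hi hy)
    refine ⟨C, hC1, hC2, fun i hi => Set.disjoint_left.2 fun y hy hyC => ?_⟩
    exact hC3 hyC (mem_iUnion.2 ⟨⟨i, hi⟩, hy⟩)
  choose C hC1 hC2 hC3 using hC
  -- first, set of indices containing z
  let d : Z → J := fun z => if h : ∃ j, ∀ i, z ∈ C i ↔ i = j then h.choose else j₀
  have hdloc : IsLocallyConstant d := by
    have : IsLocallyConstant (fun z => fun i : J => (z ∈ C i : Prop)) := by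
      rw [IsLocallyConstant.iff_eventually_eq]
      intro z
      have : ∀ᶠ y in 𝓝 z, ∀ i, (y ∈ C i ↔ z ∈ C i) := by
        rw [eventually_all]
        intro i
        by_cases hz : z ∈ C i
        · filter_upwards [(hC1 i).isOpen.mem_nhds hz] with y hy
          simp [hy, hz]
        · filter_upwards [(hC1 i).compl.isOpen.mem_nhds hz] with y hy
          simp only [hz, iff_false]; exact hy
      filter_upwards [this] with y hy
      funext i; exact propext (hy i)
    exact this.comp (fun P : J → Prop => if h : ∃ j, ∀ i, P i ↔ i = j then h.choose else j₀)
  have hdH : ∀ j, H' j ⊆ d ⁻¹' {j} := by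
    intro j z hz
    have h0 : ∀ i, z ∈ C i ↔ i = j := by
      intro i
      constructor
      · intro hi; by_contra hij
        exact Set.disjoint_left.1 (hC3 i j (Ne.symm hij)) hz hi
      · rintro rfl; exact hC2 _ hz
    have h : ∃ j, ∀ i, z ∈ C i ↔ i = j := ⟨j, h0⟩
    have h1 : d z = h.choose := dif_pos h
    have h2 := h.choose_spec
    change d z = j
    rw [h1]
    exact (h0 _).1 ((h2 _).2 rfl)
  refine ⟨d, fun j => hdloc.isClopen_fiber j, fun j => ⟨x j, (x j).2.1, hdH j (Or.inr rfl)⟩,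
    fun j => subset_union_left.trans (hdH j)⟩
end

lemma small_partition {Z : Type*} [MetricSpace Z] [CompactSpace Z] [TotallyDisconnectedSpace Z]
    (ε : ℝ) (hε : 0 < ε) : ∃ (n : ℕ) (c : Z → (Fin n → Prop)), (∀ j, IsClopen (c ⁻¹' {j})) ∧
      ∀ x y, c x = c y → dist x y < ε := by
  have h : ∀ z : Z, ∃ C : Set Z, IsClopen C ∧ z ∈ C ∧ C ⊆ Metric.ball z (ε/2) := fun z => by
    obtain ⟨C, h1, h2, h3⟩ := compact_exists_isClopen_in_isOpen (Metric.isOpen_ball (x := z) (ε := ε/2))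
      (Metric.mem_ball_self (half_pos hε))
    exact ⟨C, h1, h2, h3⟩
  choose C h1 h2 h3 using h
  obtain ⟨t, ht⟩ := isCompact_univ.elim_finite_subcover C (fun z => (h1 z).isOpen)
    (fun z _ => mem_iUnion.2 ⟨z, h2 z⟩)
  let e := t.equivFin
  refine ⟨t.card, fun z i => z ∈ C (e.symm i), ?_, ?_⟩
  · intro j
    have : ((fun z => fun i => (z ∈ C (e.symm i) : Prop)) ⁻¹' {j} : Set Z)
        = ⋂ i, {z | z ∈ C (e.symm i) ↔ j i} := by
      ext z; simp [funext_iff]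
    rw [this]
    refine isClopen_iInter_of_finite fun i => ?_
    by_cases hj : j i
    · simpa [hj] using h1 _
    · simp only [hj, iff_false]; exact (h1 (e.symm i)).compl
  · intro x y hxy
    obtain ⟨z, hz, hxz⟩ := mem_iUnion₂.1 (ht (mem_univ x))
    have := congrFun hxy (e ⟨z, hz⟩)
    simp only [Equiv.symm_apply_apply, eq_iff_iff] at this
    have hyz := h3 _ (this.1 hxz)
    have hxz := h3 _ hxz
    rw [Metric.mem_ball] at *
    linarith [dist_triangle_right x y z]


/-- A stage of the back-and-forth construction. -/
structure St {Z Z' : Type*} [TopologicalSpace Z] [TopologicalSpace Z'] (S : Set Z) (S' : Set Z') where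
  A : Set Z
  B : Set Z'
  Γ : Set (Z × Z')
  clA : IsClopen A
  clB : IsClopen B
  neA : A.Nonempty
  neB : B.Nonempty
  clΓ : IsClosed Γ
  subA : ∀ p ∈ Γ, p.1 ∈ A
  subB : ∀ p ∈ Γ, p.2 ∈ B
  inj : ∀ p ∈ Γ, ∀ q ∈ Γ, p.1 = q.1 ↔ p.2 = q.2
  int1 : interior (Prod.fst '' Γ) = ∅
  int2 : interior (Prod.snd '' Γ) = ∅
  pres : ∀ p ∈ Γ, p.1 ∈ S ↔ p.2 ∈ S'

/-- Hypothesis: `F` embeds nicely in every clopen set of the target. -/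
def Emb {Z Z' : Type*} [TopologicalSpace Z] [TopologicalSpace Z'] (S : Set Z) (S' : Set Z')
    (F : Set Z) : Prop :=
  ∀ U : Set Z', IsClopen U → U.Nonempty → ∃ e : Z → Z', ContinuousOn e F ∧ InjOn e F ∧
    MapsTo e F U ∧ interior (e '' F) = ∅ ∧ ∀ z ∈ F, z ∈ S ↔ e z ∈ S'

lemma exists_clopen_avoid {Z : Type*} [TopologicalSpace Z] [CompactSpace Z] [T2Space Z]
    [TotallyDisconnectedSpace Z] {A F : Set Z} (hA : IsClopen A) (hne : A.Nonempty)
    (hF : IsClosed F) (hintr : interior F = ∅) :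
    ∃ U : Set Z, IsClopen U ∧ U.Nonempty ∧ U ⊆ A ∧ Disjoint U F := by
  have hne' : (A \ F).Nonempty := by
    by_contra h
    rw [not_nonempty_iff_eq_empty, sdiff_eq_empty] at h
    have := interior_maximal h hA.isOpen
    rw [hintr] at this
    exact hne.ne_empty (subset_empty_iff.1 this)
  obtain ⟨x, hx⟩ := hne'
  obtain ⟨U, h1, h2, h3⟩ := compact_exists_isClopen_in_isOpen (hA.isOpen.sdiff hF) hx
  exact ⟨U, h1, ⟨x, h2⟩, fun y hy => (h3 hy).1, Set.disjoint_left.2 fun y hy => (h3 hy).2⟩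

lemma new_state {Z Z' : Type*} [TopologicalSpace Z] [CompactSpace Z] [T2Space Z]
    [TotallyDisconnectedSpace Z] [TopologicalSpace Z'] [CompactSpace Z'] [T2Space Z']
    [TotallyDisconnectedSpace Z'] {S : Set Z} {S' : Set Z'} {F : Set Z} {F' : Set Z'}
    (hF : IsClosed F) (hF' : IsClosed F') (hi : interior F = ∅) (hi' : interior F' = ∅)
    (hE : Emb S S' F) (hE' : Emb S' S F') (A : Set Z) (B : Set Z') (hA : IsClopen A)
    (hB : IsClopen B) (neA : A.Nonempty) (neB : B.Nonempty) :
    ∃ s : St S S', s.A = A ∧ s.B = B ∧ (∀ z ∈ F, z ∈ A → ∃ p ∈ s.Γ, p.1 = z) ∧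
      (∀ z ∈ F', z ∈ B → ∃ p ∈ s.Γ, p.2 = z) := by
  obtain ⟨U, hU, Une, UA, UF⟩ := exists_clopen_avoid hA neA hF hi
  obtain ⟨U', hU', Une', UB', UF'⟩ := exists_clopen_avoid hB neB hF' hi'
  obtain ⟨e, ec, einj, emap, eint, epres⟩ := hE U' hU' Une'
  obtain ⟨ebk, ec', einj', emap', eint', epres'⟩ := hE' U hU Une
  have c1 : IsCompact (F ∩ A) := (hF.inter hA.isClosed).isCompact
  have c2 : IsCompact (F' ∩ B) := (hF'.inter hB.isClosed).isCompact
  have d1 : ContinuousOn e (F ∩ A) := ec.mono inter_subset_left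
  have d2 : ContinuousOn ebk (F' ∩ B) := ec'.mono inter_subset_left
  let Γ : Set (Z × Z') := (fun z => (z, e z)) '' (F ∩ A) ∪ (fun z => (ebk z, z)) '' (F' ∩ B)
  have f1 : Prod.fst '' Γ = (F ∩ A) ∪ ebk '' (F' ∩ B) := by
    simp only [Γ, image_union, image_image, image_id']
  have f2 : Prod.snd '' Γ = (F' ∩ B) ∪ e '' (F ∩ A) := by
    simp only [Γ, image_union, image_image, image_id']
    rw [union_comm]
  refine ⟨⟨A, B, Γ, hA, hB, neA, neB, ?_, ?_, ?_, ?_, ?_, ?_, ?_⟩, rfl, rfl, ?_, ?_⟩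
  · exact (c1.image_of_continuousOn (continuousOn_id.prodMk d1)).isClosed.union
      (c2.image_of_continuousOn (d2.prodMk continuousOn_id)).isClosed
  · rintro _ (⟨z, hz, rfl⟩ | ⟨z, hz, rfl⟩)
    · exact hz.2
    · exact UA (emap' hz.1)
  · rintro _ (⟨z, hz, rfl⟩ | ⟨z, hz, rfl⟩)
    · exact UB' (emap hz.1)
    · exact hz.2
  · rintro _ (⟨z, hz, rfl⟩ | ⟨z, hz, rfl⟩) _ (⟨w, hw, rfl⟩ | ⟨w, hw, rfl⟩)
    · exact ⟨fun h => congrArg e h, fun h => einj hz.1 hw.1 h⟩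
    · refine ⟨fun h => ?_, fun h => ?_⟩
      · exact (Set.disjoint_left.1 UF (emap' hw.1) ((show z = ebk w from h) ▸ hz.1)).elim
      · exact (Set.disjoint_left.1 UF' (emap hz.1) ((show e z = w from h) ▸ hw.1)).elim
    · refine ⟨fun h => ?_, fun h => ?_⟩
      · exact (Set.disjoint_left.1 UF (emap' hz.1) ((show ebk z = w from h) ▸ hw.1)).elim
      · exact (Set.disjoint_left.1 UF' (emap hw.1) ((show z = e w from h) ▸ hz.1)).elim
    · exact ⟨fun h => einj' hz.1 hw.1 h, fun h => congrArg ebk h⟩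
  · rw [f1, interior_union_isClosed_of_interior_empty c1.isClosed
      (int_small (image_mono inter_subset_left) eint')]
    exact int_small inter_subset_left hi
  · rw [f2, interior_union_isClosed_of_interior_empty c2.isClosed
      (int_small (image_mono inter_subset_left) eint)]
    exact int_small inter_subset_left hi'
  · rintro _ (⟨z, hz, rfl⟩ | ⟨z, hz, rfl⟩)
    · exact epres z hz.1
    · exact (epres' z hz.1).symm
  · intro z hz hzA
    exact ⟨_, Or.inl ⟨z, ⟨hz, hzA⟩, rfl⟩, rfl⟩
  · intro z hz hzB
    exact ⟨_, Or.inr ⟨z, ⟨hz, hzB⟩, rfl⟩, rfl⟩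

/-- What a refinement step has to deliver. -/
structure StepOK {Z Z' : Type*} [MetricSpace Z] [MetricSpace Z'] {S : Set Z} {S' : Set Z'}
    (F : Set Z) (F' : Set Z') (ε : ℝ) (s : St S S') (C : Set (St S S')) : Prop where
  subA : ∀ c ∈ C, c.A ⊆ s.A
  subB : ∀ c ∈ C, c.B ⊆ s.B
  exA : ∀ z ∈ s.A, ∃ c ∈ C, z ∈ c.A
  exB : ∀ z ∈ s.B, ∃ c ∈ C, z ∈ c.B
  uniA : ∀ c ∈ C, ∀ c' ∈ C, ∀ z, z ∈ c.A → z ∈ c'.A → c = c'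
  uniB : ∀ c ∈ C, ∀ c' ∈ C, ∀ z, z ∈ c.B → z ∈ c'.B → c = c'
  smallA : ∀ c ∈ C, ∀ x ∈ c.A, ∀ y ∈ c.A, dist x y < ε
  smallB : ∀ c ∈ C, ∀ x ∈ c.B, ∀ y ∈ c.B, dist x y < ε
  alt : ∀ c ∈ C, (c.Γ.Nonempty ∧ c.Γ ⊆ s.Γ) ∨
    ((∀ z ∈ F, z ∈ c.A → ∃ p ∈ c.Γ, p.1 = z) ∧ (∀ z ∈ F', z ∈ c.B → ∃ p ∈ c.Γ, p.2 = z))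
  cov : ∀ p ∈ s.Γ, ∃ c ∈ C, p ∈ c.Γ

lemma step {Z Z' : Type*} [MetricSpace Z] [CompactSpace Z]
    [TotallyDisconnectedSpace Z] [MetricSpace Z'] [CompactSpace Z']
    [TotallyDisconnectedSpace Z'] {S : Set Z} {S' : Set Z'} {F : Set Z} {F' : Set Z'}
    (hperf : ∀ x : Z, ¬ IsOpen ({x} : Set Z)) (hperf' : ∀ x : Z', ¬ IsOpen ({x} : Set Z'))
    (hF : IsClosed F) (hF' : IsClosed F') (hi : interior F = ∅) (hi' : interior F' = ∅)
    (hE : Emb S S' F) (hE' : Emb S' S F') (ε : ℝ) (hε : 0 < ε) (s : St S S') :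
    ∃ C : Set (St S S'), StepOK F F' ε s C := by
  classical
  obtain ⟨n, c, hc, hcε⟩ := small_partition (Z := Z) ε hε
  obtain ⟨n', c', hc', hcε'⟩ := small_partition (Z := Z') ε hε
  let J := {j // (s.A ∩ c ⁻¹' {j}).Nonempty}
  let K := {j // (s.B ∩ c' ⁻¹' {j}).Nonempty}
  obtain ⟨a₀, ha₀⟩ := s.neA
  obtain ⟨b₀, hb₀⟩ := s.neB
  let j₀ : J := ⟨c a₀, a₀, ha₀, rfl⟩
  let k₀ : K := ⟨c' b₀, b₀, hb₀, rfl⟩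
  let Γ : J → K → Set (Z × Z') := fun j k => s.Γ ∩ {p | c p.1 = j ∧ c' p.2 = k}
  have hΓ : ∀ j k, IsClosed (Γ j k) := fun j k =>
    s.clΓ.inter (((hc j).isClosed.preimage continuous_fst).inter
      ((hc' k).isClosed.preimage continuous_snd))
  have hd : ∀ j : J, ∃ d : Z → K, (∀ k, IsClopen (d ⁻¹' {k})) ∧
      (∀ k, ((s.A ∩ c ⁻¹' {j.1}) ∩ d ⁻¹' {k}).Nonempty) ∧ ∀ k, Prod.fst '' (Γ j k) ⊆ d ⁻¹' {k} := by
    intro j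
    refine partition_ext hperf (s.A ∩ c ⁻¹' {j.1}) (s.clA.inter (hc j)) j.2 k₀
      (fun k => Prod.fst '' (Γ j k)) (fun k => ((hΓ j k).isCompact.image continuous_fst).isClosed)
      ?_ ?_
    · intro k k' hkk
      rw [Set.disjoint_left]
      rintro _ ⟨p, hp, rfl⟩ ⟨q, hq, hqp⟩
      have := (s.inj q hq.1 p hp.1).1 hqp
      exact hkk (Subtype.ext (hp.2.2.symm.trans ((congrArg c' this).symm.trans hq.2.2)))
    · refine int_small ?_ s.int1
      rintro z hz
      obtain ⟨k, p, hp, rfl⟩ := mem_iUnion.1 hz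
      exact ⟨p, hp.1, rfl⟩
  have hd' : ∀ k : K, ∃ d : Z' → J, (∀ j, IsClopen (d ⁻¹' {j})) ∧
      (∀ j, ((s.B ∩ c' ⁻¹' {k.1}) ∩ d ⁻¹' {j}).Nonempty) ∧
        ∀ j, Prod.snd '' (Γ j k) ⊆ d ⁻¹' {j} := by
    intro k
    refine partition_ext hperf' (s.B ∩ c' ⁻¹' {k.1}) (s.clB.inter (hc' k)) k.2 j₀
      (fun j => Prod.snd '' (Γ j k)) (fun j => ((hΓ j k).isCompact.image continuous_snd).isClosed)
      ?_ ?_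
    · intro j j' hjj
      rw [Set.disjoint_left]
      rintro _ ⟨p, hp, rfl⟩ ⟨q, hq, hqp⟩
      have := (s.inj q hq.1 p hp.1).2 hqp
      exact hjj (Subtype.ext (hp.2.1.symm.trans ((congrArg c this).symm.trans hq.2.1)))
    · refine int_small ?_ s.int2
      rintro z hz
      obtain ⟨k, p, hp, rfl⟩ := mem_iUnion.1 hz
      exact ⟨p, hp.1, rfl⟩
  choose d d1 d2 d3 using hd
  choose d' d1' d2' d3' using hd'
  have key : ∀ q : J × K, ∃ t : St S S', t.A = (s.A ∩ c ⁻¹' {q.1.1}) ∩ d q.1 ⁻¹' {q.2} ∧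
      t.B = (s.B ∩ c' ⁻¹' {q.2.1}) ∩ d' q.2 ⁻¹' {q.1} ∧
      Γ q.1 q.2 ⊆ t.Γ ∧
      ((t.Γ.Nonempty ∧ t.Γ ⊆ s.Γ) ∨ ((∀ z ∈ F, z ∈ t.A → ∃ p ∈ t.Γ, p.1 = z) ∧
        (∀ z ∈ F', z ∈ t.B → ∃ p ∈ t.Γ, p.2 = z))) := by
    rintro ⟨j, k⟩
    have cl1 := (s.clA.inter (hc j)).inter (d1 j k)
    have cl2 := (s.clB.inter (hc' k)).inter (d1' k j)
    rcases (Γ j k).eq_empty_or_nonempty with h | h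
    · obtain ⟨t, ht1, ht2, ht3, ht4⟩ := new_state hF hF' hi hi' hE hE' _ _ cl1 cl2 (d2 j k) (d2' k j)
      refine ⟨t, ht1, ht2, ?_, Or.inr ⟨?_, ?_⟩⟩
      · change Γ j k ⊆ _
        rw [h]; exact empty_subset _
      · rw [ht1]; exact ht3
      · rw [ht2]; exact ht4
    · refine ⟨⟨_, _, Γ j k, cl1, cl2, d2 j k, d2' k j, hΓ j k, ?_, ?_, ?_, ?_, ?_, ?_⟩,
        rfl, rfl, Subset.rfl, Or.inl ⟨h, inter_subset_left⟩⟩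
      · intro p hp
        exact ⟨⟨s.subA p hp.1, hp.2.1⟩, d3 j k ⟨p, hp, rfl⟩⟩
      · intro p hp
        exact ⟨⟨s.subB p hp.1, hp.2.2⟩, d3' k j ⟨p, hp, rfl⟩⟩
      · intro p hp q hq
        exact s.inj p hp.1 q hq.1
      · exact int_small (image_mono inter_subset_left) s.int1
      · exact int_small (image_mono inter_subset_left) s.int2
      · intro p hp
        exact s.pres p hp.1
  choose t tA tB tΓ talt using key
  refine ⟨range t, ?_, ?_, ?_, ?_, ?_, ?_, ?_, ?_, ?_, ?_⟩
  · rintro _ ⟨q, rfl⟩ z hz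
    rw [tA] at hz; exact hz.1.1
  · rintro _ ⟨q, rfl⟩ z hz
    rw [tB] at hz; exact hz.1.1
  · intro z hz
    refine ⟨_, ⟨(⟨c z, z, hz, rfl⟩, d ⟨c z, z, hz, rfl⟩ z), rfl⟩, ?_⟩
    rw [tA]; exact ⟨⟨hz, rfl⟩, rfl⟩
  · intro z hz
    refine ⟨_, ⟨(d' ⟨c' z, z, hz, rfl⟩ z, ⟨c' z, z, hz, rfl⟩), rfl⟩, ?_⟩
    rw [tB]; exact ⟨⟨hz, rfl⟩, rfl⟩
  · rintro _ ⟨⟨j, k⟩, rfl⟩ _ ⟨⟨j', k'⟩, rfl⟩ z h h'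
    rw [tA] at h h'
    have : j = j' := Subtype.ext (h.1.2.symm.trans h'.1.2)
    subst this
    have : k = k' := h.2.symm.trans h'.2
    rw [this]
  · rintro _ ⟨⟨j, k⟩, rfl⟩ _ ⟨⟨j', k'⟩, rfl⟩ z h h'
    rw [tB] at h h'
    have : k = k' := Subtype.ext (h.1.2.symm.trans h'.1.2)
    subst this
    have : j = j' := h.2.symm.trans h'.2
    rw [this]
  · rintro _ ⟨q, rfl⟩ x hx y hy
    rw [tA] at hx hy
    exact hcε _ _ (hx.1.2.trans hy.1.2.symm)
  · rintro _ ⟨q, rfl⟩ x hx y hy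
    rw [tB] at hx hy
    exact hcε' _ _ (hx.1.2.trans hy.1.2.symm)
  · rintro _ ⟨q, rfl⟩
    exact talt q
  · intro p hp
    exact ⟨_, ⟨(⟨c p.1, p.1, s.subA p hp, rfl⟩, ⟨c' p.2, p.2, s.subB p hp, rfl⟩), rfl⟩,
      tΓ _ ⟨hp, rfl, rfl⟩⟩


section main
variable {Z Z' : Type*} [MetricSpace Z] [CompactSpace Z]
    [TotallyDisconnectedSpace Z] [MetricSpace Z'] [CompactSpace Z']
    [TotallyDisconnectedSpace Z'] {S : Set Z} {S' : Set Z'}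

/-- A branch of the tree of stages. -/
def IsPath (root : St S S') (stp : ℕ → St S S' → Set (St S S')) (s : ℕ → St S S') : Prop :=
  s 0 = root ∧ ∀ n, s (n + 1) ∈ stp n (s n)

variable {F : ℕ → Set Z} {F' : ℕ → Set Z'} {root : St S S'} {stp : ℕ → St S S' → Set (St S S')}

lemma path_exA (hst : ∀ n s, StepOK (F n) (F' n) (1 / ((n : ℝ) + 1)) s (stp n s)) {z : Z}
    (hz : z ∈ root.A) : ∃ s, IsPath root stp s ∧ ∀ n, z ∈ (s n).A := by
  have h : ∀ n (t : {t : St S S' // z ∈ t.A}), ∃ t' : {t : St S S' // z ∈ t.A}, t'.1 ∈ stp n t.1 := by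
    rintro n ⟨t, ht⟩
    obtain ⟨c, hc, hzc⟩ := (hst n t).exA z ht
    exact ⟨⟨c, hzc⟩, hc⟩
  choose nx hnx using h
  let s : ℕ → {t : St S S' // z ∈ t.A} := fun n => Nat.rec ⟨root, hz⟩ (fun n t => nx n t) n
  exact ⟨fun n => (s n).1, ⟨rfl, fun n => hnx n (s n)⟩, fun n => (s n).2⟩

lemma path_exB (hst : ∀ n s, StepOK (F n) (F' n) (1 / ((n : ℝ) + 1)) s (stp n s)) {z : Z'}
    (hz : z ∈ root.B) : ∃ s, IsPath root stp s ∧ ∀ n, z ∈ (s n).B := by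
  have h : ∀ n (t : {t : St S S' // z ∈ t.B}), ∃ t' : {t : St S S' // z ∈ t.B}, t'.1 ∈ stp n t.1 := by
    rintro n ⟨t, ht⟩
    obtain ⟨c, hc, hzc⟩ := (hst n t).exB z ht
    exact ⟨⟨c, hzc⟩, hc⟩
  choose nx hnx using h
  let s : ℕ → {t : St S S' // z ∈ t.B} := fun n => Nat.rec ⟨root, hz⟩ (fun n t => nx n t) n
  exact ⟨fun n => (s n).1, ⟨rfl, fun n => hnx n (s n)⟩, fun n => (s n).2⟩

lemma path_uniA (hst : ∀ n s, StepOK (F n) (F' n) (1 / ((n : ℝ) + 1)) s (stp n s)) {z : Z}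
    {s s' : ℕ → St S S'} (hs : IsPath root stp s) (hs' : IsPath root stp s') (n : ℕ)
    (h : z ∈ (s n).A) (h' : z ∈ (s' n).A) : s n = s' n := by
  induction n with
  | zero => rw [hs.1, hs'.1]
  | succ n ih =>
    have e := ih ((hst n _).subA _ (hs.2 n) h) ((hst n _).subA _ (hs'.2 n) h')
    exact (hst n (s n)).uniA _ (hs.2 n) _ (e ▸ hs'.2 n) z h h'

lemma path_uniB (hst : ∀ n s, StepOK (F n) (F' n) (1 / ((n : ℝ) + 1)) s (stp n s)) {z : Z'}
    {s s' : ℕ → St S S'} (hs : IsPath root stp s) (hs' : IsPath root stp s') (n : ℕ)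
    (h : z ∈ (s n).B) (h' : z ∈ (s' n).B) : s n = s' n := by
  induction n with
  | zero => rw [hs.1, hs'.1]
  | succ n ih =>
    have e := ih ((hst n _).subB _ (hs.2 n) h) ((hst n _).subB _ (hs'.2 n) h')
    exact (hst n (s n)).uniB _ (hs.2 n) _ (e ▸ hs'.2 n) z h h'

lemma eq_of_small {Y : Type*} [MetricSpace Y] {x y : Y}
    (h : ∀ n : ℕ, dist x y < 1 / ((n : ℝ) + 1)) : x = y := by
  by_contra hne
  obtain ⟨n, hn⟩ := exists_nat_one_div_lt (dist_pos.2 hne)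
  exact lt_asymm hn (h n)

lemma path_eqA (hst : ∀ n s, StepOK (F n) (F' n) (1 / ((n : ℝ) + 1)) s (stp n s)) {x y : Z}
    {s : ℕ → St S S'} (hs : IsPath root stp s) (N : ℕ)
    (h : ∀ n ≥ N, x ∈ (s n).A) (h' : ∀ n ≥ N, y ∈ (s n).A) : x = y := by
  have anti : Antitone (fun n => (s n).A) := antitone_nat_of_succ_le
    fun n => (hst n _).subA _ (hs.2 n)
  have up : ∀ z : Z, (∀ n ≥ N, z ∈ (s n).A) → ∀ n, z ∈ (s n).A := fun z hz n =>
    anti (le_max_left n N) (hz _ (le_max_right n N))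
  exact eq_of_small fun n => (hst n _).smallA _ (hs.2 n) x (up x h _) y (up y h' _)

lemma path_eqB (hst : ∀ n s, StepOK (F n) (F' n) (1 / ((n : ℝ) + 1)) s (stp n s)) {x y : Z'}
    {s : ℕ → St S S'} (hs : IsPath root stp s) (N : ℕ)
    (h : ∀ n ≥ N, x ∈ (s n).B) (h' : ∀ n ≥ N, y ∈ (s n).B) : x = y := by
  have anti : Antitone (fun n => (s n).B) := antitone_nat_of_succ_le
    fun n => (hst n _).subB _ (hs.2 n)
  have up : ∀ z : Z', (∀ n ≥ N, z ∈ (s n).B) → ∀ n, z ∈ (s n).B := fun z hz n =>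
    anti (le_max_left n N) (hz _ (le_max_right n N))
  exact eq_of_small fun n => (hst n _).smallB _ (hs.2 n) x (up x h _) y (up y h' _)

lemma path_pres (hst : ∀ n s, StepOK (F n) (F' n) (1 / ((n : ℝ) + 1)) s (stp n s)) {x : Z} {y : Z'}
    {s : ℕ → St S S'} (hs : IsPath root stp s)
    (hx : ∀ n, x ∈ (s n).A) (hy : ∀ n, y ∈ (s n).B) (N : ℕ)
    (hF : ∀ m ≥ N, x ∈ F m ∨ y ∈ F' m) : x ∈ S ↔ y ∈ S' := by
  by_cases hcase : ∃ m ≥ N, ∃ p ∈ (s (m + 1)).Γ, p.1 = x ∨ p.2 = y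
  · obtain ⟨m, hm, p, hp, hpxy⟩ := hcase
    have pers : ∀ k ≥ m + 1, p ∈ (s k).Γ := by
      intro k hk
      induction k, hk using Nat.le_induction with
      | base => exact hp
      | succ k hk ih =>
        obtain ⟨c, hc, hpc⟩ := (hst k (s k)).cov p ih
        have : c = s (k + 1) := by
          rcases hpxy with h | h
          · exact (hst k (s k)).uniA _ hc _ (hs.2 k) x (h ▸ c.subA p hpc) (hx _)
          · exact (hst k (s k)).uniB _ hc _ (hs.2 k) y (h ▸ c.subB p hpc) (hy _)
        rw [← this]; exact hpc
    have e1 : p.1 = x := path_eqA hst hs (m + 1) (fun k hk => (s k).subA p (pers k hk)) fun k _ => hx k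
    have e2 : p.2 = y := path_eqB hst hs (m + 1) (fun k hk => (s k).subB p (pers k hk)) fun k _ => hy k
    have := (s (m + 1)).pres p hp
    rwa [e1, e2] at this
  · have hchild : ∀ m ≥ N, (s (m + 1)).Γ.Nonempty ∧ (s (m + 1)).Γ ⊆ (s m).Γ := by
      intro m hm
      rcases (hst m (s m)).alt _ (hs.2 m) with h | ⟨h1, h2⟩
      · exact h
      · exfalso
        apply hcase
        rcases hF m hm with h | h
        · obtain ⟨p, hp, e⟩ := h1 x h (hx _)
          exact ⟨m, hm, p, hp, Or.inl e⟩
        · obtain ⟨p, hp, e⟩ := h2 y h (hy _)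
          exact ⟨m, hm, p, hp, Or.inr e⟩
    have hsub : ∀ m ≥ N, (s m).Γ ⊆ (s N).Γ := by
      intro m hm
      induction m, hm using Nat.le_induction with
      | base => exact Subset.rfl
      | succ k hk ih => exact (hchild k hk).2.trans ih
    have : (x, y) ∈ (s N).Γ := by
      rw [← (s N).clΓ.closure_eq, Metric.mem_closure_iff]
      intro ε hε
      obtain ⟨n, hn⟩ := exists_nat_one_div_lt hε
      let m := max n N
      have hmN : m ≥ N := le_max_right _ _
      obtain ⟨p, hp⟩ := (hchild m hmN).1
      refine ⟨p, hsub (m + 1) (by omega) hp, ?_⟩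
      have hm : 1 / ((m : ℝ) + 1) ≤ 1 / ((n : ℝ) + 1) :=
        Nat.one_div_le_one_div (le_max_left _ _)
      have h1 := (hst m _).smallA _ (hs.2 m) x (hx _) p.1 ((s (m + 1)).subA p hp)
      have h2 := (hst m _).smallB _ (hs.2 m) y (hy _) p.2 ((s (m + 1)).subB p hp)
      rw [Prod.dist_eq]
      exact max_lt (by linarith) (by linarith)
    exact (s N).pres _ this

theorem main_homeo (hperf : ∀ x : Z, ¬ IsOpen ({x} : Set Z))
    (hperf' : ∀ x : Z', ¬ IsOpen ({x} : Set Z')) [Nonempty Z] [Nonempty Z']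
    (hF : ∀ n, IsClosed (F n)) (hF' : ∀ n, IsClosed (F' n))
    (hi : ∀ n, interior (F n) = ∅) (hi' : ∀ n, interior (F' n) = ∅)
    (hE : ∀ n, Emb S S' (F n)) (hE' : ∀ n, Emb S' S (F' n))
    (hm : Monotone F) (hm' : Monotone F') (hS : Sᶜ ⊆ ⋃ n, F n) (hS' : S'ᶜ ⊆ ⋃ n, F' n) :
    ∃ f : Z ≃ₜ Z', ∀ z, z ∈ S ↔ f z ∈ S' := by
  have hstep : ∀ (n : ℕ) (s : St S S'), ∃ C, StepOK (F n) (F' n) (1 / ((n : ℝ) + 1)) s C :=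
    fun n s => step hperf hperf' (hF n) (hF' n) (hi n) (hi' n) (hE n) (hE' n) _
      (by positivity) s
  choose stp hst using hstep
  let root : St S S' := ⟨univ, univ, ∅, isClopen_univ, isClopen_univ, univ_nonempty, univ_nonempty,
    isClosed_empty, by simp, by simp, by simp, by simp, by simp, by simp⟩
  have hf : ∀ z : Z, ∃ y : Z', ∃ s, IsPath root stp s ∧ (∀ n, z ∈ (s n).A) ∧ ∀ n, y ∈ (s n).B := by
    intro z
    obtain ⟨s, hs, hz⟩ := path_exA (root := root) hst (mem_univ z)
    obtain ⟨y, hy⟩ := IsCompact.nonempty_iInter_of_sequence_nonempty_isCompact_isClosed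
      (fun n => (s n).B) (fun n => (hst n _).subB _ (hs.2 n)) (fun n => (s n).neB)
      (s 0).clB.isClosed.isCompact (fun n => (s n).clB.isClosed)
    exact ⟨y, s, hs, hz, fun n => mem_iInter.1 hy n⟩
  have hg : ∀ y : Z', ∃ z : Z, ∃ s, IsPath root stp s ∧ (∀ n, z ∈ (s n).A) ∧ ∀ n, y ∈ (s n).B := by
    intro z
    obtain ⟨s, hs, hz⟩ := path_exB (root := root) hst (mem_univ z)
    obtain ⟨y, hy⟩ := IsCompact.nonempty_iInter_of_sequence_nonempty_isCompact_isClosed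
      (fun n => (s n).A) (fun n => (hst n _).subA _ (hs.2 n)) (fun n => (s n).neA)
      (s 0).clA.isClosed.isCompact (fun n => (s n).clA.isClosed)
    exact ⟨y, s, hs, fun n => mem_iInter.1 hy n, hz⟩
  choose f sf hsf hfA hfB using hf
  choose g sg hsg hgA hgB using hg
  have hgf : Function.LeftInverse g f := by
    intro z
    refine path_eqA hst (hsf z) 0 (fun n _ => ?_) (fun n _ => hfA z n)
    rw [path_uniB hst (hsf z) (hsg (f z)) n (hfB z n) (hgB (f z) n)]
    exact hgA (f z) n
  have hfg : Function.RightInverse g f := by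
    intro y
    refine path_eqB hst (hsg y) 0 (fun n _ => ?_) (fun n _ => hgB y n)
    rw [path_uniA hst (hsg y) (hsf (g y)) n (hgA y n) (hfA (g y) n)]
    exact hfB (g y) n
  have hcont : Continuous f := by
    rw [Metric.continuous_iff']
    intro z ε hε
    obtain ⟨n, hn⟩ := exists_nat_one_div_lt hε
    filter_upwards [(sf z (n + 1)).clA.isOpen.mem_nhds (hfA z (n + 1))] with w hw
    have e := path_uniA hst (hsf w) (hsf z) (n + 1) (hfA w _) hw
    exact ((hst n _).smallB _ ((hsf z).2 n) _ (e ▸ hfB w (n + 1)) _ (hfB z _)).trans hn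
  let E : Z ≃ Z' := ⟨f, g, hgf, hfg⟩
  refine ⟨Continuous.homeoOfEquivCompactToT2 (f := E) hcont, fun z => ?_⟩
  change z ∈ S ↔ f z ∈ S'
  by_cases h : z ∈ S
  · by_cases h' : f z ∈ S'
    · simp [h, h']
    · obtain ⟨N, hN⟩ := mem_iUnion.1 (hS' h')
      exact path_pres hst (hsf z) (hfA z) (hfB z) N fun m hmN => Or.inr (hm' hmN hN)
  · obtain ⟨N, hN⟩ := mem_iUnion.1 (hS h)
    exact path_pres hst (hsf z) (hfA z) (hfB z) N fun m hmN => Or.inl (hm hmN hN)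
end main


lemma cantor_homeo {Z Z' : Type*} [TopologicalSpace Z] [TopologicalSpace.MetrizableSpace Z]
    [CompactSpace Z] [TotallyDisconnectedSpace Z] [TopologicalSpace Z']
    [TopologicalSpace.MetrizableSpace Z'] [CompactSpace Z'] [TotallyDisconnectedSpace Z']
    (hperf : ∀ x : Z, ¬ IsOpen ({x} : Set Z))
    (hperf' : ∀ x : Z', ¬ IsOpen ({x} : Set Z')) [Nonempty Z] [Nonempty Z'] :
    Nonempty (Z ≃ₜ Z') := by
  letI := TopologicalSpace.metrizableSpaceMetric Z
  letI := TopologicalSpace.metrizableSpaceMetric Z'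
  have h1 : Emb (univ : Set Z) (univ : Set Z') ∅ := fun U _ hU =>
    ⟨fun _ => hU.some, by simp, by simp, by simp [MapsTo], by simp, by simp⟩
  have h2 : Emb (univ : Set Z') (univ : Set Z) ∅ := fun U _ hU =>
    ⟨fun _ => hU.some, by simp, by simp, by simp [MapsTo], by simp, by simp⟩
  obtain ⟨f, -⟩ := main_homeo (S := (univ : Set Z)) (S' := (univ : Set Z')) (F := fun _ => ∅)
    (F' := fun _ => ∅) hperf hperf'
    (by simp) (by simp) (by simp) (by simp) (fun _ => h1) (fun _ => h2) monotone_const monotone_const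
    (by simp) (by simp)
  exact ⟨f⟩

lemma clopen_homeo {Z Z' : Type*} [TopologicalSpace Z] [TopologicalSpace.MetrizableSpace Z]
    [CompactSpace Z] [TotallyDisconnectedSpace Z] [TopologicalSpace Z']
    [TopologicalSpace.MetrizableSpace Z'] [CompactSpace Z'] [TotallyDisconnectedSpace Z']
    (hperf : ∀ x : Z, ¬ IsOpen ({x} : Set Z)) [Nonempty Z'] {P : Set Z} {F : ℕ → Set Z}
    (hF : ∀ n, IsClosed (F n)) (hi : ∀ n, interior (F n) = ∅) (hm : Monotone F)
    (hP : Pᶜ ⊆ ⋃ n, F n)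
    (hemb : ∀ W : Set Z, IsClopen W → W.Nonempty → ∃ e : Z → Z, Continuous e ∧
      Function.Injective e ∧ (∀ z, e z ∈ W) ∧ interior (range e) = ∅ ∧ ∀ z, z ∈ P ↔ e z ∈ P)
    (q : Z' → Z) (hq : IsClosedEmbedding q) (hqo : IsOpenMap q) :
    ∃ ψ : Z ≃ₜ Z', ∀ z, z ∈ P ↔ q (ψ z) ∈ P := by
  letI := TopologicalSpace.metrizableSpaceMetric Z
  letI := TopologicalSpace.metrizableSpaceMetric Z'
  haveI : Nonempty Z := ⟨q (Classical.arbitrary Z')⟩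
  have hE : ∀ n, Emb P (q ⁻¹' P) (F n) := by
    intro n W' hW' hne
    obtain ⟨e, ec, ei, eW, eint, eP⟩ := hemb (q '' W')
      ⟨hq.isClosedMap _ hW'.isClosed, hqo _ hW'.isOpen⟩ (hne.image q)
    choose ebk he' hqe using eW
    have hcomp : q ∘ ebk = e := funext hqe
    refine ⟨ebk, ?_, ?_, fun z _ => he' z, ?_, ?_⟩
    · refine Continuous.continuousOn ?_
      rw [hq.isInducing.continuous_iff, hcomp]; exact ec
    · intro a _ b _ hab
      apply ei
      rw [← hqe a, ← hqe b, hab]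
    · have h1 : q '' interior (ebk '' F n) ⊆ interior (range e) := by
        refine interior_maximal ?_ (hqo _ isOpen_interior)
        rintro _ ⟨y, hy, rfl⟩
        obtain ⟨z, -, rfl⟩ := interior_subset hy
        exact ⟨z, (hqe z).symm⟩
      rw [eint, subset_empty_iff, image_eq_empty] at h1
      exact h1
    · intro z _
      rw [eP z, mem_preimage, hqe]
  have hE' : ∀ n, Emb (q ⁻¹' P) P (q ⁻¹' F n) := by
    intro n W hW hne
    obtain ⟨e, ec, ei, eW, eint, eP⟩ := hemb W hW hne
    refine ⟨e ∘ q, (ec.comp hq.continuous).continuousOn, (ei.comp hq.injective).injOn,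
      fun z _ => eW _, int_small ?_ eint, fun z _ => eP _⟩
    rintro _ ⟨z, -, rfl⟩
    exact ⟨q z, rfl⟩
  have hi' : ∀ n, interior (q ⁻¹' F n) = ∅ := by
    intro n
    have h1 : q '' interior (q ⁻¹' F n) ⊆ interior (F n) := by
      refine interior_maximal ?_ (hqo _ isOpen_interior)
      rintro _ ⟨y, hy, rfl⟩
      exact (interior_subset hy : _)
    rw [hi n, subset_empty_iff, image_eq_empty] at h1
    exact h1
  refine main_homeo (S := P) (S' := q ⁻¹' P) (F := F) (F' := fun n => q ⁻¹' F n) hperf ?_ hF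
    (fun n => (hF n).preimage hq.continuous) hi hi' hE hE' hm
    (fun a b hab => preimage_mono (hm hab)) hP ?_
  · intro y hy
    have := hqo _ hy
    rw [image_singleton] at this
    exact hperf _ this
  · rw [← preimage_iUnion, ← preimage_compl]
    exact preimage_mono hP

lemma gdelta_of_polish {G Y : Type*} [TopologicalSpace G] [PolishSpace G] [TopologicalSpace Y]
    [T2Space Y] (j : G → Y) (hj : IsEmbedding j) (hd : DenseRange j) :
    ∃ O : ℕ → Set Y, (∀ n, IsOpen (O n)) ∧ range j = ⋂ n, O n := by
  letI := TopologicalSpace.upgradeIsCompletelyMetrizable G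
  let O : ℕ → Set Y := fun n => ⋃₀ {V | IsOpen V ∧
    ∀ a b, j a ∈ V → j b ∈ V → dist a b < 1 / ((n : ℝ) + 1)}
  refine ⟨O, fun n => isOpen_sUnion fun V hV => hV.1, Subset.antisymm ?_ ?_⟩
  · rintro _ ⟨a, rfl⟩
    refine mem_iInter.2 fun n => ?_
    have hpos : (0 : ℝ) < 1 / ((n : ℝ) + 1) / 2 := by positivity
    obtain ⟨V, hV, hVe⟩ := hj.isInducing.isOpen_iff.1
      (Metric.isOpen_ball (x := a) (ε := 1 / ((n : ℝ) + 1) / 2))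
    refine ⟨V, ⟨hV, fun b c hb hc => ?_⟩, ?_⟩
    · have hb' : b ∈ j ⁻¹' V := hb
      have hc' : c ∈ j ⁻¹' V := hc
      rw [hVe, Metric.mem_ball] at hb' hc'
      linarith [dist_triangle_right b c a]
    · change a ∈ j ⁻¹' V
      rw [hVe]; exact Metric.mem_ball_self hpos
  · intro y hy
    have hne : (comap j (𝓝 y)).NeBot := by
      refine comap_neBot_iff.2 fun t ht => ?_
      obtain ⟨_, hy1, a, rfl⟩ := mem_closure_iff_nhds.1 (hd y) t ht
      exact ⟨a, hy1⟩
    have hc : Cauchy (comap j (𝓝 y)) := by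
      rw [Metric.cauchy_iff]
      refine ⟨hne, fun ε hε => ?_⟩
      obtain ⟨n, hn⟩ := exists_nat_one_div_lt hε
      obtain ⟨V, ⟨hV, hVs⟩, hyV⟩ := mem_iInter.1 hy n
      exact ⟨j ⁻¹' V, preimage_mem_comap (hV.mem_nhds hyV), fun a ha b hb => (hVs a b ha hb).trans hn⟩
    obtain ⟨a, ha⟩ := CompleteSpace.complete hc
    refine ⟨a, tendsto_nhds_unique (f := j) (l := comap j (𝓝 y)) ?_ tendsto_comap⟩
    exact (hj.continuous.tendsto a).mono_left ha

lemma tendsto_update {K : Type*} [TopologicalSpace K] (x : ℕ → K) (v : ℕ → K) (m : ℕ → ℕ)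
    (hm : ∀ k, k ≤ m k) : Tendsto (fun k => Function.update x (m k) (v k)) atTop (𝓝 x) := by
  rw [tendsto_pi_nhds]
  intro i
  refine tendsto_const_nhds.congr' ?_
  filter_upwards [eventually_gt_atTop i] with k hk
  rw [Function.update_of_ne]
  have := hm k
  omega

lemma perf_pi {K : Type*} [TopologicalSpace K] [Nontrivial K] (x : ℕ → K) :
    ¬ IsOpen ({x} : Set (ℕ → K)) := by
  intro h
  have hv : ∀ k, ∃ v, v ≠ x k := fun k => exists_ne _
  choose v hv using hv
  obtain ⟨k, hk⟩ := ((tendsto_update x v id (fun k => le_rfl)).eventually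
    (h.mem_nhds rfl)).exists
  have := congrFun (mem_singleton_iff.1 hk) k
  simp at this
  exact hv k this

lemma exists_emb_pi {K : Type*} [TopologicalSpace K] [Nontrivial K] {X G : Set K} (hGX : G ⊆ X)
    (hG : Dense G) (W : Set (ℕ → K)) (hW : IsOpen W) (hne : W.Nonempty) :
    ∃ e : (ℕ → K) → (ℕ → K), Continuous e ∧
      Function.Injective e ∧ (∀ z, e z ∈ W) ∧ interior (range e) = ∅ ∧
      ∀ z, z ∈ {x : ℕ → K | ∀ n, x n ∈ X} ↔ e z ∈ {x : ℕ → K | ∀ n, x n ∈ X} := by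
  classical
  have hGd : Dense (univ.pi fun _ : ℕ => G) := dense_pi _ fun _ _ => hG
  obtain ⟨d, hdW, hdG⟩ := hGd.inter_open_nonempty W hW hne
  obtain ⟨I, u, hu, hIu⟩ := isOpen_pi_iff.1 hW d hdW
  let N := I.sup id + 1
  have hN : ∀ i ∈ I, i < N := fun i hi => Nat.lt_succ_of_le (Finset.le_sup (f := id) hi)
  let e : (ℕ → K) → (ℕ → K) := fun x i => if i % 2 = 0 ∧ 2 * N ≤ i then x (i / 2 - N) else d i
  have hval : ∀ x m, e x (2 * (N + m)) = x m := by
    intro x m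
    have h : (2 * (N + m)) % 2 = 0 ∧ 2 * N ≤ 2 * (N + m) := by omega
    have h' : 2 * (N + m) / 2 - N = m := by omega
    simp only [e, if_pos h, h']
  refine ⟨e, ?_, ?_, ?_, ?_, ?_⟩
  · refine continuous_pi fun i => ?_
    by_cases h : i % 2 = 0 ∧ 2 * N ≤ i
    · simp only [e, if_pos h]; exact continuous_apply _
    · simp only [e, if_neg h]; exact continuous_const
  · intro x y hxy
    funext m
    rw [← hval x m, ← hval y m, hxy]
  · intro z
    apply hIu
    intro i hi
    have h : ¬ (i % 2 = 0 ∧ 2 * N ≤ i) := by have := hN i hi; omega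
    simp only [e, if_neg h]
    exact (hu i hi).2
  · rw [eq_empty_iff_forall_notMem]
    intro y hy
    have hv : ∀ k, ∃ v, v ≠ d (2 * k + 1) := fun k => exists_ne _
    choose v hv using hv
    obtain ⟨k, hk⟩ := ((tendsto_update y v (fun k => 2 * k + 1) (fun k => by omega)).eventually
      (isOpen_interior.mem_nhds hy)).exists
    obtain ⟨x, hx⟩ := interior_subset hk
    have := congrFun hx (2 * k + 1)
    have h : ¬ ((2 * k + 1) % 2 = 0 ∧ 2 * N ≤ 2 * k + 1) := by omega
    simp only [e, if_neg h, Function.update_self] at this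
    exact hv k this.symm
  · intro z
    constructor
    · intro hz i
      by_cases h : i % 2 = 0 ∧ 2 * N ≤ i
      · simp only [e, if_pos h]; exact hz _
      · simp only [e, if_neg h]; exact hGX (hdG i (mem_univ i))
    · intro hz m
      have := hz (2 * (N + m))
      rwa [hval] at this

lemma exists_embedding_cantor {X : Type*} [TopologicalSpace X] [SecondCountableTopology X]
    [T0Space X] (hzd : ZeroDimensional X) : ∃ ι : X → (ℕ → Bool), IsEmbedding ι := by
  classical
  have hb : TopologicalSpace.IsTopologicalBasis {C : Set X | IsClopen C} :=
    TopologicalSpace.isTopologicalBasis_of_isOpen_of_nhds (fun C hC => hC.isOpen) fun x U hx hU => by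
      obtain ⟨C, h1, h2, h3⟩ := hzd x U hU hx
      exact ⟨C, h1, h2, h3⟩
  obtain ⟨B, hBs, hBc, hB⟩ := hb.exists_countable
  have hBc' : (insert univ B).Countable := hBc.insert _
  obtain ⟨C, hC⟩ := hBc'.exists_eq_range (insert_nonempty _ _)
  have hclo : ∀ n, IsClopen (C n) := by
    intro n
    have : C n ∈ insert univ B := hC ▸ mem_range_self n
    rcases this with h | h
    · rw [h]; exact isClopen_univ
    · exact hBs h
  let ι : X → (ℕ → Bool) := fun x n => decide (x ∈ C n)
  have hcont : Continuous ι := by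
    refine continuous_pi fun n => ?_
    refine (IsLocallyConstant.iff_continuous _).1 ?_
    rw [IsLocallyConstant.iff_eventually_eq]
    intro z
    by_cases hz : z ∈ C n
    · filter_upwards [(hclo n).isOpen.mem_nhds hz] with y hy
      simp [ι, hy, hz]
    · filter_upwards [(hclo n).compl.isOpen.mem_nhds hz] with y hy
      have : y ∉ C n := hy
      simp [ι, this, hz]
  have hind : IsInducing ι := by
    rw [isInducing_iff_nhds]
    intro x
    refine le_antisymm (hcont.tendsto x).le_comap ?_
    intro s hs
    obtain ⟨V, hV, hxV, hVs⟩ := hB.mem_nhds_iff.1 hs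
    obtain ⟨n, rfl⟩ : V ∈ range C := hC ▸ mem_insert_of_mem _ hV
    refine mem_comap.2 ⟨{y | y n = true}, ?_, ?_⟩
    · refine ((isOpen_discrete ({true} : Set Bool)).preimage
        (continuous_apply n : Continuous fun y : ℕ → Bool => y n)).mem_nhds ?_
      simp [ι, hxV]
    · intro y hy
      apply hVs
      simpa [ι] using hy
  exact ⟨ι, hind.isEmbedding⟩

theorem statement16 {X : Type*} [TopologicalSpace X] [TopologicalSpace.SeparableSpace X]
    [TopologicalSpace.MetrizableSpace X] (hzd : ZeroDimensional X) (h2 : Nontrivial X)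
    (hd : ∃ G : Set X, Dense G ∧ PolishSpace G) :
    ∃ S : Set (ℕ → Bool), Nonempty ((ℕ → X) ≃ₜ S) ∧ HHomEmbedded S := by
  obtain ⟨G, hGd, hGP⟩ := hd
  haveI : SecondCountableTopology X := by
    letI := TopologicalSpace.metrizableSpaceMetric X
    exact UniformSpace.secondCountable_of_separable X
  obtain ⟨ι, hι⟩ := exists_embedding_cantor hzd
  let K := ↥(closure (range ι))
  haveI : CompactSpace K := isCompact_iff_compactSpace.1 isClosed_closure.isCompact
  let i : X → K := fun x => ⟨ι x, subset_closure (mem_range_self x)⟩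
  have hi : IsEmbedding i := hι.codRestrict _ _
  have hid : DenseRange i := by
    have := denseRange_inclusion_iff (s := range ι) (t := closure (range ι)) subset_closure |>.2
      Subset.rfl
    have h3 : range i = range (inclusion (subset_closure (s := range ι))) := by
      ext y; constructor
      · rintro ⟨x, rfl⟩; exact ⟨⟨ι x, x, rfl⟩, rfl⟩
      · rintro ⟨⟨_, x, rfl⟩, rfl⟩; exact ⟨x, rfl⟩
    rw [DenseRange, h3]; exact this
  haveI : Nontrivial K := hi.injective.nontrivial
  let j : G → K := i ∘ Subtype.val
  have hj : IsEmbedding j := hi.comp IsEmbedding.subtypeVal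
  have hjd : DenseRange j := hid.comp hGd.denseRange_val hi.continuous
  obtain ⟨O, hO, hOr⟩ := gdelta_of_polish j hj hjd
  let P : Set (ℕ → K) := {x | ∀ n, x n ∈ range i}
  let F : ℕ → Set (ℕ → K) := fun n => ⋃ a ∈ Iic n, ⋃ b ∈ Iic n, {x | x a ∉ O b}
  have hFc : ∀ n, IsClosed (F n) := fun n =>
    (finite_Iic n).isClosed_biUnion fun a _ => (finite_Iic n).isClosed_biUnion fun b _ =>
      ((hO b).preimage (continuous_apply a)).isClosed_compl
  have hmemF : ∀ n x, x ∈ F n ↔ ∃ a ≤ n, ∃ b ≤ n, x a ∉ O b := by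
    intro n x; simp [F]
  have hFm : Monotone F := by
    intro n m hnm x hx
    rw [hmemF] at *
    obtain ⟨a, ha, b, hb, h⟩ := hx
    exact ⟨a, ha.trans hnm, b, hb.trans hnm, h⟩
  have hFi : ∀ n, interior (F n) = ∅ := by
    intro n
    have hGd : Dense (univ.pi fun _ : ℕ => range j) := dense_pi _ fun _ _ => hjd
    by_contra hne
    obtain ⟨x, hx, hxG⟩ := hGd.inter_open_nonempty _ isOpen_interior
      (nonempty_iff_ne_empty.2 hne)
    obtain ⟨a, -, b, -, h⟩ := (hmemF n x).1 (interior_subset hx)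
    have h4 := hxG a (mem_univ a)
    rw [hOr] at h4
    exact h (mem_iInter.1 h4 b)
  have hP : Pᶜ ⊆ ⋃ n, F n := by
    intro x hx
    simp only [P, mem_compl_iff, mem_ofPred_eq, not_forall] at hx
    obtain ⟨a, ha⟩ := hx
    have h4 : x a ∉ range j := fun ⟨g, hg⟩ => ha ⟨g, hg⟩
    rw [hOr, mem_iInter, not_forall] at h4
    obtain ⟨b, hb⟩ := h4
    exact mem_iUnion.2 ⟨max a b, (hmemF _ _).2 ⟨a, le_max_left _ _, b, le_max_right _ _, hb⟩⟩
  have hjX : range j ⊆ range i := by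
    rintro _ ⟨g, rfl⟩; exact ⟨g, rfl⟩
  haveI : TopologicalSpace.MetrizableSpace (ℕ → K) :=
    TopologicalSpace.metrizableSpace_of_t3_secondCountable _
  haveI : TopologicalSpace.MetrizableSpace (ℕ → Bool) :=
    TopologicalSpace.metrizableSpace_of_t3_secondCountable _
  obtain ⟨T⟩ := cantor_homeo (Z := ℕ → K) (Z' := ℕ → Bool) perf_pi perf_pi
  have hpi : IsEmbedding (T ∘ Pi.map (fun _ : ℕ => i)) :=
    T.isEmbedding.comp (IsEmbedding.piMap fun _ => hi)
  have hmemS : ∀ z : ℕ → K, T z ∈ range (T ∘ Pi.map (fun _ : ℕ => i)) ↔ z ∈ P := by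
    intro z
    constructor
    · rintro ⟨x, hx⟩ n
      have := T.injective hx
      exact ⟨x n, congrFun this n⟩
    · intro hz
      choose x hx using hz
      exact ⟨x, congrArg T (funext hx)⟩
  refine ⟨range (T ∘ Pi.map (fun _ : ℕ => i)), ⟨hpi.toHomeomorph⟩,
    {U | IsClopen U ∧ U.Nonempty}, fun U hU => hU, ?_, ?_⟩
  · intro V hV ⟨x, hx⟩
    obtain ⟨U, h1, h2, h3⟩ := compact_exists_isClopen_in_isOpen hV hx
    exact ⟨U, ⟨h1, x, h2⟩, h3⟩
  · rintro U ⟨hU, hne⟩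
    haveI : CompactSpace U := isCompact_iff_compactSpace.1 hU.isClosed.isCompact
    haveI : Nonempty U := hne.to_subtype
    obtain ⟨ψ, hψ⟩ := clopen_homeo (Z := ℕ → K) (Z' := U) perf_pi hFc hFi hFm hP
      (fun W hW hne => exists_emb_pi hjX hjd W hW.isOpen hne)
      (T.symm ∘ Subtype.val)
      (T.symm.isClosedEmbedding.comp hU.isClosed.isClosedEmbedding_subtypeVal)
      (T.symm.isOpenMap.comp hU.isOpen.isOpenMap_subtype_val)
    refine ⟨T.symm.trans ψ, ?_⟩
    have key : ∀ z, T z ∈ range (T ∘ Pi.map (fun _ : ℕ => i)) ↔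
        (ψ z : ℕ → Bool) ∈ range (T ∘ Pi.map (fun _ : ℕ => i)) := by
      intro z
      rw [hmemS, hψ z, ← hmemS]
      simp
    ext y
    constructor
    · rintro ⟨_, ⟨s, hs, rfl⟩, rfl⟩
      refine ⟨?_, Subtype.coe_prop _⟩
      have := key (T.symm s)
      rw [T.apply_symm_apply] at this
      exact this.1 hs
    · rintro ⟨hy, hyU⟩
      refine ⟨⟨y, hyU⟩, ⟨T (ψ.symm ⟨y, hyU⟩), ?_, ?_⟩, rfl⟩
      · rw [key]; simpa using hy
      · simp
end

section
/- Let X be a zero-dimensional countably controlled separable metrizable space. Then X^ω is countable dense homogeneous. -/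
/-- A space `X` is countably controlled if every countable subset of `X` is
contained in a Polish subspace of `X`. -/
def CountablyControlled (X : Type*) [TopologicalSpace X] : Prop :=
  ∀ D : Set X, D.Countable → ∃ G : Set X, D ⊆ G ∧ PolishSpace G
/-- A space is countable dense homogeneous (CDH) if for every pair of countable
dense subsets `A`, `B` there is a homeomorphism of the space onto itself
mapping `A` onto `B`. -/
def IsCDH (X : Type*) [TopologicalSpace X] : Prop :=
  ∀ A B : Set X, A.Countable → Dense A → B.Countable → Dense B →
    ∃ h : X ≃ₜ X, h '' A = B

namespace CDHProof

open Set

structure St (X : Type*) [TopologicalSpace X] where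
  P : ℕ → Set X
  Q : ℕ → Set X
  M : ℕ → ℕ → Prop
  cP : ∀ i, IsClopen (P i)
  cQ : ∀ i, IsClopen (Q i)
  neP : ∀ i, (P i).Nonempty
  neQ : ∀ i, (Q i).Nonempty
  eqM : ∀ i j, M i j → P i = Q j
  injL : ∀ i j j', M i j → M i j' → j = j'
  injR : ∀ i i' j, M i j → M i' j → i = i'
  fresh : ∃ N, ∀ i, N ≤ i → P i = univ ∧ Q i = univ ∧ ∀ j, ¬ M i j ∧ ¬ M j i

variable {X : Type*} [TopologicalSpace X]

namespace St

def PP (t : St X) : Set (ℕ → X) := {z | ∀ i, z i ∈ t.P i}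
def QQ (t : St X) : Set (ℕ → X) := {z | ∀ i, z i ∈ t.Q i}

def swap (t : St X) : St X where
  P := t.Q
  Q := t.P
  M := fun i j => t.M j i
  cP := t.cQ
  cQ := t.cP
  neP := t.neQ
  neQ := t.neP
  eqM := fun i j h => (t.eqM j i h).symm
  injL := fun i j j' h h' => t.injR j j' i h h'
  injR := fun i i' j h h' => t.injL j i i' h h'
  fresh := by
    obtain ⟨N, hN⟩ := t.fresh
    exact ⟨N, fun i hi => ⟨(hN i hi).2.1, (hN i hi).1, fun j => ((hN i hi).2.2 j).symm⟩⟩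

@[simp] theorem swap_swap (t : St X) : t.swap.swap = t := rfl
@[simp] theorem swap_PP (t : St X) : t.swap.PP = t.QQ := rfl
@[simp] theorem swap_QQ (t : St X) : t.swap.QQ = t.PP := rfl

/-- replace coordinate `i` on the left by `S`, coordinate `j` on the right by `R`;
the pair `(i, j)` is matched iff `b`. -/
def upd (t : St X) (i j : ℕ) (S R : Set X) (b : Prop) (cS : IsClopen S) (cR : IsClopen R)
    (nS : S.Nonempty) (nR : R.Nonempty) (hb : b → S = R) : St X where
  P := Function.update t.P i S
  Q := Function.update t.Q j R
  M := fun i' j' => (i' = i ∧ j' = j ∧ b) ∨ (i' ≠ i ∧ j' ≠ j ∧ t.M i' j')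
  cP := fun k => by
    rcases eq_or_ne k i with rfl | h
    · simpa using cS
    · simpa [h] using t.cP k
  cQ := fun k => by
    rcases eq_or_ne k j with rfl | h
    · simpa using cR
    · simpa [h] using t.cQ k
  neP := fun k => by
    rcases eq_or_ne k i with rfl | h
    · simpa using nS
    · simpa [h] using t.neP k
  neQ := fun k => by
    rcases eq_or_ne k j with rfl | h
    · simpa using nR
    · simpa [h] using t.neQ k
  eqM := by
    rintro i' j' (⟨rfl, rfl, h⟩ | ⟨h1, h2, h⟩)
    · simpa using hb h
    · simpa [h1, h2] using t.eqM _ _ h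
  injL := by
    rintro i' j' j'' (⟨rfl, rfl, h⟩ | ⟨h1, h2, h⟩) (⟨h1', rfl, h'⟩ | ⟨h1', h2', h'⟩)
    · rfl
    · exact absurd rfl h1'
    · exact absurd h1' h1
    · exact t.injL _ _ _ h h'
  injR := by
    rintro i' j' j'' (⟨rfl, rfl, h⟩ | ⟨h1, h2, h⟩) (⟨h1', h2', h'⟩ | ⟨h1', h2', h'⟩)
    · exact h1'.symm
    · exact absurd rfl h2'
    · exact absurd h2' h2
    · exact t.injR _ _ _ h h'
  fresh := by
    obtain ⟨N, hN⟩ := t.fresh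
    refine ⟨max N (max (i+1) (j+1)), fun k hk => ?_⟩
    have h0 : N ≤ k := by omega
    have h1 : k ≠ i := by omega
    have h2 : k ≠ j := by omega
    obtain ⟨a, b, c⟩ := hN k h0
    refine ⟨by simpa [h1] using a, by simpa [h2] using b, fun l => ?_⟩
    have := c l
    simp only [h1, h2, this.1, this.2]
    simp

def Le (good : Set X → Prop) (t' t : St X) : Prop :=
  (∀ i, t'.P i ⊆ t.P i) ∧ (∀ i, t'.Q i ⊆ t.Q i) ∧
    ∀ i j, t.M i j → t'.M i j ∨ (good (t'.P i) ∧ good (t'.Q j))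

def Ref (t : St X) (C : Set (St X)) : Prop :=
  (∀ z ∈ t.PP, ∃! t', t' ∈ C ∧ z ∈ t'.PP) ∧ (∀ z ∈ t.QQ, ∃! t', t' ∈ C ∧ z ∈ t'.QQ)

variable {good : Set X → Prop}

theorem Le.refl (t : St X) : Le good t t := ⟨fun _ => Subset.rfl, fun _ => Subset.rfl, fun _ _ h => Or.inl h⟩

theorem Le.trans (hm : ∀ S T, T ⊆ S → good S → good T) {t t' t'' : St X} (h : Le good t'' t') (h' : Le good t' t) :
    Le good t'' t := by
  refine ⟨fun i => (h.1 i).trans (h'.1 i), fun i => (h.2.1 i).trans (h'.2.1 i), fun i j hM => ?_⟩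
  rcases h'.2.2 i j hM with h1 | ⟨h1, h2⟩
  · exact h.2.2 i j h1
  · exact Or.inr ⟨hm _ _ (h.1 i) h1, hm _ _ (h.2.1 j) h2⟩

theorem Le.swap {t t' : St X} (h : Le good t' t) : Le good t'.swap t.swap :=
  ⟨h.2.1, h.1, fun i j hM => (h.2.2 j i hM).imp id And.symm⟩

theorem Le.PP {t t' : St X} (h : Le good t' t) : t'.PP ⊆ t.PP := fun _ hz i => h.1 i (hz i)
theorem Le.QQ {t t' : St X} (h : Le good t' t) : t'.QQ ⊆ t.QQ := fun _ hz i => h.2.1 i (hz i)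

theorem Ref.swap {t : St X} {C : Set (St X)} (h : Ref t C) : Ref t.swap (St.swap ⁻¹' C) := by
  refine ⟨fun z hz => ?_, fun z hz => ?_⟩
  · obtain ⟨t', ⟨h1, h2⟩, h3⟩ := h.2 z hz
    exact ⟨t'.swap, ⟨h1, h2⟩, fun s hs => congrArg St.swap (h3 s.swap hs)⟩
  · obtain ⟨t', ⟨h1, h2⟩, h3⟩ := h.1 z hz
    exact ⟨t'.swap, ⟨h1, h2⟩, fun s hs => congrArg St.swap (h3 s.swap hs)⟩

theorem Ref.single (t : St X) : Ref t {t} :=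
  ⟨fun _ hz => ⟨t, ⟨rfl, hz⟩, fun _ hs => hs.1⟩, fun _ hz => ⟨t, ⟨rfl, hz⟩, fun _ hs => hs.1⟩⟩

theorem Ref.bind {t : St X} {C : Set (St X)} (h : Ref t C) (D : St X → Set (St X))
    (hD : ∀ t' ∈ C, Ref t' (D t'))
    (hP : ∀ t' ∈ C, ∀ s ∈ D t', s.PP ⊆ t'.PP) (hQ : ∀ t' ∈ C, ∀ s ∈ D t', s.QQ ⊆ t'.QQ) :
    Ref t (⋃ t' ∈ C, D t') := by
  refine ⟨fun z hz => ?_, fun z hz => ?_⟩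
  · obtain ⟨t', ⟨h1, h2⟩, h3⟩ := h.1 z hz
    obtain ⟨s, ⟨h4, h5⟩, h6⟩ := (hD t' h1).1 z h2
    refine ⟨s, ⟨mem_biUnion h1 h4, h5⟩, ?_⟩
    rintro s' ⟨hs', hz'⟩
    obtain ⟨t'', ht'', hs''⟩ := mem_iUnion₂.1 hs'
    have : t'' = t' := h3 t'' ⟨ht'', hP _ ht'' _ hs'' hz'⟩
    subst this
    exact h6 s' ⟨hs'', hz'⟩
  · obtain ⟨t', ⟨h1, h2⟩, h3⟩ := h.2 z hz
    obtain ⟨s, ⟨h4, h5⟩, h6⟩ := (hD t' h1).2 z h2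
    refine ⟨s, ⟨mem_biUnion h1 h4, h5⟩, ?_⟩
    rintro s' ⟨hs', hz'⟩
    obtain ⟨t'', ht'', hs''⟩ := mem_iUnion₂.1 hs'
    have : t'' = t' := h3 t'' ⟨ht'', hQ _ ht'' _ hs'' hz'⟩
    subst this
    exact h6 s' ⟨hs'', hz'⟩

theorem mem_update {P : ℕ → Set X} {i : ℕ} {S : Set X} {z : ℕ → X} (hz : ∀ k, z k ∈ P k) (h : z i ∈ S) :
    ∀ k, z k ∈ Function.update P i S k := by
  intro k
  rcases eq_or_ne k i with rfl | h'
  · simpa using h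
  · simpa [h'] using hz k

/-- Splitting one coordinate on each side into two pieces. -/
theorem split (t : St X) (i j : ℕ) (hL : ∀ j', t.M i j' → j' = j) (hR : ∀ i', t.M i' j → i' = i)
    (S R : Set X) (cS : IsClopen S) (cR : IsClopen R) (b1 b2 : Prop)
    (n1 : (t.P i ∩ S).Nonempty) (n2 : (t.P i \ S).Nonempty)
    (n3 : (t.Q j ∩ R).Nonempty) (n4 : (t.Q j \ R).Nonempty)
    (hb1 : b1 → t.P i ∩ S = t.Q j ∩ R) (hb2 : b2 → t.P i \ S = t.Q j \ R)
    (hg : t.M i j → (b1 ∨ (good (t.P i ∩ S) ∧ good (t.Q j ∩ R))) ∧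
      (b2 ∨ (good (t.P i \ S) ∧ good (t.Q j \ R)))) :
    ∃ t1 t2 : St X, Ref t {t1, t2} ∧ Le good t1 t ∧ Le good t2 t ∧
      t1.P = Function.update t.P i (t.P i ∩ S) ∧ t1.Q = Function.update t.Q j (t.Q j ∩ R) ∧
      t2.P = Function.update t.P i (t.P i \ S) ∧ t2.Q = Function.update t.Q j (t.Q j \ R) ∧
      (b1 → t1.M i j) ∧ (b2 → t2.M i j) := by
  have key : ∀ (S R : Set X) (b : Prop) (cS : IsClopen S) (cR : IsClopen R)
    (nS : S.Nonempty) (nR : R.Nonempty) (hb : b → S = R), S ⊆ t.P i → R ⊆ t.Q j →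
    (t.M i j → b ∨ good S ∧ good R) → Le good (t.upd i j S R b cS cR nS nR hb) t := by
    intro S R b cS cR nS nR hb hS hR' hgd
    refine ⟨fun k => ?_, fun k => ?_, fun k l hM => ?_⟩
    · rcases eq_or_ne k i with rfl | h
      · simpa [upd] using hS
      · simp [upd, h]
    · rcases eq_or_ne k j with rfl | h
      · simpa [upd] using hR'
      · simp [upd, h]
    · by_cases h1 : k = i
      · subst h1
        have h2 := hL l hM
        subst h2
        rcases hgd hM with h | h
        · left; left; exact ⟨rfl, rfl, h⟩
        · right; simpa [upd] using h
      · by_cases h2 : l = j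
        · subst h2
          exact absurd (hR k hM) h1
        · left; right; exact ⟨h1, h2, hM⟩
  refine ⟨t.upd i j _ _ b1 ((t.cP i).inter cS) ((t.cQ j).inter cR) n1 n3 hb1,
    t.upd i j _ _ b2 ((t.cP i).diff cS) ((t.cQ j).diff cR) n2 n4 hb2, ⟨?_, ?_⟩,
    key _ _ _ _ _ _ _ _ inter_subset_left inter_subset_left (fun h => (hg h).1),
    key _ _ _ _ _ _ _ _ sdiff_subset sdiff_subset (fun h => (hg h).2),
    rfl, rfl, rfl, rfl, fun h => Or.inl ⟨rfl, rfl, h⟩, fun h => Or.inl ⟨rfl, rfl, h⟩⟩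
  · intro z hz
    by_cases h : z i ∈ S
    · refine ⟨_, ⟨Or.inl rfl, mem_update hz ⟨hz i, h⟩⟩, ?_⟩
      rintro s ⟨rfl | rfl, hs⟩
      · rfl
      · have := hs i
        simp [upd] at this
        exact absurd h this.2
    · refine ⟨_, ⟨Or.inr rfl, mem_update hz ⟨hz i, h⟩⟩, ?_⟩
      rintro s ⟨rfl | rfl, hs⟩
      · have := hs i
        simp [upd] at this
        exact absurd this.2 h
      · rfl
  · intro z hz
    by_cases h : z j ∈ R
    · refine ⟨_, ⟨Or.inl rfl, mem_update hz ⟨hz j, h⟩⟩, ?_⟩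
      rintro s ⟨rfl | rfl, hs⟩
      · rfl
      · have := hs j
        simp [upd] at this
        exact absurd h this.2
    · refine ⟨_, ⟨Or.inr rfl, mem_update hz ⟨hz j, h⟩⟩, ?_⟩
      rintro s ⟨rfl | rfl, hs⟩
      · have := hs j
        simp [upd] at this
        exact absurd this.2 h
      · rfl

theorem exists_fresh (t : St X) : ∃ j, t.P j = univ ∧ t.Q j = univ ∧ ∀ k, ¬ t.M j k ∧ ¬ t.M k j := by
  obtain ⟨N, hN⟩ := t.fresh
  exact ⟨N, hN N le_rfl⟩

end St

namespace St

structure GoodHyp (G : Set X) (good : Set X → Prop) : Prop where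
  mono : ∀ S T, T ⊆ S → good S → good T
  ex : ∀ x ∈ G, ∃ W, IsClopen W ∧ x ∈ W ∧ good W
  dense : ∀ S : Set X, IsClopen S → S.Nonempty → ∃ x ∈ G, x ∈ S
  sep : ∀ x y : X, x ≠ y → ∃ W, IsClopen W ∧ x ∈ W ∧ y ∉ W

variable {G : Set X} {good : Set X → Prop}

def CanRef (good : Set X → Prop) (t : St X) (φ : St X → Prop) : Prop :=
  ∃ C, Ref t C ∧ ∀ t' ∈ C, Le good t' t ∧ φ t'

def CanTrack (good : Set X → Prop) (t : St X) (a b : ℕ → X) (χ : St X → Prop) : Prop :=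
  ∃ C, Ref t C ∧ (∀ t' ∈ C, Le good t' t) ∧ ∃ t' ∈ C, a ∈ t'.PP ∧ b ∈ t'.QQ ∧ χ t'

theorem CanRef.pure {t : St X} {φ : St X → Prop} (h : φ t) : CanRef good t φ :=
  ⟨{t}, Ref.single t, by rintro _ rfl; exact ⟨Le.refl _, h⟩⟩

theorem CanRef.bind (hG : GoodHyp G good) {t : St X} {φ ψ : St X → Prop} (h : CanRef good t φ)
    (h' : ∀ t', Le good t' t → φ t' → CanRef good t' ψ) : CanRef good t ψ := by
  obtain ⟨C, hC, hC'⟩ := h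
  have : ∀ t', ∃ D, t' ∈ C → Ref t' D ∧ ∀ s ∈ D, Le good s t' ∧ ψ s := by
    intro t'
    by_cases h : t' ∈ C
    · obtain ⟨D, hD⟩ := h' t' (hC' t' h).1 (hC' t' h).2
      exact ⟨D, fun _ => hD⟩
    · exact ⟨∅, fun h1 => absurd h1 h⟩
  choose D hD using this
  refine ⟨⋃ t' ∈ C, D t', hC.bind D (fun t' ht' => (hD t' ht').1)
    (fun t' ht' s hs => ((hD t' ht').2 s hs).1.PP) (fun t' ht' s hs => ((hD t' ht').2 s hs).1.QQ), ?_⟩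
  intro s hs
  obtain ⟨t', ht', hs'⟩ := mem_iUnion₂.1 hs
  exact ⟨((hD t' ht').2 s hs').1.trans hG.mono (hC' t' ht').1, ((hD t' ht').2 s hs').2⟩

theorem CanRef.swap {t : St X} {φ : St X → Prop} (h : CanRef good t.swap φ) :
    CanRef good t (fun s => φ s.swap) := by
  obtain ⟨C, hC, hC'⟩ := h
  exact ⟨_, hC.swap, fun s hs => ⟨(hC' _ hs).1.swap, (hC' _ hs).2⟩⟩

theorem CanRef.all (hG : GoodHyp G good) {φ : ℕ → St X → Prop}
    (hs : ∀ k t t', Le good t' t → φ k t → φ k t') (h : ∀ k t, CanRef good t (φ k)) (n : ℕ) :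
    ∀ t, CanRef good t (fun t => ∀ k < n, φ k t) := by
  induction n with
  | zero => exact fun t => CanRef.pure (by simp)
  | succ n ih =>
    intro t
    refine (ih t).bind hG fun t' _ h1 => ?_
    obtain ⟨C, hC, hC'⟩ := h n t'
    refine ⟨C, hC, fun s hs' => ⟨(hC' s hs').1, fun k hk => ?_⟩⟩
    rcases Nat.lt_succ_iff_lt_or_eq.1 hk with h2 | rfl
    · exact hs _ _ _ (hC' s hs').1 (h1 k h2)
    · exact (hC' s hs').2

theorem ref_A (hG : GoodHyp G good) (t : St X) (i : ℕ) :
    CanRef good t (fun t => good (t.P i) ∨ ∃ j, t.M i j) := by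
  by_cases hM : ∃ j, t.M i j
  · exact CanRef.pure (Or.inr hM)
  obtain ⟨x, hxG, hx⟩ := hG.dense _ (t.cP i) (t.neP i)
  obtain ⟨W, cW, hxW, gW⟩ := hG.ex x hxG
  by_cases hne : (t.P i \ W).Nonempty
  · obtain ⟨j, hj1, hj2, hj3⟩ := t.exists_fresh
    obtain ⟨t1, t2, hR, hl1, hl2, e1, e2, e3, e4, m1, m2⟩ := t.split (good := good) i j
      (fun j' h => absurd ⟨j', h⟩ hM) (fun i' h => absurd h (hj3 i').2)
      (Wᶜ) (t.P i \ W) cW.compl ((t.cP i).diff cW) True False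
      (by simpa [sdiff_eq] using hne) ⟨x, hx, by simpa using hxW⟩
      (by simpa [hj2] using hne) ⟨x, by simp [hj2], fun h => h.2 hxW⟩
      (by intro _; simp [hj2, sdiff_eq]) (by simp) (fun h => absurd ⟨j, h⟩ hM)
    refine ⟨_, hR, ?_⟩
    rintro s (rfl | rfl)
    · exact ⟨hl1, Or.inr ⟨j, m1 trivial⟩⟩
    · refine ⟨hl2, Or.inl ?_⟩
      rw [e3]
      refine hG.mono W _ ?_ gW
      simp
  · refine CanRef.pure (Or.inl (hG.mono W _ ?_ gW))
    rw [not_nonempty_iff_eq_empty, sdiff_eq_empty] at hne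
    exact hne

def psi (good : Set X → Prop) (i : ℕ) (U : Set X) (t : St X) : Prop :=
  good (t.P i) ∨ ((∃ j, t.M i j) ∧ (t.P i ⊆ U ∨ t.P i ⊆ Uᶜ))

theorem psi_stable (hG : GoodHyp G good) (i : ℕ) (U : Set X) (t t' : St X) (h : Le good t' t)
    (hp : psi good i U t) : psi good i U t' := by
  rcases hp with hp | ⟨⟨j, hj⟩, hp⟩
  · exact Or.inl (hG.mono _ _ (h.1 i) hp)
  · rcases h.2.2 i j hj with h1 | h1
    · exact Or.inr ⟨⟨j, h1⟩, hp.imp (h.1 i).trans (h.1 i).trans⟩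
    · exact Or.inl h1.1

theorem ref_psi (hG : GoodHyp G good) (i : ℕ) (U : Set X) (hU : IsClopen U) (t : St X) :
    CanRef good t (psi good i U) := by
  refine (ref_A hG t i).bind hG fun t _ h => ?_
  rcases h with h | ⟨j, hj⟩
  · exact CanRef.pure (Or.inl h)
  by_cases h1 : (t.P i ∩ U).Nonempty
  swap
  · refine CanRef.pure (Or.inr ⟨⟨j, hj⟩, Or.inr ?_⟩)
    exact fun x hx hxU => h1 ⟨x, hx, hxU⟩
  by_cases h2 : (t.P i \ U).Nonempty
  swap
  · refine CanRef.pure (Or.inr ⟨⟨j, hj⟩, Or.inl ?_⟩)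
    exact fun x hx => by_contra fun hxU => h2 ⟨x, hx, hxU⟩
  have e := t.eqM i j hj
  obtain ⟨t1, t2, hR, hl1, hl2, e1, e2, e3, e4, m1, m2⟩ := t.split (good := good) i j
      (fun j' h => t.injL _ _ _ h hj) (fun i' h => t.injR _ _ _ h hj) U U hU hU True True
      h1 h2 (e ▸ h1) (e ▸ h2) (by simp [e]) (by simp [e]) (by simp)
  refine ⟨_, hR, ?_⟩
  rintro s (rfl | rfl)
  · refine ⟨hl1, Or.inr ⟨⟨j, m1 trivial⟩, Or.inl ?_⟩⟩
    rw [e1]; simp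
  · refine ⟨hl2, Or.inr ⟨⟨j, m2 trivial⟩, Or.inr ?_⟩⟩
    rw [e3]; intro x hx; simp at hx; exact hx.2

def Psi (good : Set X → Prop) (U : ℕ → Set X) (n : ℕ) (t : St X) : Prop :=
  ∀ i < n, ∀ k < n, psi good i (U k) t

theorem Psi_stable (hG : GoodHyp G good) (U : ℕ → Set X) (n : ℕ) (t t' : St X) (h : Le good t' t)
    (hp : Psi good U n t) : Psi good U n t' :=
  fun i hi k hk => psi_stable hG i _ t t' h (hp i hi k hk)

theorem ref_Psi (hG : GoodHyp G good) (U : ℕ → Set X) (hU : ∀ k, IsClopen (U k)) (n : ℕ) (t : St X) :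
    CanRef good t (Psi good U n) := by
  refine CanRef.all hG (φ := fun i t => ∀ k < n, psi good i (U k) t) ?_ ?_ n t
  · exact fun i t t' h hp k hk => psi_stable hG _ _ _ _ h (hp k hk)
  · intro i t
    exact CanRef.all hG (φ := fun k t => psi good i (U k) t)
      (fun k t t' h hp => psi_stable hG _ _ _ _ h hp) (fun k t => ref_psi hG i _ (hU k) t) n t

theorem ref_both (hG : GoodHyp G good) (U : ℕ → Set X) (hU : ∀ k, IsClopen (U k)) (n : ℕ) (t : St X) :
    CanRef good t (fun t => Psi good U n t ∧ Psi good U n t.swap) := by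
  refine (ref_Psi hG U hU n t).bind hG fun t _ h => ?_
  obtain ⟨C, hC, hC'⟩ := (ref_Psi hG U hU n t.swap).swap
  exact ⟨C, hC, fun s hs => ⟨(hC' s hs).1, Psi_stable hG U n _ _ (hC' s hs).1 h, (hC' s hs).2⟩⟩

/-! tracked refinements -/

theorem CanTrack.pure {t : St X} {a b : ℕ → X} {φ : St X → Prop} (ha : a ∈ t.PP) (hb : b ∈ t.QQ)
    (h : φ t) : CanTrack good t a b φ :=
  ⟨{t}, Ref.single t, by rintro _ rfl; exact Le.refl _, t, rfl, ha, hb, h⟩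

theorem CanTrack.bind' (hG : GoodHyp G good) {t : St X} {a b : ℕ → X} {χ : St X → Prop}
    (h : CanTrack good t a b χ) {φ χ' : St X → Prop}
    (h' : ∀ t', Le good t' t → a ∈ t'.PP → b ∈ t'.QQ → χ t' →
      ∃ C, Ref t' C ∧ (∀ s ∈ C, Le good s t' ∧ φ s) ∧ ∃ s ∈ C, a ∈ s.PP ∧ b ∈ s.QQ ∧ χ' s)
    (h'' : ∀ t', CanRef good t' φ) :
    ∃ C, Ref t C ∧ (∀ s ∈ C, Le good s t ∧ φ s) ∧ ∃ s ∈ C, a ∈ s.PP ∧ b ∈ s.QQ ∧ χ' s := by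
  obtain ⟨C, hC, hC', t0, h0, ha, hb, hχ⟩ := h
  have : ∀ t', ∃ D, t' ∈ C → Ref t' D ∧ (∀ s ∈ D, Le good s t' ∧ φ s) ∧
      (t' = t0 → ∃ s ∈ D, a ∈ s.PP ∧ b ∈ s.QQ ∧ χ' s) := by
    intro t'
    by_cases h : t' = t0
    · subst h
      obtain ⟨D, h1, h2, h3⟩ := h' t' (hC' _ h0) ha hb hχ
      exact ⟨D, fun _ => ⟨h1, h2, fun _ => h3⟩⟩
    · obtain ⟨D, h1, h2⟩ := h'' t'
      exact ⟨D, fun _ => ⟨h1, h2, fun h3 => absurd h3 h⟩⟩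
  choose D hD using this
  refine ⟨⋃ t' ∈ C, D t', hC.bind D (fun t' ht' => (hD t' ht').1)
    (fun t' ht' s hs => ((hD t' ht').2.1 s hs).1.PP) (fun t' ht' s hs => ((hD t' ht').2.1 s hs).1.QQ), ?_, ?_⟩
  · intro s hs
    obtain ⟨t', ht', hs'⟩ := mem_iUnion₂.1 hs
    exact ⟨((hD t' ht').2.1 s hs').1.trans hG.mono (hC' t' ht'), ((hD t' ht').2.1 s hs').2⟩
  · obtain ⟨s, h1, h2⟩ := (hD t0 h0).2.2 rfl
    exact ⟨s, mem_biUnion h0 h1, h2⟩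

theorem CanTrack.bind (hG : GoodHyp G good) {t : St X} {a b : ℕ → X} {χ χ' : St X → Prop}
    (h : CanTrack good t a b χ)
    (h' : ∀ t', Le good t' t → a ∈ t'.PP → b ∈ t'.QQ → χ t' → CanTrack good t' a b χ') :
    CanTrack good t a b χ' := by
  obtain ⟨C, h1, h2, h3⟩ := h.bind' hG (φ := fun _ => True) (χ' := χ')
    (fun t' h1 h2 h3 h4 => by
      obtain ⟨C, h5, h6, h7⟩ := h' t' h1 h2 h3 h4
      exact ⟨C, h5, fun s hs => ⟨h6 s hs, trivial⟩, h7⟩) (fun t' => CanRef.pure trivial)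
  exact ⟨C, h1, fun s hs => (h2 s hs).1, h3⟩

theorem CanTrack.swap {t : St X} {a b : ℕ → X} {φ : St X → Prop} (h : CanTrack good t.swap b a φ) :
    CanTrack good t a b (fun s => φ s.swap) := by
  obtain ⟨C, hC, hC', s, hs, h1, h2, h3⟩ := h
  exact ⟨_, hC.swap, fun s hs => (hC' _ hs).swap, s.swap, hs, h2, h1, h3⟩

theorem CanTrack.all (hG : GoodHyp G good) {a b : ℕ → X} {φ : ℕ → St X → Prop}
    (hs : ∀ k t t', Le good t' t → φ k t → φ k t')
    (h : ∀ k t, a ∈ t.PP → b ∈ t.QQ → CanTrack good t a b (φ k)) (n : ℕ) :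
    ∀ t, a ∈ t.PP → b ∈ t.QQ → CanTrack good t a b (fun t => ∀ k < n, φ k t) := by
  induction n with
  | zero => exact fun t h1 h2 => CanTrack.pure h1 h2 (by simp)
  | succ n ih =>
    intro t ha hb
    refine (ih t ha hb).bind hG fun t' _ ha' hb' h1 => ?_
    obtain ⟨C, hC, hC', s, hsC, has, hbs, hφ⟩ := h n t' ha' hb'
    refine ⟨C, hC, hC', s, hsC, has, hbs, fun k hk => ?_⟩
    rcases Nat.lt_succ_iff_lt_or_eq.1 hk with h2 | rfl
    · exact hs _ _ _ (hC' s hsC) (h1 k h2)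
    · exact hφ

/-- shrink a matched coordinate (keeping it matched) to a clopen set containing both points -/
theorem track_shrink (t : St X) {a b : ℕ → X} (ha : a ∈ t.PP) (hb : b ∈ t.QQ)
    (i j : ℕ) (hj : t.M i j) (V : Set X) (cV : IsClopen V) (haV : a i ∈ V) (hbV : b j ∈ V) :
    CanTrack good t a b (fun s => s.M i j ∧ s.P i ⊆ V) := by
  by_cases h2 : (t.P i \ V).Nonempty
  swap
  · refine CanTrack.pure ha hb ⟨hj, ?_⟩
    exact fun x hx => by_contra fun hxU => h2 ⟨x, hx, hxU⟩
  have e := t.eqM i j hj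
  obtain ⟨t1, t2, hR, hl1, hl2, e1, e2, e3, e4, m1, m2⟩ := t.split (good := good) i j
      (fun j' h => t.injL _ _ _ h hj) (fun i' h => t.injR _ _ _ h hj) V V cV cV True True
      ⟨a i, ha i, haV⟩ h2 ⟨b j, hb j, hbV⟩ (e ▸ h2) (by simp [e]) (by simp [e]) (by simp)
  refine ⟨_, hR, ?_, t1, Or.inl rfl, ?_, ?_, m1 trivial, ?_⟩
  · rintro s (rfl | rfl)
    exacts [hl1, hl2]
  · unfold PP; rw [e1]; exact mem_update ha ⟨ha i, haV⟩
  · unfold QQ; rw [e2]; exact mem_update hb ⟨hb j, hbV⟩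
  · rw [e1]; simp

theorem track_good (hG : GoodHyp G good) {a b : ℕ → X} (haG : ∀ i, a i ∈ G) (hbG : ∀ i, b i ∈ G)
    (i : ℕ) (t : St X) (ha : a ∈ t.PP) (hb : b ∈ t.QQ) :
    CanTrack good t a b (fun s => good (s.P i)) := by
  obtain ⟨W, cW, haW, gW⟩ := hG.ex (a i) (haG i)
  by_cases hM : ∃ j, t.M i j
  · obtain ⟨j, hj⟩ := hM
    by_cases hab : a i = b j
    · obtain ⟨C, h1, h2, s, h3, h4, h5, h6⟩ :=
        track_shrink (good := good) t ha hb i j hj W cW haW (hab ▸ haW)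
      exact ⟨C, h1, h2, s, h3, h4, h5, hG.mono _ _ h6.2 gW⟩
    obtain ⟨W', cW', hbW', gW'⟩ := hG.ex (b j) (hbG j)
    obtain ⟨Y, cY, haY, hbY⟩ := hG.sep _ _ hab
    have cV1 : IsClopen (W ∩ Y) := cW.inter cY
    have cV2 : IsClopen (W' \ Y) := cW'.diff cY
    refine (track_shrink t ha hb i j hj (W ∩ Y ∪ W' \ Y) (cV1.union cV2)
      (Or.inl ⟨haW, haY⟩) (Or.inr ⟨hbW', hbY⟩)).bind hG fun t _ ha hb ht => ?_
    obtain ⟨hj, hsub⟩ := ht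
    have e := t.eqM i j hj
    have g1 : good (t.P i ∩ Y) := hG.mono W _ (by
      rintro x ⟨h1, h2⟩
      rcases hsub h1 with h | h
      · exact h.1
      · exact absurd h2 h.2) gW
    have g2 : good (t.P i \ Y) := hG.mono W' _ (by
      rintro x ⟨h1, h2⟩
      rcases hsub h1 with h | h
      · exact absurd h.2 h2
      · exact h.1) gW'
    obtain ⟨t1, t2, hR, hl1, hl2, e1, e2, e3, e4, m1, m2⟩ := t.split (good := good) i j
      (fun j' h => t.injL _ _ _ h hj) (fun i' h => t.injR _ _ _ h hj) Y Yᶜ cY cY.compl False False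
      ⟨a i, ha i, haY⟩ ⟨b j, e ▸ hb j, hbY⟩ ⟨b j, hb j, hbY⟩ ⟨a i, e ▸ ha i, by simpa using haY⟩
      (by simp) (by simp) (by
        intro _
        rw [← e]
        have : t.P i \ Yᶜ = t.P i ∩ Y := by simp
        rw [this, ← sdiff_eq]
        exact ⟨Or.inr ⟨g1, g2⟩, Or.inr ⟨g2, g1⟩⟩)
    refine ⟨_, hR, ?_, t1, Or.inl rfl, ?_, ?_, ?_⟩
    · rintro s (rfl | rfl)
      exacts [hl1, hl2]
    · unfold PP; rw [e1]; exact mem_update ha ⟨ha i, haY⟩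
    · unfold QQ; rw [e2]; exact mem_update hb ⟨hb j, hbY⟩
    · show good (t1.P i)
      rw [e1]; simpa using g1
  by_cases h2 : (t.P i \ W).Nonempty
  swap
  · refine CanTrack.pure ha hb (hG.mono W _ ?_ gW)
    exact fun x hx => by_contra fun hxU => h2 ⟨x, hx, hxU⟩
  obtain ⟨j, hj1, hj2, hj3⟩ := t.exists_fresh
  obtain ⟨R, cR, hbR, hRne⟩ : ∃ R : Set X, IsClopen R ∧ b j ∈ R ∧ Rᶜ.Nonempty := by
    by_cases h : b j ∈ W
    · exact ⟨W, cW, h, h2.mono (by intro x hx; exact hx.2)⟩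
    · exact ⟨Wᶜ, cW.compl, h, ⟨a i, by simpa using haW⟩⟩
  obtain ⟨t1, t2, hR, hl1, hl2, e1, e2, e3, e4, m1, m2⟩ := t.split (good := good) i j
      (fun j' h => absurd ⟨j', h⟩ hM) (fun i' h => absurd h (hj3 i').2)
      W R cW cR False False ⟨a i, ha i, haW⟩ h2 ⟨b j, hb j, hbR⟩
      (hRne.mono (by intro x hx; exact ⟨by simp [hj2], hx⟩)) (by simp) (by simp)
      (fun h => absurd ⟨j, h⟩ hM)
  refine ⟨_, hR, ?_, t1, Or.inl rfl, ?_, ?_, ?_⟩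
  · rintro s (rfl | rfl)
    exacts [hl1, hl2]
  · unfold PP; rw [e1]; exact mem_update ha ⟨ha i, haW⟩
  · unfold QQ; rw [e2]; exact mem_update hb ⟨hb j, hbR⟩
  · show good (t1.P i)
    rw [e1]; exact hG.mono W _ (by simp) gW

theorem step (hG : GoodHyp G good) (U : ℕ → Set X) (hU : ∀ k, IsClopen (U k)) (n : ℕ)
    {a b : ℕ → X} (haG : ∀ i, a i ∈ G) (hbG : ∀ i, b i ∈ G)
    (t : St X) (ha : a ∈ t.PP) (hb : b ∈ t.QQ) :
    ∃ C, Ref t C ∧ (∀ s ∈ C, Le good s t ∧ (Psi good U n s ∧ Psi good U n s.swap)) ∧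
      ∃ s ∈ C, a ∈ s.PP ∧ b ∈ s.QQ := by
  have st : ∀ (k : ℕ) (t t' : St X), Le good t' t → good (t.P k) → good (t'.P k) :=
    fun k t t' h => hG.mono _ _ (h.1 k)
  have h1 := CanTrack.all hG (φ := fun i s => good (s.P i)) st
    (fun i t ha hb => track_good hG haG hbG i t ha hb) n t ha hb
  have h2 : CanTrack good t a b (fun s => (∀ i < n, good (s.P i)) ∧ ∀ i < n, good (s.Q i)) := by
    refine h1.bind hG fun t' _ ha hb h3 => ?_
    obtain ⟨C, hC, hC', s, hsC, has, hbs, hφ⟩ := (CanTrack.all hG (φ := fun i s => good (s.P i)) st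
      (fun i t ha hb => track_good hG hbG haG i t ha hb) n t'.swap hb ha).swap
    exact ⟨C, hC, hC', s, hsC, has, hbs, fun i hi => st _ _ _ (hC' s hsC) (h3 i hi), hφ⟩
  obtain ⟨C, h3, h4, s, h5, h6, h7, _⟩ := h2.bind' hG
    (φ := fun s => Psi good U n s ∧ Psi good U n s.swap) (χ' := fun _ => True)
    (fun t' _ ha hb h => ⟨{t'}, Ref.single t', by
      rintro _ rfl
      exact ⟨Le.refl _, fun i hi k _ => Or.inl (h.1 i hi), fun i hi k _ => Or.inl (h.2 i hi)⟩,
      t', rfl, ha, hb, trivial⟩) (fun t' => ref_both hG U hU n t')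
  exact ⟨C, h3, h4, s, h5, h6, h7⟩

end St

namespace St

theorem isOpen_PP (t : St X) : IsOpen t.PP := by
  obtain ⟨N, hN⟩ := t.fresh
  have : t.PP = ⋂ i ∈ Finset.range N, (fun z : ℕ → X => z i) ⁻¹' (t.P i) := by
    ext z
    simp only [mem_iInter, Finset.mem_range, mem_preimage]
    refine ⟨fun h i _ => h i, fun h i => ?_⟩
    by_cases hi : i < N
    · exact h i hi
    · rw [(hN i (not_lt.1 hi)).1]; trivial
  rw [this]
  exact isOpen_biInter_finset fun i _ => (t.cP i).isOpen.preimage (continuous_apply i)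

theorem nonempty_PP (t : St X) : t.PP.Nonempty := by
  choose z hz using t.neP
  exact ⟨z, hz⟩

end St

open St Filter

noncomputable def idx (f : ℕ → ℕ → X) (S : Set (ℕ → X)) : ℕ := sInf {k | f k ∈ S}

theorem idx_mem {f : ℕ → ℕ → X} {S : Set (ℕ → X)} (h : ∃ k, f k ∈ S) : f (idx f S) ∈ S :=
  Nat.sInf_mem (s := {k | f k ∈ S}) h

theorem idx_le {f : ℕ → ℕ → X} {S : Set (ℕ → X)} {k : ℕ} (h : f k ∈ S) : idx f S ≤ k :=
  Nat.sInf_le (s := {k | f k ∈ S}) h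

structure Sys (good : ℕ → Set X → Prop) (U : ℕ → Set X) (f g : ℕ → ℕ → X) (L : ℕ → Set (St X)) : Prop where
  p1 : ∀ n z, ∃! t, t ∈ L n ∧ z ∈ t.PP
  p2 : ∀ n z, ∃! t, t ∈ L n ∧ z ∈ t.QQ
  le : ∀ n, ∀ t ∈ L (n + 1), ∃ t' ∈ L n, Le (good (n + 1)) t t'
  psi1 : ∀ n, ∀ t ∈ L n, Psi (good n) U n t
  psi2 : ∀ n, ∀ t ∈ L n, Psi (good n) U n t.swap
  dF : ∀ t : St X, ∃ k, f k ∈ t.PP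
  dG : ∀ t : St X, ∃ k, g k ∈ t.QQ
  tr : ∀ n, ∀ t ∈ L n, ∃ s ∈ L (n + 1), f (idx f t.PP) ∈ s.PP ∧ g (idx g t.QQ) ∈ s.QQ

variable {good : ℕ → Set X → Prop} {U : ℕ → Set X} {f g : ℕ → ℕ → X} {L : ℕ → Set (St X)}

theorem Sys.swap (h : Sys good U f g L) : Sys good U g f (fun n => St.swap ⁻¹' (L n)) where
  p1 := fun n z => by
    obtain ⟨t, ⟨h1, h2⟩, h3⟩ := h.p2 n z
    exact ⟨t.swap, ⟨h1, h2⟩, fun s hs => congrArg St.swap (h3 s.swap hs)⟩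
  p2 := fun n z => by
    obtain ⟨t, ⟨h1, h2⟩, h3⟩ := h.p1 n z
    exact ⟨t.swap, ⟨h1, h2⟩, fun s hs => congrArg St.swap (h3 s.swap hs)⟩
  le := fun n t ht => by
    obtain ⟨t', h1, h2⟩ := h.le n t.swap ht
    exact ⟨t'.swap, h1, h2.swap⟩
  psi1 := fun n t ht => h.psi2 n t.swap ht
  psi2 := fun n t ht => h.psi1 n t.swap ht
  dF := fun t => h.dG t.swap
  dG := fun t => h.dF t.swap
  tr := fun n t ht => by
    obtain ⟨s, h1, h2, h3⟩ := h.tr n t.swap ht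
    exact ⟨s.swap, h1, h3, h2⟩

def Rel (L : ℕ → Set (St X)) (z w : ℕ → X) : Prop := ∀ n, ∃ t ∈ L n, z ∈ t.PP ∧ w ∈ t.QQ

theorem Rel.swap {z w : ℕ → X} (h : Rel L z w) : Rel (fun n => St.swap ⁻¹' (L n)) w z := fun n => by
  obtain ⟨t, h1, h2, h3⟩ := h n
  exact ⟨t.swap, h1, h3, h2⟩

theorem Rel.of_swap {z w : ℕ → X} (h : Rel (fun n => St.swap ⁻¹' (L n)) w z) : Rel L z w := fun n => by
  obtain ⟨t, h1, h2, h3⟩ := h n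
  exact ⟨t.swap, h1, h3, h2⟩

structure Hyp (good : ℕ → Set X → Prop) (U : ℕ → Set X) : Prop where
  small : ∀ n S, good n S → ∀ k < n, S ⊆ U k ∨ S ⊆ (U k)ᶜ
  compl : ∀ S : ℕ → Set X, (∀ n, IsClopen (S n)) → (∀ n, (S n).Nonempty) → Antitone S →
    (∃ᶠ n in atTop, good n (S n)) → ∃ x, ∀ n, x ∈ S n
  basis : ∀ (x : X) (O : Set X), IsOpen O → x ∈ O → ∃ k, x ∈ U k ∧ U k ⊆ O

theorem Sys.chain (h : Sys good U f g L) (z : ℕ → X) : ∃ t : ℕ → St X,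
    (∀ n, t n ∈ L n ∧ z ∈ (t n).PP) ∧ (∀ n, Le (good (n + 1)) (t (n + 1)) (t n)) := by
  choose t ht ht' using fun n => h.p1 n z
  refine ⟨t, ht, fun n => ?_⟩
  obtain ⟨s, hs, hs'⟩ := h.le n _ (ht (n + 1)).1
  have := ht' n s ⟨hs, hs'.PP (ht (n + 1)).2⟩
  rwa [this] at hs'

theorem Sys.dec (h : Sys good U f g L) (hh : Hyp good U) {n i k : ℕ} (hi : i < n) (hk : k < n)
    {t : St X} (ht : t ∈ L n) : t.Q i ⊆ U k ∨ t.Q i ⊆ (U k)ᶜ := by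
  rcases h.psi2 n t ht i hi k hk with h1 | h1
  · exact hh.small n _ h1 k hk
  · exact h1.2

theorem Sys.exists_rel (h : Sys good U f g L) (hh : Hyp good U) (z : ℕ → X) : ∃ w, Rel L z w := by
  obtain ⟨t, ht, hl⟩ := h.chain z
  have key : ∀ j, ∃ x, ∀ n, x ∈ (t n).Q j := by
    intro j
    have anti : Antitone (fun n => (t n).Q j) := antitone_nat_of_succ_le fun n => (hl n).2.1 j
    by_cases hf : ∃ᶠ n in atTop, good n ((t n).Q j)
    · exact hh.compl _ (fun n => (t n).cQ j) (fun n => (t n).neQ j) anti hf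
    · rw [not_frequently] at hf
      obtain ⟨N, hN⟩ := eventually_atTop.1 hf
      set N' := max N (j + 1)
      have h1 := h.psi2 N' _ (ht N').1 j (by omega) j (by omega)
      rcases h1 with h1 | ⟨⟨i, hi⟩, -⟩
      · exact absurd h1 (hN N' (by omega))
      have hM : ∀ n, N' ≤ n → (t n).M i j := by
        intro n hn
        induction n, hn using Nat.le_induction with
        | base => exact hi
        | succ n hn ih =>
          rcases (hl n).2.2 i j ih with h2 | h2
          · exact h2
          · exact absurd h2.2 (hN (n + 1) (by omega))
      refine ⟨z i, fun n => ?_⟩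
      have h3 : z i ∈ (t (max n N')).Q j := by
        rw [← (t _).eqM i j (hM _ (le_max_right _ _))]
        exact (ht _).2 i
      exact anti (le_max_left n N') h3
  choose w hw using key
  exact ⟨w, fun n => ⟨t n, (ht n).1, (ht n).2, fun j => hw j n⟩⟩

theorem Sys.rel_unique [T1Space X] (h : Sys good U f g L) (hh : Hyp good U) {z w w' : ℕ → X}
    (h1 : Rel L z w) (h2 : Rel L z w') : w = w' := by
  funext j
  by_contra hne
  obtain ⟨k, hk1, hk2⟩ := hh.basis (w j) {w' j}ᶜ isOpen_compl_singleton hne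
  set n := max j k + 1
  obtain ⟨t, ht, hz, hw⟩ := h1 n
  obtain ⟨t', ht', hz', hw'⟩ := h2 n
  have e : t' = t := (h.p1 n z).unique ⟨ht', hz'⟩ ⟨ht, hz⟩
  subst e
  rcases h.dec hh (n := n) (i := j) (k := k) (by omega) (by omega) ht with h3 | h3
  · exact hk2 (h3 (hw' j)) rfl
  · exact h3 (hw j) hk1

theorem Sys.cont (h : Sys good U f g L) (hh : Hyp good U) (F : (ℕ → X) → (ℕ → X))
    (hF : ∀ z, Rel L z (F z)) : Continuous F := by
  refine continuous_pi fun j => continuous_iff_continuousAt.2 fun z => ?_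
  intro O hO
  obtain ⟨V, hVO, hV, hzV⟩ := mem_nhds_iff.1 hO
  obtain ⟨k, hk1, hk2⟩ := hh.basis _ V hV hzV
  set n := max j k + 1
  obtain ⟨t, ht, hz, hw⟩ := hF z n
  have h3 : t.Q j ⊆ U k := by
    rcases h.dec hh (n := n) (i := j) (k := k) (by omega) (by omega) ht with h3 | h3
    · exact h3
    · exact absurd hk1 (h3 (hw j))
  rw [mem_map]
  refine mem_of_superset (t.isOpen_PP.mem_nhds hz) fun z' hz' => ?_
  obtain ⟨t', ht', hz'', hw'⟩ := hF z' n
  have e : t' = t := (h.p1 n z').unique ⟨ht', hz''⟩ ⟨ht, hz'⟩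
  subst e
  exact hVO (hk2 (h3 (hw' j)))

theorem Sys.maps (h : Sys good U f g L) (k : ℕ) : ∃ m, Rel L (f k) (g m) := by
  obtain ⟨t, ht, hl⟩ := h.chain (f k)
  have antiP : Antitone (fun n => (t n).PP) := antitone_nat_of_succ_le fun n => (hl n).PP
  have antiQ : Antitone (fun n => (t n).QQ) := antitone_nat_of_succ_le fun n => (hl n).QQ
  have mono : Monotone (fun n => idx f (t n).PP) := monotone_nat_of_le_succ fun n =>
    idx_le ((hl n).PP (idx_mem (h.dF _)))
  have bdd : ∀ n, idx f (t n).PP ≤ k := fun n => idx_le (ht n).2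
  obtain ⟨N, hN⟩ : ∃ N, ∀ n, N ≤ n → idx f (t n).PP = idx f (t N).PP := by
    obtain ⟨N, hN⟩ : ∃ N, ∀ n, idx f (t n).PP ≤ idx f (t N).PP := by
      have hfin : (range fun n => idx f (t n).PP).Finite :=
        (finite_Iic k).subset (by rintro _ ⟨n, rfl⟩; exact bdd n)
      obtain ⟨_, ⟨N, rfl⟩, hN⟩ := exists_max_image _ id hfin ⟨_, 0, rfl⟩
      exact ⟨N, fun n => hN _ ⟨n, rfl⟩⟩
    exact ⟨N, fun n hn => le_antisymm (hN n) (mono hn)⟩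
  have stepm : ∀ n, N ≤ n → idx g (t (n + 1)).QQ = idx g (t n).QQ := by
    intro n hn
    obtain ⟨s, hs, h1, h2⟩ := h.tr n _ (ht n).1
    have h3 : f (idx f (t n).PP) ∈ (t (n + 1)).PP := by
      rw [hN n hn, ← hN (n + 1) (by omega)]
      exact idx_mem (h.dF _)
    have e : s = t (n + 1) := (h.p1 (n + 1) _).unique ⟨hs, h1⟩ ⟨(ht _).1, h3⟩
    rw [e] at h2
    exact le_antisymm (idx_le h2) (idx_le ((hl n).QQ (idx_mem (h.dG _))))
  have hm : ∀ n, N ≤ n → idx g (t n).QQ = idx g (t N).QQ := by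
    intro n hn
    induction n, hn using Nat.le_induction with
    | base => rfl
    | succ n hn ih => rw [stepm n hn, ih]
  refine ⟨idx g (t N).QQ, fun n => ⟨t n, (ht n).1, (ht n).2, ?_⟩⟩
  apply antiQ (le_max_left n N)
  rw [← hm (max n N) (le_max_right _ _)]
  exact idx_mem (h.dG _)

theorem Sys.homeo [T1Space X] (h : Sys good U f g L) (hh : Hyp good U) :
    ∃ F : (ℕ → X) ≃ₜ (ℕ → X), F '' range f = range g := by
  choose F hF using h.exists_rel hh
  choose F' hF' using h.swap.exists_rel hh
  refine ⟨⟨⟨F, F', fun z => ?_, fun w => ?_⟩, h.cont hh F hF, h.swap.cont hh F' hF'⟩, ?_⟩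
  · exact h.swap.rel_unique hh (hF' _) (hF z).swap
  · exact h.rel_unique hh (hF _) (hF' w).of_swap
  · apply Subset.antisymm
    · rintro _ ⟨_, ⟨k, rfl⟩, rfl⟩
      obtain ⟨m, hm⟩ := h.maps k
      exact ⟨m, h.rel_unique hh hm (hF _)⟩
    · rintro _ ⟨m, rfl⟩
      obtain ⟨k, hk⟩ := h.swap.maps m
      exact ⟨f k, ⟨k, rfl⟩, h.rel_unique hh (hF _) hk.of_swap⟩

/-! building the system -/

def top (X : Type*) [TopologicalSpace X] [Nonempty X] : St X where
  P := fun _ => univ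
  Q := fun _ => univ
  M := fun _ _ => False
  cP := fun _ => isClopen_univ
  cQ := fun _ => isClopen_univ
  neP := fun _ => univ_nonempty
  neQ := fun _ => univ_nonempty
  eqM := fun _ _ h => h.elim
  injL := fun _ _ _ h => h.elim
  injR := fun _ _ _ h => h.elim
  fresh := ⟨0, fun _ _ => ⟨rfl, rfl, fun _ => ⟨id, id⟩⟩⟩

def lev [Nonempty X] (C : ℕ → St X → Set (St X)) : ℕ → Set (St X)
  | 0 => {top X}
  | n + 1 => ⋃ t ∈ lev C n, C n t

theorem exists_sys [Nonempty X] {G : Set X} (hG : ∀ n, GoodHyp G (good n)) (hU : ∀ k, IsClopen (U k))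
    (hf : DenseRange f) (hg : DenseRange g) (hfG : ∀ k i, f k i ∈ G) (hgG : ∀ k i, g k i ∈ G) :
    ∃ L, Sys good U f g L := by
  have dF : ∀ t : St X, ∃ k, f k ∈ t.PP := fun t => hf.exists_mem_open t.isOpen_PP t.nonempty_PP
  have dG : ∀ t : St X, ∃ k, g k ∈ t.QQ := fun t =>
    hg.exists_mem_open t.swap.isOpen_PP t.swap.nonempty_PP
  choose C hC1 hC2 hC3 using fun (n : ℕ) (t : St X) => St.step (hG (n + 1)) U hU (n + 1)
    (hfG (idx f t.PP)) (hgG (idx g t.QQ)) t (idx_mem (dF t)) (idx_mem (dG t))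
  have hR : ∀ n, Ref (top X) (lev C n) := by
    intro n
    induction n with
    | zero => exact Ref.single _
    | succ n ih =>
      exact ih.bind (C n) (fun t _ => hC1 n t) (fun t _ s hs => (hC2 n t s hs).1.PP)
        (fun t _ s hs => (hC2 n t s hs).1.QQ)
  refine ⟨lev C, fun n z => (hR n).1 z fun _ => trivial, fun n z => (hR n).2 z fun _ => trivial,
    ?_, ?_, ?_, dF, dG, ?_⟩
  · intro n t ht
    obtain ⟨t', ht', hs'⟩ := mem_iUnion₂.1 ht
    exact ⟨t', ht', (hC2 n t' t hs').1⟩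
  · intro n t ht
    cases n with
    | zero => exact fun i hi => absurd hi (by omega)
    | succ n =>
      obtain ⟨t', ht', hs'⟩ := mem_iUnion₂.1 ht
      exact (hC2 n t' t hs').2.1
  · intro n t ht
    cases n with
    | zero => exact fun i hi => absurd hi (by omega)
    | succ n =>
      obtain ⟨t', ht', hs'⟩ := mem_iUnion₂.1 ht
      exact (hC2 n t' t hs').2.2
  · intro n t ht
    obtain ⟨s, h1, h2⟩ := hC3 n t
    exact ⟨s, mem_biUnion ht h1, h2⟩

theorem main {X : Type*} [TopologicalSpace X] [TopologicalSpace.SeparableSpace X]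
    [TopologicalSpace.MetrizableSpace X] [Nonempty X]
    (hzd : ∀ (x : X) (U : Set X), IsOpen U → x ∈ U → ∃ C : Set X, IsClopen C ∧ x ∈ C ∧ C ⊆ U)
    (f g : ℕ → ℕ → X) (hf : DenseRange f) (hg : DenseRange g)
    (G : Set X) (hGP : PolishSpace G) (hfG : ∀ k i, f k i ∈ G) (hgG : ∀ k i, g k i ∈ G) :
    ∃ F : (ℕ → X) ≃ₜ (ℕ → X), F '' range f = range g := by
  have hsc : SecondCountableTopology X := by
    letI := TopologicalSpace.metrizableSpaceMetric X
    exact UniformSpace.secondCountable_of_separable X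
  obtain ⟨U, hU, hb⟩ : ∃ U : ℕ → Set X, (∀ k, IsClopen (U k)) ∧
      ∀ (x : X) (O : Set X), IsOpen O → x ∈ O → ∃ k, x ∈ U k ∧ U k ⊆ O := by
    have hB : TopologicalSpace.IsTopologicalBasis {C : Set X | IsClopen C} :=
      TopologicalSpace.isTopologicalBasis_of_isOpen_of_nhds (fun C hC => hC.isOpen)
        (fun x O hx hO => by
          obtain ⟨C, h1, h2, h3⟩ := hzd x O hO hx
          exact ⟨C, h1, h2, h3⟩)
    obtain ⟨s, hs, hsc, hsB⟩ := hB.exists_countable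
    have hne : s.Nonempty := by
      obtain ⟨x⟩ := ‹Nonempty X›
      obtain ⟨V, hV, -⟩ := hsB.exists_subset_of_mem_open (mem_univ x) isOpen_univ
      exact ⟨V, hV⟩
    obtain ⟨U, rfl⟩ := hsc.exists_eq_range hne
    refine ⟨U, fun k => hs ⟨k, rfl⟩, fun x O hO hx => ?_⟩
    obtain ⟨_, ⟨k, rfl⟩, h1, h2⟩ := hsB.exists_subset_of_mem_open hx hO
    exact ⟨k, h1, h2⟩
  letI := TopologicalSpace.upgradeIsCompletelyMetrizable G
  set good : ℕ → Set X → Prop := fun n S => (∀ k < n, S ⊆ U k ∨ S ⊆ (U k)ᶜ) ∧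
    ∀ x y : G, (x : X) ∈ S → (y : X) ∈ S → dist x y ≤ 1 / ((n : ℝ) + 1) with hgood
  have hdense : ∀ S : Set X, IsClopen S → S.Nonempty → ∃ x ∈ G, x ∈ S := by
    rintro S hS ⟨x, hx⟩
    obtain ⟨k, hk⟩ := hf.exists_mem_open (hS.isOpen.preimage (continuous_apply (A := fun _ : ℕ => X) 0))
      ⟨fun _ => x, hx⟩
    exact ⟨f k 0, hfG k 0, hk⟩
  have hG : ∀ n, GoodHyp G (good n) := by
    intro n
    refine ⟨?_, ?_, hdense, ?_⟩
    · intro S T hTS hS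
      exact ⟨fun k hk => (hS.1 k hk).imp hTS.trans hTS.trans,
        fun x y hx hy => hS.2 x y (hTS hx) (hTS hy)⟩
    · intro x hx
      have hpos : (0 : ℝ) < 1 / ((n : ℝ) + 1) := by positivity
      obtain ⟨O, hO, hO'⟩ := isOpen_induced_iff.1
        (Metric.isOpen_ball (x := (⟨x, hx⟩ : G)) (ε := 1 / ((n : ℝ) + 1) / 2))
      have hxO : x ∈ O := by
        have : (⟨x, hx⟩ : G) ∈ Subtype.val ⁻¹' O := by
          rw [hO']; exact Metric.mem_ball_self (by positivity)
        exact this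
      obtain ⟨V, hV, hxV, hVd⟩ : ∃ V : Set X, IsOpen V ∧ x ∈ V ∧ ∀ k < n, V ⊆ U k ∨ V ⊆ (U k)ᶜ := by
        clear hpos hO' 
        induction n with
        | zero => exact ⟨univ, isOpen_univ, trivial, fun k hk => absurd hk (by omega)⟩
        | succ n ih =>
          obtain ⟨V, hV, hxV, hVd⟩ := ih
          have aux : ∀ W : Set X, IsOpen W → x ∈ W → (W ⊆ U n ∨ W ⊆ (U n)ᶜ) → ∃ V : Set X, IsOpen V ∧
              x ∈ V ∧ ∀ k < n + 1, V ⊆ U k ∨ V ⊆ (U k)ᶜ := by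
            intro W hW hxW hWU
            refine ⟨V ∩ W, hV.inter hW, ⟨hxV, hxW⟩, fun k hk => ?_⟩
            rcases Nat.lt_succ_iff_lt_or_eq.1 hk with h2 | rfl
            · exact (hVd k h2).imp inter_subset_left.trans inter_subset_left.trans
            · exact hWU.imp inter_subset_right.trans inter_subset_right.trans
          by_cases h : x ∈ U n
          · exact aux _ (hU n).isOpen h (Or.inl Subset.rfl)
          · exact aux _ (hU n).compl.isOpen h (Or.inr Subset.rfl)
      obtain ⟨W, cW, hxW, hW⟩ := hzd x (O ∩ V) (hO.inter hV) ⟨hxO, hxV⟩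
      refine ⟨W, cW, hxW, fun k hk => (hVd k hk).imp (hW.trans inter_subset_right).trans
        (hW.trans inter_subset_right).trans, fun y z hy hz => ?_⟩
      have hy' : y ∈ Metric.ball (⟨x, hx⟩ : G) (1 / ((n : ℝ) + 1) / 2) := hO' ▸ (hW hy).1
      have hz' : z ∈ Metric.ball (⟨x, hx⟩ : G) (1 / ((n : ℝ) + 1) / 2) := hO' ▸ (hW hz).1
      rw [Metric.mem_ball] at hy' hz'
      have := dist_triangle_right y z (⟨x, hx⟩ : G)
      linarith
    · intro x y hxy
      obtain ⟨W, h1, h2, h3⟩ := hzd x {y}ᶜ isOpen_compl_singleton hxy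
      exact ⟨W, h1, h2, fun h => h3 h rfl⟩
  have hh : Hyp good U := by
    refine ⟨fun n S h => h.1, ?_, hb⟩
    intro S hS hne hanti hfr
    choose x hxG hx using fun n => hdense (S n) (hS n) (hne n)
    let y : ℕ → G := fun n => ⟨x n, hxG n⟩
    have hc : CauchySeq y := by
      refine Metric.cauchySeq_iff'.2 fun ε hε => ?_
      obtain ⟨N, hN⟩ := exists_nat_one_div_lt hε
      obtain ⟨n, hn, hgn⟩ := frequently_atTop.1 hfr N
      refine ⟨n, fun m hm => ?_⟩
      refine (hgn.2 (y m) (y n) (hanti hm (hx m)) (hx n)).trans_lt (lt_of_le_of_lt ?_ hN)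
      exact one_div_le_one_div_of_le (by positivity) (by gcongr)
    obtain ⟨l, hl⟩ := cauchySeq_tendsto_of_complete hc
    have hl' : Tendsto x atTop (nhds (l : X)) := (continuous_subtype_val.tendsto l).comp hl
    exact ⟨l, fun n => (hS n).isClosed.mem_of_tendsto hl'
      (eventually_atTop.2 ⟨n, fun m hm => hanti hm (hx m)⟩)⟩
  obtain ⟨L, hL⟩ := exists_sys (U := U) hG hU hf hg hfG hgG
  exact hL.homeo hh

end CDHProof

/-- If `X` is a zero-dimensional countably controlled separable metrizable
space, then `X^ω` is countable dense homogeneous. -/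
theorem statement17 {X : Type*} [TopologicalSpace X] [TopologicalSpace.SeparableSpace X]
    [TopologicalSpace.MetrizableSpace X] (hzd : ZeroDimensional X)
    (hcc : CountablyControlled X) : IsCDH (ℕ → X) := by
  intro A B hA dA hB dB
  rcases isEmpty_or_nonempty X with hX | hX
  · refine ⟨Homeomorph.refl _, ?_⟩
    ext z
    exact (hX.false (z 0)).elim
  obtain ⟨f, rfl⟩ := hA.exists_eq_range dA.nonempty
  obtain ⟨g, rfl⟩ := hB.exists_eq_range dB.nonempty
  obtain ⟨G, hDG, hG⟩ := hcc
    (Set.range (fun p : ℕ × ℕ => f p.1 p.2) ∪ Set.range (fun p : ℕ × ℕ => g p.1 p.2))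
    ((Set.countable_range _).union (Set.countable_range _))
  exact CDHProof.main hzd f g dA dB G hG (fun k i => hDG (Or.inl ⟨(k, i), rfl⟩))
    (fun k i => hDG (Or.inr ⟨(k, i), rfl⟩))
end
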